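/- For every real c with 0 < c < 1/434 there exists a constant C = C(c) such that for every odd prime p and every A ⊆ F_p with 2 ≤ |A| ≤ p^{2846/4991}, one has D^×(A) ≤ C·|A|^{13/2−c}. Moreover, for every real c₁ with 0 < c₁ < 1/192 there exists C₁ = C₁(c₁) such that if 2 ≤ |A| ≤ p^{48/97} then D^×(A) ≤ C₁·|A|^{13/2−c₁}. -/

import Mathlib

open Finset

/-- `DtimesTwo p A` is the number of octuples `(a₁,…,a₄,a₁',…,a₄') ∈ A⁸`
with `(a₁−a₂)(a₃−a₄) = (a₁'−a₂')(a₃'−a₄')`. -/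
def DtimesTwo (p : ℕ) (A : Finset (ZMod p)) : ℕ :=
  ((((A ×ˢ A) ×ˢ (A ×ˢ A)) ×ˢ ((A ×ˢ A) ×ˢ (A ×ˢ A))).filter fun x =>
    (x.1.1.1 - x.1.1.2) * (x.1.2.1 - x.1.2.2) = (x.2.1.1 - x.2.1.2) * (x.2.2.1 - x.2.2.2)).card

namespace Q9
open MvPolynomial

variable {K : Type*} [Field K]

/-- restriction of a polynomial to a parametrised line -/
noncomputable def res (x v : Fin 3 → K) : MvPolynomial (Fin 3) K →ₐ[K] Polynomial K :=
  aeval (fun i => Polynomial.C (x i) + Polynomial.C (v i) * Polynomial.X)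

theorem eval_res (x v : Fin 3 → K) (F : MvPolynomial (Fin 3) K) (t : K) :
    (res x v F).eval t = eval (fun i => x i + v i * t) F := by
  induction F using MvPolynomial.induction_on with
  | C a => simp [res]
  | add f g hf hg => simp [hf, hg]
  | mul_X f i hf => simp only [map_mul, Polynomial.eval_mul, hf]; simp [res]

noncomputable def Dv (v : Fin 3 → K) (F : MvPolynomial (Fin 3) K) : MvPolynomial (Fin 3) K :=
  ∑ i, C (v i) * pderiv i F

theorem Dv_mul (v : Fin 3 → K) (F G : MvPolynomial (Fin 3) K) :
    Dv v (F * G) = Dv v F * G + F * Dv v G := by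
  simp only [Dv, pderiv_mul, Fin.sum_univ_three]; ring

theorem Dv_add (v : Fin 3 → K) (F G : MvPolynomial (Fin 3) K) :
    Dv v (F + G) = Dv v F + Dv v G := by
  simp only [Dv, map_add, Fin.sum_univ_three]; ring

theorem derivative_res (x v : Fin 3 → K) (F : MvPolynomial (Fin 3) K) :
    Polynomial.derivative (res x v F) = res x v (Dv v F) := by
  induction F using MvPolynomial.induction_on with
  | C a => simp [res, Dv]
  | add f g hf hg => simp [hf, hg, Dv_add]
  | mul_X f i hf =>
    rw [map_mul, Polynomial.derivative_mul, hf, Dv_mul, map_add, map_mul, map_mul]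
    congr 2
    fin_cases i <;> simp [res, Dv, pderiv_X, Pi.single_apply]

theorem natDegree_res (x v : Fin 3 → K) (F : MvPolynomial (Fin 3) K) :
    (res x v F).natDegree ≤ F.totalDegree := by
  rw [res, aeval_def, eval₂_eq']
  refine Polynomial.natDegree_sum_le_of_forall_le _ _ fun d hd => ?_
  refine (Polynomial.natDegree_C_mul_le _ _).trans ?_
  refine (Polynomial.natDegree_prod_le _ _).trans ?_
  refine le_trans ?_ (le_totalDegree hd)
  rw [Finsupp.sum_fintype _ _ (by simp)]
  refine Finset.sum_le_sum fun i _ => ?_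
  refine (Polynomial.natDegree_pow_le).trans ?_
  have : (Polynomial.C (x i) + Polynomial.C (v i) * Polynomial.X).natDegree ≤ 1 := by
    compute_degree
  nlinarith

theorem eq_zero_of_derivs {p : ℕ} [Fact p.Prime] [CharP K p] (f : Polynomial K) (hf : f.natDegree < p)
    (t : K) (h : ∀ k, ((Polynomial.derivative^[k]) f).eval t = 0) : f = 0 := by
  rw [← (Polynomial.taylor_injective t).eq_iff, map_zero]
  ext k
  rw [Polynomial.coeff_zero]
  by_cases hk : k < p
  · rw [Polynomial.taylor_coeff]
    have h1 := h k
    rw [← Polynomial.factorial_smul_hasseDeriv] at h1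
    simp only [LinearMap.smul_apply] at h1
    rw [nsmul_eq_mul, Polynomial.eval_mul] at h1
    rcases mul_eq_zero.1 h1 with h2 | h2
    · exfalso
      rw [Polynomial.eval_natCast, CharP.cast_eq_zero_iff K p] at h2
      exact absurd ((Nat.Prime.dvd_factorial (Fact.out)).1 h2) (by omega)
    · exact h2
  · apply Polynomial.coeff_eq_zero_of_natDegree_lt
    rw [Polynomial.natDegree_taylor]; omega

theorem avoid {ι : Type*} [Infinite K] (s : Finset ι) (f : ι → Polynomial K) (hf : ∀ i ∈ s, f i ≠ 0) :
    ∃ t, ∀ i ∈ s, (f i).eval t ≠ 0 := by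
  by_contra hcon
  push Not at hcon
  have : ∏ i ∈ s, f i = 0 := by
    apply Polynomial.funext
    intro t
    obtain ⟨i, hi, h⟩ := hcon t
    rw [Polynomial.eval_prod, Polynomial.eval_zero]
    exact Finset.prod_eq_zero hi h
  obtain ⟨i, hi, h⟩ := Finset.prod_eq_zero_iff.1 this
  exact hf i hi h

/-- dimension of polynomials of bounded degree -/
theorem finrank_V (n D : ℕ) :
    Module.finrank K (restrictTotalDegree (Fin (n+1)) K D) = (D + n + 1).choose (n+1) := by
  classical
  have hb := Module.finrank_eq_nat_card_basis (basisRestrictSupport K { m : Fin (n+1) →₀ ℕ | (m.sum fun _ e => e) ≤ D })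
  have h1 : Module.finrank K (restrictTotalDegree (Fin (n+1)) K D) =
    Nat.card { m : Fin (n+1) →₀ ℕ | (m.sum fun _ e => e) ≤ D } := hb
  rw [h1]
  have h2 : { m : Fin (n+1) →₀ ℕ | (m.sum fun _ e => e) ≤ D } =
    (((Finset.range (D+1)).biUnion fun j => (Finset.univ : Finset (Fin (n+1))).finsuppAntidiag j : Finset _) : Set _) := by
    ext m
    have : m.sum (fun _ e => e) = ∑ i, m i := Finsupp.sum_fintype _ _ (by simp)
    simp only [Set.mem_ofPred_eq, this, Finset.coe_biUnion, Set.mem_iUnion, Finset.mem_coe,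
      Finset.mem_finsuppAntidiag, Finset.mem_range]
    constructor
    · intro h
      exact ⟨∑ i, m i, by omega, rfl, by simp⟩
    · rintro ⟨j, hj, h, -⟩
      have : ∑ i, m i = j := h
      omega
  rw [h2, Nat.card_coe_set_eq, Set.ncard_coe_finset, Finset.card_biUnion]
  · simp_rw [Finset.card_finsuppAntidiag_nat_eq_choose]
    simp only [Finset.card_univ, Fintype.card_fin]
    rw [show D + n + 1 = D + n + 1 from rfl, ← Nat.sum_range_add_choose D n]
    refine Finset.sum_congr rfl fun j _ => ?_
    rw [show n + 1 + j - 1 = j + n by omega, Nat.choose_symm_add]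
  · intro i _ j _ hij
    rw [Function.onFun, Finset.disjoint_left]
    intro m hm hm'
    rw [Finset.mem_finsuppAntidiag] at hm hm'
    exact hij (hm.1.symm.trans hm'.1)

end Q9

namespace Q9
open MvPolynomial

variable {K : Type*} [Field K]

theorem eval_aevalX (B : Polynomial K) (x : Fin 2 → K) :
    eval x (Polynomial.aeval (X 0 : MvPolynomial (Fin 2) K) B) = B.eval (x 0) := by
  induction B using Polynomial.induction_on' with
  | add f g hf hg => simp [hf, hg]
  | monomial n a => simp [← Polynomial.C_mul_X_pow_eq_monomial]

theorem plane_lines [Infinite K] (g : MvPolynomial (Fin 2) K) (S : Finset (K × K))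
    (hS : g.totalDegree < S.card)
    (h : ∀ q ∈ S, ∀ t, eval ![t, q.2 + q.1 * t] g = 0) : g = 0 := by
  classical
  set f : (K × K) × (K × K) → Polynomial K := fun i =>
    Polynomial.C (i.1.2 - i.2.2) + Polynomial.C (i.1.1 - i.2.1) * Polynomial.X with hf
  have hf0 : ∀ i ∈ S.offDiag, f i ≠ 0 := by
    rintro ⟨⟨a, b⟩, ⟨a', b'⟩⟩ hi h0
    rw [Finset.mem_offDiag] at hi
    apply hi.2.2
    have e0 := congrArg (Polynomial.eval 0) h0
    have e1 := congrArg (Polynomial.eval 1) h0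
    simp [hf] at e0 e1
    rw [e0] at e1
    simp only [Prod.mk.injEq]
    exact ⟨by linear_combination e1, by linear_combination e0⟩
  obtain ⟨t0, ht0⟩ := avoid _ f hf0
  set B : Polynomial K := ∏ i ∈ S.offDiag, f i with hB
  have key : g * Polynomial.aeval (X 0 : MvPolynomial (Fin 2) K) B = 0 := by
    apply MvPolynomial.funext
    intro x
    rw [map_mul, map_zero]
    by_cases hx : B.eval (x 0) = 0
    · rw [eval_aevalX, hx, mul_zero]
    · convert zero_mul _
      have hx' : ∀ i ∈ S.offDiag, (f i).eval (x 0) ≠ 0 := by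
        rw [hB, Polynomial.eval_prod, Finset.prod_eq_zero_iff] at hx
        push Not at hx
        exact hx
      set u : Polynomial K := aeval (fun i => if i = 0 then Polynomial.C (x 0) else Polynomial.X) g with hu
      have hue : ∀ w, u.eval w = eval ![x 0, w] g := by
        intro w
        rw [hu]
        clear hu u hS h
        induction g using MvPolynomial.induction_on with
        | C a => simp
        | add f g hf hg => simp [hf, hg]
        | mul_X f i hf =>
          simp only [map_mul, Polynomial.eval_mul, hf]; fin_cases i <;> simp
      have hud : u.natDegree ≤ g.totalDegree := by
        rw [hu, aeval_def, eval₂_eq']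
        refine Polynomial.natDegree_sum_le_of_forall_le _ _ fun d hd => ?_
        refine (Polynomial.natDegree_C_mul_le _ _).trans ?_
        refine (Polynomial.natDegree_prod_le _ _).trans ?_
        refine le_trans ?_ (le_totalDegree hd)
        rw [Finsupp.sum_fintype _ _ (by simp)]
        refine Finset.sum_le_sum fun i _ => ?_
        refine (Polynomial.natDegree_pow_le).trans ?_
        split_ifs <;> simp
      have hu0 : u = 0 := by
        apply Polynomial.eq_zero_of_natDegree_lt_card_of_eval_eq_zero' u (S.image fun q => q.2 + q.1 * x 0)
        · intro r hr
          obtain ⟨q, hq, rfl⟩ := Finset.mem_image.1 hr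
          rw [hue, h q hq]
        · rw [Finset.card_image_of_injOn]
          · omega
          · intro q hq q' hq' hqq
            by_contra hne
            apply hx' (q, q') (Finset.mem_offDiag.2 ⟨hq, hq', hne⟩)
            simp only [hf, Polynomial.eval_add, Polynomial.eval_mul, Polynomial.eval_C, Polynomial.eval_X]
            simp only at hqq
            linear_combination hqq
      have := hue (x 1)
      rw [hu0, Polynomial.eval_zero] at this
      rw [this]
      congr 2
      ext i
      fin_cases i <;> rfl
  rcases mul_eq_zero.1 key with h1 | h1
  · exact h1
  · exfalso
    have := eval_aevalX B ![t0, 0]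
    simp only [Matrix.cons_val_zero] at this
    rw [h1, map_zero, hB, Polynomial.eval_prod] at this
    obtain ⟨i, hi, h2⟩ := Finset.prod_eq_zero_iff.1 this.symm
    exact ht0 i hi h2

abbrev Tri (K : Type*) := K × K × K

noncomputable def lr (q : Tri K) : MvPolynomial (Fin 3) K →ₐ[K] Polynomial K :=
  res ![0, q.2.1, q.2.2 + q.1 * q.2.1] ![1, q.1, q.1 ^ 2]

def pt (q : Tri K) (t : K) : Fin 3 → K :=
  ![t, q.2.1 + q.1 * t, q.2.2 + q.1 * q.2.1 + q.1 ^ 2 * t]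

theorem eval_lr (q : Tri K) (F : MvPolynomial (Fin 3) K) (t : K) :
    (lr q F).eval t = eval (pt q t) F := by
  rw [lr, eval_res]
  congr 2
  ext i
  fin_cases i <;> simp [pt]

theorem natDegree_lr (q : Tri K) (F : MvPolynomial (Fin 3) K) :
    (lr q F).natDegree ≤ F.totalDegree := natDegree_res _ _ _

noncomputable def phi (e f D : ℕ) (F N : MvPolynomial (Fin 3) K) :
    (restrictTotalDegree (Fin 3) K (D - e) × restrictTotalDegree (Fin 3) K (D - f)) →ₗ[K] MvPolynomial (Fin 3) K :=
  LinearMap.coprod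
    ((LinearMap.mulRight K F).comp (Submodule.subtype _))
    ((LinearMap.mulRight K N).comp (Submodule.subtype _))

theorem phi_apply (e f D : ℕ) (F N : MvPolynomial (Fin 3) K) (x) :
    phi e f D F N x = (x.1 : MvPolynomial (Fin 3) K) * F + (x.2 : MvPolynomial (Fin 3) K) * N := by
  simp [phi]

theorem finrank_ker_phi (e f D : ℕ) (F N : MvPolynomial (Fin 3) K) (hF : Irreducible F)
    (he : F.totalDegree = e)
    (hFN : ¬ F ∣ N) :
    Module.finrank K (LinearMap.ker (phi e f D F N)) ≤ Module.finrank K (restrictTotalDegree (Fin 3) K (D - e - f)) := by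
  have hP : Prime F := hF.prime
  have hF0 : F ≠ 0 := hF.ne_zero
  have key : ∀ x : LinearMap.ker (phi e f D F N), ∃ E : restrictTotalDegree (Fin 3) K (D - e - f), 
      (x.1.2 : MvPolynomial (Fin 3) K) = F * E := by
    rintro ⟨⟨⟨A, hA⟩, ⟨B, hB⟩⟩, hx⟩
    rw [LinearMap.mem_ker, phi_apply] at hx
    simp only at hx ⊢
    have : F ∣ B * N := ⟨-A, by linear_combination hx⟩
    rcases hP.dvd_or_dvd this with h | h
    · obtain ⟨E, rfl⟩ := h
      by_cases hE : E = 0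
      · exact ⟨0, by simp [hE]⟩
      refine ⟨⟨E, ?_⟩, rfl⟩
      rw [mem_restrictTotalDegree] at hB ⊢
      rw [totalDegree_mul_of_isDomain hF0 hE] at hB
      omega
    · exact absurd h hFN
  choose E hE using key
  let L : LinearMap.ker (phi e f D F N) →ₗ[K] restrictTotalDegree (Fin 3) K (D - e - f) :=
    { toFun := E
      map_add' := by
        intro x y
        apply Subtype.ext
        apply mul_left_cancel₀ hF0
        rw [← hE, Submodule.coe_add (E x), mul_add, ← hE, ← hE]; rfl
      map_smul' := by
        intro c x
        apply Subtype.ext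
        apply mul_left_cancel₀ hF0
        rw [← hE, RingHom.id_apply, Submodule.coe_smul (c) (E x), mul_smul_comm, ← hE]; rfl }
  apply LinearMap.finrank_le_finrank_of_injective (f := L)
  rw [injective_iff_map_eq_zero]
  intro x hx
  have hx' : E x = 0 := hx
  have h2 := hE x
  rw [hx'] at h2
  simp only [Submodule.coe_zero, mul_zero] at h2
  clear hx hx'
  obtain ⟨⟨A, B⟩, hx⟩ := x
  simp only at h2
  rw [LinearMap.mem_ker, phi_apply] at hx
  simp only [h2, zero_mul, add_zero] at hx
  have hA : (A : MvPolynomial (Fin 3) K) = 0 := by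
    rcases mul_eq_zero.1 hx with h | h
    · exact h
    · exact absurd h hF0
  apply Subtype.ext
  apply Prod.ext
  · exact Subtype.ext hA
  · exact Subtype.ext h2

theorem bez_arith (e f D r k : ℕ) (hD : D = 2 * e * f) (hDef : e + f ≤ D)
    (hle : r + (D + 2).choose 2 ≤ (D + 2 + 1).choose (2 + 1))
    (hRk : r + k = (D - e + 2 + 1).choose (2 + 1) + (D - f + 2 + 1).choose (2 + 1))
    (hk : k ≤ (D - e - f + 2 + 1).choose (2 + 1)) : False := by
  have hc3 : ∀ n : ℕ, (n + 2 + 1).choose (2 + 1) * 6 = (n + 1) * (n + 2) * (n + 3) := by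
    intro n
    have := Nat.descFactorial_eq_factorial_mul_choose (n + 2 + 1) 3
    simp [Nat.descFactorial] at this
    have h6 : Nat.factorial 3 = 6 := rfl
    rw [h6] at this
    nlinarith
  have hc2 : (D + 2).choose 2 * 2 = (D + 1) * (D + 2) := by
    have := Nat.descFactorial_eq_factorial_mul_choose (D + 2) 2
    simp [Nat.descFactorial] at this
    nlinarith
  obtain ⟨x, hx⟩ : ∃ x, D = x + e + f := ⟨D - e - f, by omega⟩
  have a1 := hc3 D
  have a2 := hc3 (D - e)
  have a3 := hc3 (D - f)
  have a4 := hc3 (D - e - f)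
  have b2 : D - e = x + f := by omega
  have b3 : D - f = x + e := by omega
  have b4 : D - e - f = x := by omega
  have hfin : 6 * (D + 2).choose 2 + (D - e + 2 + 1).choose (2 + 1) * 6 + (D - f + 2 + 1).choose (2 + 1) * 6
      ≤ (D + 2 + 1).choose (2 + 1) * 6 + (D - e - f + 2 + 1).choose (2 + 1) * 6 := by
    omega
  rw [a1, a2, a3, a4, b4, b2, b3] at hfin
  have hid : (D + 1) * (D + 2) * (D + 3) + (x + 1) * (x + 2) * (x + 3) + 3 * e * f * (e + f) =
     (x + f + 1) * (x + f + 2) * (x + f + 3) + (x + e + 1) * (x + e + 2) * (x + e + 3) + 6 * e * f * (D + 2) := by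
    rw [hx]; ring
  have h6 : 6 * e * f * (D + 2) = 3 * D * (D + 2) := by
    rw [show 6 * e * f = 3 * D by rw [hD]; ring]
  rw [h6] at hid
  have h7 : 0 ≤ 3 * e * f * (e + f) := Nat.zero_le _
  generalize (D + 1) * (D + 2) * (D + 3) = A1 at *
  generalize (x + 1) * (x + 2) * (x + 3) = A2 at *
  generalize (x + f + 1) * (x + f + 2) * (x + f + 3) = A3 at *
  generalize (x + e + 1) * (x + e + 2) * (x + e + 3) = A4 at *
  nlinarith

set_option maxHeartbeats 1000000 in
/-- Bezout-type bound for lines on two surfaces -/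
theorem bezout [Infinite K] (F N : MvPolynomial (Fin 3) K) (hF : Irreducible F)
    (hFN : ¬ F ∣ N) (S : Finset (Tri K)) (hS : ∀ q ∈ S, lr q F = 0 ∧ lr q N = 0) :
    S.card ≤ 2 * F.totalDegree * N.totalDegree := by
  classical
  set e := F.totalDegree with he
  set f := N.totalDegree with hf
  rcases S.eq_empty_or_nonempty with rfl | ⟨q0, hq0⟩
  · simp
  have hN0 : N ≠ 0 := fun h => hFN (h ▸ dvd_zero F)
  have hF0 := hF.ne_zero
  have pos : ∀ G : MvPolynomial (Fin 3) K, G ≠ 0 → lr q0 G = 0 → 1 ≤ G.totalDegree := by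
    intro G hG h
    by_contra hlt
    have : G.totalDegree = 0 := by omega
    rw [totalDegree_eq_zero_iff_eq_C] at this
    rw [this] at h hG
    have h2 := eval_lr q0 (C (coeff 0 G)) 0
    rw [h] at h2
    simp only [Polynomial.eval_zero, eval_C] at h2
    rw [← h2, map_zero] at hG
    exact hG rfl
  have he1 : 1 ≤ e := pos F hF0 (hS q0 hq0).1
  have hf1 : 1 ≤ f := pos N hN0 (hS q0 hq0).2
  by_contra hcard
  push Not at hcard
  set D := 2 * e * f with hD
  have hDef : e + f ≤ D := by nlinarith
  -- choose t
  set g : Tri K × Tri K → Polynomial K := fun i =>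
    if i.1.1 ≠ i.2.1 then Polynomial.C (i.1.1 - i.2.1) + Polynomial.C (i.1.1^2 - i.2.1^2) * Polynomial.X
    else Polynomial.C (i.1.2.1 - i.2.2.1) + Polynomial.C (i.1.2.2 + i.1.1 * i.1.2.1 - (i.2.2.2 + i.2.1 * i.2.2.1)) * Polynomial.X with hg
  have hg0 : ∀ i ∈ S.offDiag, g i ≠ 0 := by
    rintro ⟨⟨a, b, c⟩, ⟨a', b', c'⟩⟩ hi h0
    rw [Finset.mem_offDiag] at hi
    apply hi.2.2
    have e0 := congrArg (Polynomial.eval 0) h0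
    have e1 := congrArg (Polynomial.eval 1) h0
    by_cases haa : a = a'
    · subst haa
      simp [hg] at e0 e1
      have hb : b = b' := by linear_combination e0
      subst hb
      have hc : c = c' := by linear_combination e1
      rw [hc]
    · simp [hg, haa] at e0
      exact absurd (by linear_combination e0) haa
  obtain ⟨t, ht⟩ := avoid _ g hg0
  set S2 : Finset (K × K) := S.image fun q => (q.1 + q.1^2 * t, q.2.1 + (q.2.2 + q.1 * q.2.1) * t) with hS2
  have hS2c : S2.card = S.card := by
    apply Finset.card_image_of_injOn
    intro q hq q' hq' hqq
    by_contra hne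
    apply ht (q, q') (Finset.mem_offDiag.2 ⟨hq, hq', hne⟩)
    simp only [Prod.mk.injEq] at hqq
    by_cases haa : q.1 = q'.1
    · simp [hg, haa]
      rw [haa] at hqq
      linear_combination hqq.2
    · simp [hg, haa]
      linear_combination hqq.1
  -- embedding of two variable polynomials
  set ψ : MvPolynomial (Fin 2) K →ₐ[K] MvPolynomial (Fin 3) K :=
    aeval (fun i => if i = 0 then X 0 else X 1 + C t * X 2) with hψ
  have hψe : ∀ G x, eval x (ψ G) = eval ![x 0, x 1 + t * x 2] G := by
    intro G x
    rw [hψ]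
    induction G using MvPolynomial.induction_on with
    | C a => simp
    | add f g hf hg => simp only [map_add, hf, hg]
    | mul_X f i hf =>
      simp only [map_mul, hf]; fin_cases i <;> simp
  have hψi : Function.Injective ψ := by
    rw [injective_iff_map_eq_zero]
    intro G hG
    apply MvPolynomial.funext
    intro x
    have := hψe G ![x 0, x 1, 0]
    rw [hG] at this
    simp only [map_zero] at this ⊢
    rw [this]
    congr 2
    ext i
    fin_cases i <;> simp
  have hψd : ∀ G, (ψ G).totalDegree ≤ G.totalDegree := by
    intro G
    rw [hψ, aeval_def, eval₂_eq']
    refine totalDegree_finsetSum_le fun d hd => ?_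
    refine (totalDegree_mul _ _).trans ?_
    rw [algebraMap_eq, totalDegree_C, zero_add]
    refine (totalDegree_finsetProd _ _).trans ?_
    refine le_trans ?_ (le_totalDegree hd)
    rw [Finsupp.sum_fintype _ _ (by simp)]
    refine Finset.sum_le_sum fun i _ => ?_
    refine (totalDegree_pow _ _).trans ?_
    have : (if i = 0 then X 0 else X 1 + C t * X 2 : MvPolynomial (Fin 3) K).totalDegree ≤ 1 := by
      split_ifs
      · simp
      · refine (totalDegree_add _ _).trans ?_
        refine max_le (by simp) ?_
        refine (totalDegree_mul _ _).trans ?_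
        simp
    nlinarith
  set V := restrictTotalDegree (Fin 3) K D with hV
  set W : Submodule K (MvPolynomial (Fin 3) K) := (restrictTotalDegree (Fin 2) K D).map ψ.toLinearMap with hW
  have hWV : W ≤ V := by
    rintro _ ⟨G, hG, rfl⟩
    have hG : G ∈ restrictTotalDegree (Fin 2) K D := hG
    rw [hV, mem_restrictTotalDegree] at *
    exact (hψd G).trans hG
  set R := LinearMap.range (phi e f D F N) with hR
  have hRV : R ≤ V := by
    rintro _ ⟨⟨⟨A, hA⟩, ⟨B, hB⟩⟩, rfl⟩
    rw [phi_apply, hV]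
    rw [mem_restrictTotalDegree] at *
    refine (totalDegree_add _ _).trans (max_le ?_ ?_)
    · refine (totalDegree_mul _ _).trans ?_
      simp only; omega
    · refine (totalDegree_mul _ _).trans ?_
      simp only; omega
  have hbot : R ⊓ W = ⊥ := by
    rw [eq_bot_iff]
    rintro G ⟨⟨⟨A, B⟩, hAB⟩, ⟨G', hG', rfl⟩⟩
    have hG' : G' ∈ restrictTotalDegree (Fin 2) K D := hG'
    rw [mem_restrictTotalDegree] at hG'
    have : G' = 0 := by
      apply plane_lines G' S2 (by omega)
      intro r hr s
      obtain ⟨q, hq, rfl⟩ := Finset.mem_image.1 hr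
      have h1 := congrArg (lr q) hAB
      rw [phi_apply, map_add, map_mul, map_mul, (hS q hq).1, (hS q hq).2] at h1
      have h2 := congrArg (Polynomial.eval s) h1
      rw [eval_lr] at h2
      have h3 := hψe G' (pt q s)
      have h4 : eval (pt q s) (ψ G') = 0 := by
        rw [AlgHom.toLinearMap_apply] at h2
        rw [← h2]; simp
      rw [h4] at h3
      rw [h3]
      congr 2
      ext i
      fin_cases i <;> simp [pt]
      ring
    rw [this]; simp
  have hdim := Submodule.finrank_sup_add_finrank_inf_eq R W
  rw [hbot, finrank_bot, add_zero] at hdim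
  have hle : Module.finrank K ↥(R ⊔ W) ≤ Module.finrank K V :=
    Submodule.finrank_mono (sup_le hRV hWV)
  have hWd : Module.finrank K W = (D + 2).choose 2 := by
    rw [← finrank_V (K := K) 1 D, hW]
    exact (LinearEquiv.finrank_eq (Submodule.equivMapOfInjective ψ.toLinearMap hψi _)).symm
  have hRk := LinearMap.finrank_range_add_finrank_ker (phi e f D F N)
  have hk := finrank_ker_phi e f D F N hF rfl hFN
  rw [Module.finrank_prod, finrank_V 2, finrank_V 2] at hRk
  rw [finrank_V 2] at hk
  rw [hV, finrank_V 2] at hle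
  rw [hdim, hWd] at hle
  exact bez_arith e f D _ _ hD hDef hle hRk hk

end Q9

namespace Q9
open MvPolynomial

variable {K : Type*} [Field K]

def perp (q r : Tri K) : Prop := q.2.2 - r.2.2 = r.1 * q.2.1 - q.1 * r.2.1

theorem perp_symm {q r : Tri K} (h : perp q r) : perp r q := by
  unfold perp at *; linear_combination -h

open scoped Classical in
noncomputable def dg (q : Tri K) (R : Finset (Tri K)) : ℕ := (R.filter (fun r => perp q r)).card

abbrev dir (a : K) : Fin 3 → K := ![1, a, a ^ 2]

theorem lr_Dv {q : Tri K} {F : MvPolynomial (Fin 3) K} (h : lr q F = 0) : lr q (Dv (dir q.1) F) = 0 := by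
  have := derivative_res ![0, q.2.1, q.2.2 + q.1 * q.2.1] ![1, q.1, q.1 ^ 2] F
  rw [lr] at *
  rw [← this, h, Polynomial.derivative_zero]

theorem meet {q r : Tri K} (h : perp q r) (ha : q.1 ≠ r.1) : ∃ t, pt q t = pt r t := by
  obtain ⟨a, b, c⟩ := q
  obtain ⟨a', b', c'⟩ := r
  simp only [perp] at *
  have ha' : a - a' ≠ 0 := sub_ne_zero.2 ha
  refine ⟨-(b - b') / (a - a'), ?_⟩
  have key : -(b - b') / (a - a') * (a - a') = -(b - b') := by field_simp
  generalize -(b - b') / (a - a') = t at *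
  ext i
  fin_cases i
  · simp [pt]
  · simp [pt]; linear_combination key
  · simp [pt]; linear_combination h + (a + a') * key

theorem perp_of_pt {q r : Tri K} {t : K} (h : pt q t = pt r t) : perp q r := by
  obtain ⟨a, b, c⟩ := q
  obtain ⟨a', b', c'⟩ := r
  have h1 := congrFun h 1
  have h2 := congrFun h 2
  simp [pt, perp] at *
  linear_combination h2 - (a + a') * h1

def ln (x : Fin 3 → K) (a : K) : Tri K := (a, x 1 - a * x 0, x 2 - a * x 1)

theorem pt_ln (x : Fin 3 → K) (a : K) : pt (ln x a) (x 0) = x := by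
  ext i
  fin_cases i <;> simp [pt, ln]
  ring

theorem pt_ln' (q : Tri K) (t a : K) : pt q t = pt (ln (pt q t) a) t := by
  have := pt_ln (pt q t) a
  simp only [pt, Matrix.cons_val_zero] at this ⊢
  exact this.symm

theorem ln_self (q : Tri K) (t : K) : ln (pt q t) q.1 = q := by
  obtain ⟨a, b, c⟩ := q
  simp [pt, ln]; ring

/-- counting roots on a line -/
theorem rootcount {q : Tri K} {f : MvPolynomial (Fin 3) K} (hf : lr q f ≠ 0) (R : Finset (Tri K))
    (hR : ∀ r ∈ R, ∀ r' ∈ R, r ≠ r' → ¬ perp r r')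
    (h : ∀ r ∈ R, ∃ t, pt q t = pt r t ∧ eval (pt q t) f = 0) : R.card ≤ f.totalDegree := by
  classical
  refine le_trans ?_ (natDegree_lr q f)
  choose! t ht ht' using h
  have h1 : R.card = (R.image t).card := by
    rw [Finset.card_image_of_injOn]
    intro r hr r' hr' hrr
    by_contra hne
    apply hR r hr r' hr' hne
    apply perp_of_pt (t := t r)
    rw [← ht r hr, hrr, ht r' hr']
  rw [h1]
  by_contra hlt
  push Not at hlt
  apply hf
  apply Polynomial.eq_zero_of_natDegree_lt_card_of_eval_eq_zero' _ _ _ hlt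
  intro s hs
  obtain ⟨r, hr, rfl⟩ := Finset.mem_image.1 hs
  rw [eval_lr, ht' r hr]

theorem totalDegree_pderiv_le (i : Fin 3) (F : MvPolynomial (Fin 3) K) :
    (pderiv i F).totalDegree ≤ F.totalDegree := by
  classical
  conv_lhs => rw [F.as_sum, map_sum]
  refine totalDegree_finsetSum_le fun d hd => ?_
  rw [pderiv_monomial]
  refine (totalDegree_monomial_le _ _).trans ?_
  refine le_trans ?_ (le_totalDegree hd)
  rw [Finsupp.sum_fintype _ _ (by simp), Finsupp.sum_fintype _ _ (by simp)]
  refine Finset.sum_le_sum fun j _ => ?_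
  simp

theorem Dv_eq (a : K) (F : MvPolynomial (Fin 3) K) :
    Dv (dir a) F = pderiv 0 F + C a * pderiv 1 F + C (a^2) * pderiv 2 F := by
  simp [Dv, Fin.sum_univ_three, dir]

section rho
variable (F : MvPolynomial (Fin 3) K)
noncomputable def hh0 := pderiv 0 (pderiv 0 F)
noncomputable def hh1 := pderiv 0 (pderiv 1 F) + pderiv 1 (pderiv 0 F)
noncomputable def hh2 := pderiv 0 (pderiv 2 F) + pderiv 1 (pderiv 1 F) + pderiv 2 (pderiv 0 F)
noncomputable def hh3 := pderiv 1 (pderiv 2 F) + pderiv 2 (pderiv 1 F)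
noncomputable def hh4 := pderiv 2 (pderiv 2 F)
noncomputable def qq2 := (pderiv 2 F) ^ 2 * hh4 F
noncomputable def qq1 := (pderiv 2 F) ^ 2 * hh3 F - pderiv 2 F * hh4 F * pderiv 1 F
noncomputable def qq0 := (pderiv 2 F) ^ 2 * hh2 F - pderiv 2 F * hh3 F * pderiv 1 F -
  hh4 F * (pderiv 0 F * pderiv 2 F - (pderiv 1 F) ^ 2)
noncomputable def rho1 := (pderiv 2 F) ^ 3 * hh1 F - qq1 F * pderiv 0 F - qq0 F * pderiv 1 F
noncomputable def rho0 := (pderiv 2 F) ^ 3 * hh0 F - qq0 F * pderiv 0 F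

theorem rho_id (a : K) : (pderiv 2 F) ^ 3 * Dv (dir a) (Dv (dir a) F) =
    (qq2 F * C (a^2) + qq1 F * C a + qq0 F) * Dv (dir a) F + rho0 F + rho1 F * C a := by
  have e2 : (C (a^2) : MvPolynomial (Fin 3) K) = C a ^ 2 := by rw [map_pow]
  simp only [Dv_eq, map_add, pderiv_C_mul]
  simp only [rho0, rho1, qq0, qq1, qq2, hh0, hh1, hh2, hh3, hh4, e2]
  ring

theorem deg_mul_le {f g : MvPolynomial (Fin 3) K} {m n : ℕ} (hf : f.totalDegree ≤ m) (hg : g.totalDegree ≤ n) :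
    (f * g).totalDegree ≤ m + n := (totalDegree_mul _ _).trans (add_le_add hf hg)
theorem deg_pow_le {f : MvPolynomial (Fin 3) K} {m : ℕ} (n : ℕ) (hf : f.totalDegree ≤ m) :
    (f ^ n).totalDegree ≤ n * m := (totalDegree_pow _ _).trans (Nat.mul_le_mul_left _ hf)
theorem deg_add_le {f g : MvPolynomial (Fin 3) K} {n : ℕ} (hf : f.totalDegree ≤ n) (hg : g.totalDegree ≤ n) :
    (f + g).totalDegree ≤ n := (totalDegree_add _ _).trans (max_le hf hg)
theorem deg_sub_le {f g : MvPolynomial (Fin 3) K} {n : ℕ} (hf : f.totalDegree ≤ n) (hg : g.totalDegree ≤ n) :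
    (f - g).totalDegree ≤ n := (totalDegree_sub _ _).trans (max_le hf hg)

theorem rho_deg : (rho0 F).totalDegree ≤ 4 * F.totalDegree ∧ (rho1 F).totalDegree ≤ 4 * F.totalDegree := by
  set e := F.totalDegree
  have g : ∀ i, (pderiv i F).totalDegree ≤ e := fun i => totalDegree_pderiv_le i F
  have g2 : ∀ i j, (pderiv i (pderiv j F)).totalDegree ≤ e := fun i j => (totalDegree_pderiv_le i _).trans (g j)
  have k0 : (hh0 F).totalDegree ≤ e := g2 0 0
  have k1 : (hh1 F).totalDegree ≤ e := deg_add_le (g2 _ _) (g2 _ _)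
  have k2 : (hh2 F).totalDegree ≤ e := deg_add_le (deg_add_le (g2 _ _) (g2 _ _)) (g2 _ _)
  have k3 : (hh3 F).totalDegree ≤ e := deg_add_le (g2 _ _) (g2 _ _)
  have k4 : (hh4 F).totalDegree ≤ e := g2 _ _
  have a1 : (qq1 F).totalDegree ≤ 3 * e := deg_sub_le ((deg_mul_le (deg_pow_le 2 (g 2)) k3).trans (by omega))
    ((deg_mul_le (deg_mul_le (g 2) k4) (g 1)).trans (by omega))
  have a0 : (qq0 F).totalDegree ≤ 3 * e := deg_sub_le (deg_sub_le ((deg_mul_le (deg_pow_le 2 (g 2)) k2).trans (by omega))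
    ((deg_mul_le (deg_mul_le (g 2) k3) (g 1)).trans (by omega)))
    ((deg_mul_le k4 (deg_sub_le (n := 2 * e) ((deg_mul_le (g 0) (g 2)).trans (by omega)) (deg_pow_le 2 (g 1)))).trans (by omega))
  constructor
  · exact deg_sub_le ((deg_mul_le (deg_pow_le 3 (g 2)) k0).trans (by omega)) ((deg_mul_le a0 (g 0)).trans (by omega))
  · exact deg_sub_le (deg_sub_le ((deg_mul_le (deg_pow_le 3 (g 2)) k1).trans (by omega)) ((deg_mul_le a1 (g 0)).trans (by omega))) ((deg_mul_le a0 (g 1)).trans (by omega))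
end rho

theorem iter_derivative_res (x v : Fin 3 → K) (F : MvPolynomial (Fin 3) K) (k : ℕ) :
    Polynomial.derivative^[k] (res x v F) = res x v ((Dv v)^[k] F) := by
  induction k with
  | zero => rfl
  | succ k ih => rw [Function.iterate_succ_apply', Function.iterate_succ_apply', ih, derivative_res]

theorem ideal_iter (v : Fin 3 → K) (F G2 : MvPolynomial (Fin 3) K)
    (h : G2 ^ 3 * Dv v (Dv v F) ∈ Ideal.span {F, Dv v F}) (k : ℕ) :
    ∃ n, G2 ^ n * (Dv v)^[k] F ∈ Ideal.span {F, Dv v F} := by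
  set J := Ideal.span {F, Dv v F} with hJ
  have hF : F ∈ J := Ideal.subset_span (by simp)
  have hDF : Dv v F ∈ J := Ideal.subset_span (by simp)
  have hD : ∀ j ∈ J, G2 ^ 3 * Dv v j ∈ J := by
    intro j hj
    obtain ⟨a, b, rfl⟩ := Ideal.mem_span_pair.1 hj
    rw [Dv_add, Dv_mul, Dv_mul]
    have : G2 ^ 3 * (Dv v a * F + a * Dv v F + (Dv v b * Dv v F + b * Dv v (Dv v F))) =
      (G2 ^ 3 * Dv v a) * F + (G2^3 * a + G2^3 * Dv v b) * Dv v F + b * (G2 ^ 3 * Dv v (Dv v F)) := by ring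
    rw [this]
    exact J.add_mem (J.add_mem (J.mul_mem_left _ hF) (J.mul_mem_left _ hDF)) (J.mul_mem_left _ h)
  have hpow : ∀ n : ℕ, ∃ w, Dv v (G2 ^ (n+1)) = G2 ^ n * w := by
    intro n
    induction n with
    | zero => exact ⟨_, by simp; rfl⟩
    | succ n ih =>
      obtain ⟨w, hw⟩ := ih
      refine ⟨w + Dv v G2, ?_⟩
      rw [pow_succ, Dv_mul, hw]; ring
  induction k with
  | zero => exact ⟨0, by simpa using hF⟩
  | succ k ih =>
    obtain ⟨n, hn⟩ := ih
    rw [Function.iterate_succ_apply']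
    set E := (Dv v)^[k] F
    have hn1 : G2 ^ (n + 1) * E ∈ J := by
      rw [pow_succ, mul_comm (G2 ^ n), mul_assoc]; exact J.mul_mem_left _ hn
    obtain ⟨w, hw⟩ := hpow n
    have h2 := hD _ hn1
    rw [Dv_mul, hw] at h2
    refine ⟨n + 4, ?_⟩
    have : G2 ^ (n + 4) * Dv v E = G2 ^ 3 * (G2 ^ n * w * E + G2 ^ (n + 1) * Dv v E) - (G2 ^ 3 * w) * (G2 ^ n * E) := by ring
    rw [this]
    exact J.sub_mem h2 (J.mul_mem_left _ hn)

theorem line_in {p : ℕ} [Fact p.Prime] [CharP K p] [Infinite K] (F : MvPolynomial (Fin 3) K) (hd : F.totalDegree < p)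
    (h0 : F ∣ rho0 F) (h1 : F ∣ rho1 F) (x : Fin 3 → K) (a : K)
    (hx : eval x F = 0) (hx2 : eval x (pderiv 2 F) ≠ 0) (hxa : eval x (Dv (dir a) F) = 0) :
    lr (ln x a) F = 0 := by
  have hJ : (pderiv 2 F) ^ 3 * Dv (dir a) (Dv (dir a) F) ∈ Ideal.span {F, Dv (dir a) F} := by
    rw [rho_id, Ideal.mem_span_pair]
    obtain ⟨u, hu⟩ := h0
    obtain ⟨w, hw⟩ := h1
    refine ⟨u + w * C a, qq2 F * C (a^2) + qq1 F * C a + qq0 F, ?_⟩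
    rw [hu, hw]; ring
  have hall : ∀ k, eval x ((Dv (dir a))^[k] F) = 0 := by
    intro k
    obtain ⟨n, hn⟩ := ideal_iter (dir a) F (pderiv 2 F) hJ k
    obtain ⟨u, w, huw⟩ := Ideal.mem_span_pair.1 hn
    have := congrArg (eval x) huw
    simp only [map_add, map_mul, hx, hxa, map_pow, mul_zero, add_zero] at this
    rcases mul_eq_zero.1 this.symm with h | h
    · exact absurd h (pow_ne_zero n hx2)
    · exact h
  have hres : res x (dir a) F = 0 := by
    apply eq_zero_of_derivs (p := p) _ ((natDegree_res _ _ _).trans_lt hd) 0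
    intro k
    rw [iter_derivative_res, eval_res]
    simpa using hall k
  apply Polynomial.funext
  intro t
  rw [eval_lr, Polynomial.eval_zero]
  have := eval_res x (dir a) F (t - x 0)
  rw [hres, Polynomial.eval_zero] at this
  rw [this]
  congr 2
  ext i
  fin_cases i <;> simp [pt, ln, dir] <;> ring

end Q9

namespace Q9
open MvPolynomial

variable {K : Type*} [Field K]

open scoped Classical in
structure Good (P R : Finset (Tri K)) (k : ℕ) : Prop where
  gP : ∀ q ∈ P, ∀ q' ∈ P, q ≠ q' → ¬ perp q q'
  gR : ∀ q ∈ R, ∀ q' ∈ R, q ≠ q' → ¬ perp q q'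
  gPR : ∀ q ∈ P, ∀ r ∈ R, q.1 ≠ r.1
  kP : ∀ r₁ r₂ : Tri K, r₁ ≠ r₂ → (P.filter fun q => perp q r₁ ∧ perp q r₂).card ≤ k
  kR : ∀ r₁ r₂ : Tri K, r₁ ≠ r₂ → (R.filter fun q => perp q r₁ ∧ perp q r₂).card ≤ k

theorem Good.symm {P R : Finset (Tri K)} {k : ℕ} (h : Good P R k) : Good R P k :=
  ⟨h.gR, h.gP, fun q hq r hr => (h.gPR r hr q hq).symm, h.kR, h.kP⟩

theorem Good.mono {P R P' R' : Finset (Tri K)} {k : ℕ} (h : Good P R k) (hP : P' ⊆ P) (hR : R' ⊆ R) :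
    Good P' R' k := by
  classical
  exact ⟨fun q hq q' hq' => h.gP q (hP hq) q' (hP hq'), fun q hq q' hq' => h.gR q (hR hq) q' (hR hq'),
   fun q hq r hr => h.gPR q (hP hq) r (hR hr),
   fun r1 r2 hr => (Finset.card_le_card (Finset.filter_subset_filter _ hP)).trans (h.kP r1 r2 hr),
   fun r1 r2 hr => (Finset.card_le_card (Finset.filter_subset_filter _ hR)).trans (h.kR r1 r2 hr)⟩

theorem deg_CX (a : K) (i : Fin 3) : (C a * X i : MvPolynomial (Fin 3) K).totalDegree ≤ 1 := by
  refine (totalDegree_mul _ _).trans ?_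
  simp

theorem totalDegree_pderiv_lt (i : Fin 3) (F : MvPolynomial (Fin 3) K) (h : pderiv i F ≠ 0) :
    (pderiv i F).totalDegree < F.totalDegree := by
  classical
  have h1 : F.totalDegree ≠ 0 := by
    intro h0
    rw [totalDegree_eq_zero_iff_eq_C] at h0
    rw [h0, pderiv_C] at h
    exact h rfl
  have h2 : (pderiv i F).totalDegree ≤ F.totalDegree - 1 := by
    conv_lhs => rw [F.as_sum, map_sum]
    refine totalDegree_finsetSum_le fun d hd => ?_
    rw [pderiv_monomial]
    by_cases hdi : d i = 0
    · simp [hdi]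
    refine (totalDegree_monomial_le _ _).trans ?_
    have h3 := le_totalDegree hd
    rw [Finsupp.sum_fintype _ _ (by simp)] at h3 ⊢
    have h4 : ∑ j, ((d - Finsupp.single i 1 : Fin 3 →₀ ℕ) j) < ∑ j, d j := by
      apply Finset.sum_lt_sum
      · intro j _; simp
      · exact ⟨i, Finset.mem_univ _, by simp; omega⟩
    simp only [id] at h3 ⊢
    omega
  omega

theorem eval_of_lr {q : Tri K} {F : MvPolynomial (Fin 3) K} (h : lr q F = 0) (t : K) : eval (pt q t) F = 0 := by
  rw [← eval_lr, h, Polynomial.eval_zero]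

theorem dg_le {P R : Finset (Tri K)} {k : ℕ} (h : Good P R k) {q : Tri K} (hq : q ∈ P)
    {f : MvPolynomial (Fin 3) K} (hf : lr q f ≠ 0)
    (hr : ∀ r ∈ R, ∀ t, pt q t = pt r t → eval (pt q t) f = 0) : dg q R ≤ f.totalDegree := by
  classical
  unfold dg
  apply rootcount hf
  · intro r hr r' hr'
    exact h.gR r (Finset.mem_filter.1 hr).1 r' (Finset.mem_filter.1 hr').1
  · intro r hr1
    obtain ⟨hrR, hp⟩ := Finset.mem_filter.1 hr1
    obtain ⟨t, ht⟩ := meet hp (h.gPR q hq r hrR)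
    exact ⟨t, ht, hr r hrR t ht⟩

theorem case0 {p : ℕ} [Fact p.Prime] [CharP K p] [Infinite K] (F : MvPolynomial (Fin 3) K) (hF : Irreducible F)
    (hd : F.totalDegree < p) (h2 : pderiv 2 F = 0) {q r : Tri K} (hq : lr q F = 0) (hr : lr r F = 0) :
    q.1 = r.1 := by
  classical
  have h1 : ∀ s, lr (q.1, q.2.1, q.2.2 + s) F = 0 := by
    intro s
    apply Polynomial.funext
    intro t
    rw [eval_lr, Polynomial.eval_zero]
    have hu : res (pt q t) ![0, 0, 1] F = 0 := by
      apply eq_zero_of_derivs (p := p) _ ((natDegree_res _ _ _).trans_lt hd) 0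
      intro k
      cases k with
      | zero =>
        rw [Function.iterate_zero, id, eval_res]
        simpa using eval_of_lr hq t
      | succ k =>
        rw [Function.iterate_succ_apply, derivative_res]
        have : Dv ![0, 0, 1] F = 0 := by simp [Dv, Fin.sum_univ_three, h2]
        rw [this, map_zero]
        simp
    have := eval_res (pt q t) ![0, 0, 1] F s
    rw [hu, Polynomial.eval_zero] at this
    rw [this]
    congr 2
    ext i
    fin_cases i <;> simp [pt]
    ring
  set N : MvPolynomial (Fin 3) K := X 1 - C q.2.1 - C q.1 * X 0 with hN
  have hNd : N.totalDegree ≤ 1 := deg_sub_le (deg_sub_le (by simp) (by simp)) (deg_CX _ _)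
  have hFN : F ∣ N := by
    by_contra hFN
    obtain ⟨T, hT⟩ := Infinite.exists_subset_card_eq K (2 * F.totalDegree + 1)
    have := bezout F N hF hFN (T.image fun s => (q.1, q.2.1, q.2.2 + s)) (by
      intro r hr
      obtain ⟨s, hs, rfl⟩ := Finset.mem_image.1 hr
      refine ⟨h1 s, ?_⟩
      apply Polynomial.funext
      intro t
      rw [eval_lr, hN]
      simp [pt])
    rw [Finset.card_image_of_injective _ (by intro s s' h; simpa using h), hT] at this
    nlinarith
  obtain ⟨G, hG⟩ := hFN
  have hrN : lr r N = 0 := by rw [hG, map_mul, hr, zero_mul]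
  have e0 := eval_of_lr hrN 0
  have e1 := eval_of_lr hrN 1
  simp [hN, pt] at e0 e1
  linear_combination e0 - e1

theorem rho_at (F : MvPolynomial (Fin 3) K) {q r : Tri K} (hq : lr q F = 0) (hr : lr r F = 0) (ha : q.1 ≠ r.1) {t : K}
    (ht : pt q t = pt r t) : eval (pt q t) (rho0 F) = 0 ∧ eval (pt q t) (rho1 F) = 0 := by
  have e : ∀ s : Tri K, lr s F = 0 → eval (pt s t) (rho0 F) + eval (pt s t) (rho1 F) * s.1 = 0 := by
    intro s hs
    have h1 := lr_Dv hs
    have h2 := lr_Dv h1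
    have := congrArg (eval (pt s t)) (rho_id F s.1)
    simp only [map_mul, map_add, eval_of_lr h1, eval_of_lr h2, mul_zero, zero_add, eval_C] at this
    exact this.symm
  have e1 := e q hq
  have e2 := e r hr
  rw [← ht] at e2
  have h1 : eval (pt q t) (rho1 F) = 0 := by
    have : eval (pt q t) (rho1 F) * (q.1 - r.1) = 0 := by linear_combination e1 - e2
    rcases mul_eq_zero.1 this with h | h
    · exact h
    · exact absurd (sub_eq_zero.1 h) ha
  rw [h1] at e1
  exact ⟨by simpa using e1, h1⟩

noncomputable def uq (q : Tri K) : MvPolynomial (Fin 3) K := X 2 - C q.1 * X 1 - C q.2.2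
noncomputable def vq (q : Tri K) : MvPolynomial (Fin 3) K := C q.1 * X 0 + C q.2.1 - X 1
noncomputable def NN (F : MvPolynomial (Fin 3) K) (q : Tri K) : MvPolynomial (Fin 3) K :=
  pderiv 0 F * (vq q) ^ 2 - pderiv 1 F * (uq q * vq q) + pderiv 2 F * (uq q) ^ 2

theorem NN_deg (F : MvPolynomial (Fin 3) K) (q : Tri K) : (NN F q).totalDegree ≤ F.totalDegree + 2 := by
  have g : ∀ i, (pderiv i F).totalDegree ≤ F.totalDegree := fun i => totalDegree_pderiv_le i F
  have hu : (uq q).totalDegree ≤ 1 := deg_sub_le (deg_sub_le (by simp) (deg_CX _ _)) (by simp)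
  have hv : (vq q).totalDegree ≤ 1 := deg_sub_le (deg_add_le (deg_CX _ _) (by simp)) (by simp)
  exact deg_add_le (deg_sub_le (deg_mul_le (g 0) (deg_pow_le 2 hv)) (deg_mul_le (g 1) (deg_mul_le hu hv))) (deg_mul_le (g 2) (deg_pow_le 2 hu))

theorem perp_ln (q : Tri K) (x : Fin 3 → K) (a : K) : perp q (ln x a) ↔ eval x (uq q) + a * eval x (vq q) = 0 := by
  simp only [perp, ln, uq, vq, map_sub, map_add, map_mul, eval_X, eval_C]
  constructor <;> intro h <;> linear_combination -h

theorem eval_Dv (F : MvPolynomial (Fin 3) K) (x : Fin 3 → K) (a : K) : eval x (Dv (dir a) F) =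
    eval x (pderiv 0 F) + a * eval x (pderiv 1 F) + a ^ 2 * eval x (pderiv 2 F) := by
  rw [Dv_eq]; simp

/-- lines meeting `q` and lying in the surface lie in `NN F q`. -/
theorem NN_line (F : MvPolynomial (Fin 3) K) [Infinite K] {q r : Tri K} (hr : lr r F = 0) (h : perp q r) :
    lr r (NN F q) = 0 := by
  apply Polynomial.funext
  intro s
  rw [eval_lr, Polynomial.eval_zero]
  have h1 := eval_of_lr (lr_Dv hr) s
  rw [eval_Dv] at h1
  rw [← ln_self r s, perp_ln] at h
  have hu : eval (pt r s) (uq q) = - (r.1 * eval (pt r s) (vq q)) := by linear_combination h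
  simp only [NN, map_add, map_sub, map_mul, map_pow, hu]
  linear_combination (eval (pt r s) (vq q)) ^ 2 * h1

/-- the second line through a point of a rich line -/
noncomputable def a2 (F : MvPolynomial (Fin 3) K) (q : Tri K) (t : K) : K :=
  - eval (pt q t) (pderiv 1 F) / eval (pt q t) (pderiv 2 F) - q.1
noncomputable def l2 (F : MvPolynomial (Fin 3) K) (q : Tri K) (t : K) : Tri K := ln (pt q t) (a2 F q t)
noncomputable def wq (F : MvPolynomial (Fin 3) K) (q : Tri K) : MvPolynomial (Fin 3) K :=
  pderiv 2 F * (C (2 * q.1) * pderiv 2 F + pderiv 1 F)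

theorem l2_facts {p : ℕ} [Fact p.Prime] [CharP K p] [Infinite K] (F : MvPolynomial (Fin 3) K) (hd : F.totalDegree < p)
    (h0 : F ∣ rho0 F) (h1 : F ∣ rho1 F) {q : Tri K} (hq : lr q F = 0) {t : K} (ht : eval (pt q t) (wq F q) ≠ 0) :
    lr (l2 F q t) F = 0 ∧ (l2 F q t).1 ≠ q.1 ∧ pt q t = pt (l2 F q t) t ∧
    ∀ q', F ∣ NN F q' → perp q' q ∨ perp q' (l2 F q t) := by
  have hg2 : eval (pt q t) (pderiv 2 F) ≠ 0 := by
    intro h; apply ht; simp [wq, h]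
  have hg1 : 2 * q.1 * eval (pt q t) (pderiv 2 F) + eval (pt q t) (pderiv 1 F) ≠ 0 := by
    intro h; apply ht; simp only [wq, map_mul, map_add, eval_C, h, mul_zero]
  have hD := eval_of_lr (lr_Dv hq) t
  rw [eval_Dv] at hD
  have ha2 : a2 F q t * eval (pt q t) (pderiv 2 F) = - eval (pt q t) (pderiv 1 F) - q.1 * eval (pt q t) (pderiv 2 F) := by
    simp only [a2]; field_simp
  refine ⟨?_, ?_, pt_ln' q t _, ?_⟩
  · apply line_in F hd h0 h1 _ _ (eval_of_lr hq t) hg2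
    rw [eval_Dv]
    linear_combination hD + (a2 F q t - q.1) * ha2
  · intro h
    have h' : a2 F q t = q.1 := h
    rw [h'] at ha2
    apply hg1
    linear_combination ha2
  · rintro q' ⟨G, hG⟩
    have := congrArg (eval (pt q t)) hG
    rw [map_mul, eval_of_lr hq t, zero_mul] at this
    simp only [NN, map_add, map_sub, map_mul, map_pow] at this
    set u := eval (pt q t) (uq q')
    set v := eval (pt q t) (vq q')
    have hfac : eval (pt q t) (pderiv 2 F) * ((u + q.1 * v) * (u + a2 F q t * v)) = 0 := by
      linear_combination this - v ^ 2 * hD + (u * v + q.1 * v ^ 2) * ha2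
    rcases mul_eq_zero.1 hfac with h | h
    · exact absurd h hg2
    rcases mul_eq_zero.1 h with h | h
    · left
      have := (perp_ln q' (pt q t) q.1).2 h
      rwa [ln_self] at this
    · right
      exact (perp_ln q' (pt q t) _).2 h

theorem l2_inj (F : MvPolynomial (Fin 3) K) {q : Tri K} {t s : K}
   (ht : (l2 F q t).1 ≠ q.1) (h : l2 F q t = l2 F q s) : t = s := by
  have e1 := pt_ln' q t (a2 F q t)
  have e2 := pt_ln' q s (a2 F q s)
  change _ = pt (l2 F q t) t at e1
  change _ = pt (l2 F q s) s at e2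
  rw [← h] at e2
  have f1 := congrFun e1 1
  have f2 := congrFun e2 1
  simp [pt] at f1 f2
  have : ((l2 F q t).1 - q.1) * (t - s) = 0 := by linear_combination f2 - f1
  rcases mul_eq_zero.1 this with h | h
  · exact absurd (sub_eq_zero.1 h) ht
  · exact sub_eq_zero.1 h

theorem rich_dvd {p : ℕ} [Fact p.Prime] [CharP K p] [Infinite K] (F : MvPolynomial (Fin 3) K) (hF : Irreducible F)
    (hd : F.totalDegree < p)
    (h0 : F ∣ rho0 F) (h1 : F ∣ rho1 F) {q r : Tri K} (hq : lr q F = 0) (hr : lr r F = 0) {t : K}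
    (ht : pt q t = pt r t) (ha : q.1 ≠ r.1) (hg2 : eval (pt q t) (pderiv 2 F) ≠ 0) :
    F ∣ NN F q ∧ ∃ t₁ t₂, t₁ ≠ t₂ ∧ eval (pt q t₁) (wq F q) ≠ 0 ∧ eval (pt q t₂) (wq F q) ≠ 0 := by
  classical
  have hw : lr q (wq F q) ≠ 0 := by
    intro h
    have := eval_of_lr h t
    simp only [wq, map_mul, map_add, eval_C] at this
    have d1 := eval_of_lr (lr_Dv hq) t
    have d2 := eval_of_lr (lr_Dv hr) t
    rw [eval_Dv] at d1 d2
    rw [← ht] at d2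
    rcases mul_eq_zero.1 this with h | h
    · exact hg2 h
    have h3 : (q.1 - r.1) * ((q.1 + r.1) * eval (pt q t) (pderiv 2 F) + eval (pt q t) (pderiv 1 F)) = 0 := by
      linear_combination d1 - d2
    rcases mul_eq_zero.1 h3 with h4 | h4
    · exact ha (sub_eq_zero.1 h4)
    have h5 : (q.1 - r.1) * eval (pt q t) (pderiv 2 F) = 0 := by linear_combination h - h4
    rcases mul_eq_zero.1 h5 with h6 | h6
    · exact ha (sub_eq_zero.1 h6)
    · exact hg2 h6
  have hinf : {s : K | eval (pt q s) (wq F q) ≠ 0}.Infinite := by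
    have := (Polynomial.finite_setOfPred_isRoot hw).infinite_compl
    convert this using 1
    ext s
    simp [Polynomial.IsRoot, eval_lr]
  constructor
  · by_contra hFN
    obtain ⟨T, hTs, hT⟩ := hinf.exists_subset_card_eq (2 * F.totalDegree * (F.totalDegree + 2) + 1)
    have := bezout F (NN F q) hF hFN (T.image fun s => l2 F q s) (by
      intro r hr
      obtain ⟨s, hs, rfl⟩ := Finset.mem_image.1 hr
      have hs' := hTs hs
      obtain ⟨f1, f2, f3, -⟩ := l2_facts F hd h0 h1 hq hs'
      exact ⟨f1, NN_line F f1 (perp_of_pt f3)⟩)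
    rw [Finset.card_image_of_injOn, hT] at this
    · have h2 := NN_deg F q
      have := Nat.mul_le_mul_left (2 * F.totalDegree) h2
      omega
    · intro s hs s' hs' hss
      exact l2_inj F (l2_facts F hd h0 h1 hq (hTs hs)).2.1 hss
  · obtain ⟨t1, ht1, t2, ht2, hne⟩ := hinf.nontrivial
    exact ⟨t1, t2, hne, ht1, ht2⟩

open scoped Classical in
theorem surface_irred {p : ℕ} [Fact p.Prime] [CharP K p] [Infinite K] (F : MvPolynomial (Fin 3) K) (hF : Irreducible F)
    (hd : F.totalDegree < p) {P R : Finset (Tri K)} {k : ℕ} (hG : Good P R k) :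
    ∃ P₁ P₂, P₁ ⊆ P ∧ P₂ ⊆ P ∧ P₁.card ≤ 8 * F.totalDegree ^ 2 ∧ P₂.card ≤ k + 1 ∧
      ∀ q ∈ P, q ∉ P₁ → q ∉ P₂ → dg q (R.filter fun r => lr r F = 0) ≤ 4 * F.totalDegree := by
  set RF := R.filter fun r => lr r F = 0 with hRF
  set e := F.totalDegree with he
  have hG' : Good P RF k := hG.mono (Finset.Subset.refl _) (Finset.filter_subset _ _)
  have hlr : ∀ r ∈ RF, lr r F = 0 := fun r hr => (Finset.mem_filter.1 hr).2
  have base : ∀ q ∈ P, lr q F ≠ 0 → dg q RF ≤ 4 * e := by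
    intro q hq h
    refine (dg_le hG' hq h ?_).trans (by omega)
    intro r hr t ht
    rw [ht]; exact eval_of_lr (hlr r hr) t
  by_cases h2 : pderiv 2 F = 0
  · refine ⟨∅, ∅, by simp, by simp, by simp, by simp, fun q hq _ _ => ?_⟩
    by_cases hqF : lr q F = 0
    · have : RF = ∅ := by
        rw [Finset.eq_empty_iff_forall_notMem]
        intro r hr
        exact hG'.gPR q hq r hr (case0 F hF hd h2 hqF (hlr r hr))
      simp [this, dg]
    · exact base q hq hqF
  by_cases hrho : F ∣ rho0 F ∧ F ∣ rho1 F
  · obtain ⟨h0, h1⟩ := hrho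
    have hF2 : ¬ F ∣ pderiv 2 F := by
      rintro ⟨G, hGe⟩
      have hG0 : G ≠ 0 := by rintro rfl; exact h2 (by simpa using hGe)
      have hmon := totalDegree_pderiv_lt 2 F h2
      rw [hGe, totalDegree_mul_of_isDomain hF.ne_zero hG0] at hmon
      omega
    set P1 := P.filter fun q => lr q F = 0 ∧ lr q (pderiv 2 F) = 0 with hP1
    set P2 := P.filter fun q => q ∉ P1 ∧ lr q F = 0 ∧ e < dg q RF with hP2
    have hrich : ∀ q ∈ P2, F ∣ NN F q ∧ ∃ t₁ t₂, t₁ ≠ t₂ ∧ eval (pt q t₁) (wq F q) ≠ 0 ∧ eval (pt q t₂) (wq F q) ≠ 0 := by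
      intro q hq
      obtain ⟨hqP, hq1, hqF, hqd⟩ := Finset.mem_filter.1 hq
      have hq2 : lr q (pderiv 2 F) ≠ 0 := fun h => hq1 (Finset.mem_filter.2 ⟨hqP, hqF, h⟩)
      by_contra hcon
      have := dg_le hG' hqP hq2 (by
        intro r hr t ht
        by_contra hne
        exact hcon (rich_dvd F hF hd h0 h1 hqF (hlr r hr) ht (hG'.gPR q hqP r hr) hne))
      have := totalDegree_pderiv_le 2 F
      omega
    refine ⟨P1, P2, Finset.filter_subset _ _, Finset.filter_subset _ _, ?_, ?_, ?_⟩
    · have := bezout F (pderiv 2 F) hF hF2 P1 (fun q hq => (Finset.mem_filter.1 hq).2)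
      have h3 := totalDegree_pderiv_le 2 F
      have := Nat.mul_le_mul_left (2 * e) h3
      nlinarith
    · rcases P2.eq_empty_or_nonempty with h | ⟨q0, hq0⟩
      · simp [h]
      obtain ⟨hdv, t1, t2, hne, ht1, ht2⟩ := hrich q0 hq0
      obtain ⟨hq0P, -, hq0F, -⟩ := Finset.mem_filter.1 hq0
      obtain ⟨-, a1, -, b1⟩ := l2_facts F hd h0 h1 hq0F ht1
      obtain ⟨-, -, -, b2⟩ := l2_facts F hd h0 h1 hq0F ht2
      have hsub : P2.erase q0 ⊆ P.filter fun q => perp q (l2 F q0 t1) ∧ perp q (l2 F q0 t2) := by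
        intro q hq
        obtain ⟨hqne, hq⟩ := Finset.mem_erase.1 hq
        have hqP := (Finset.mem_filter.1 hq).1
        have hn := hG.gP q hqP q0 hq0P hqne
        have hdq := (hrich q hq).1
        exact Finset.mem_filter.2 ⟨hqP, (b1 q hdq).resolve_left hn, (b2 q hdq).resolve_left hn⟩
      have h4 := (Finset.card_le_card hsub).trans (hG.kP _ _ (fun h => hne (l2_inj F a1 h)))
      have := Finset.card_erase_add_one hq0
      omega
    · intro q hq hq1 hq2
      by_cases hqF : lr q F = 0
      · by_contra hcon
        exact hq2 (Finset.mem_filter.2 ⟨hq, hq1, hqF, by omega⟩)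
      · exact base q hq hqF
  · obtain ⟨hρ0, hρ1⟩ := rho_deg F
    refine ⟨P.filter fun q => lr q F = 0 ∧ lr q (rho0 F) = 0 ∧ lr q (rho1 F) = 0, ∅, Finset.filter_subset _ _, by simp, ?_, by simp, ?_⟩
    · rw [not_and_or] at hrho
      rcases hrho with h | h
      · have := bezout F _ hF h (P.filter fun q => lr q F = 0 ∧ lr q (rho0 F) = 0 ∧ lr q (rho1 F) = 0)
          (fun q hq => ⟨(Finset.mem_filter.1 hq).2.1, (Finset.mem_filter.1 hq).2.2.1⟩)
        have := Nat.mul_le_mul_left (2 * e) hρ0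
        nlinarith
      · have := bezout F _ hF h (P.filter fun q => lr q F = 0 ∧ lr q (rho0 F) = 0 ∧ lr q (rho1 F) = 0)
          (fun q hq => ⟨(Finset.mem_filter.1 hq).2.1, (Finset.mem_filter.1 hq).2.2.2⟩)
        have := Nat.mul_le_mul_left (2 * e) hρ1
        nlinarith
    · intro q hq hq1 _
      by_cases hqF : lr q F = 0
      · by_cases hq0 : lr q (rho0 F) = 0
        · have hq3 : lr q (rho1 F) ≠ 0 := fun h => hq1 (Finset.mem_filter.2 ⟨hq, hqF, hq0, h⟩)
          exact (dg_le hG' hq hq3 (fun r hr t ht => (rho_at F hqF (hlr r hr) (hG'.gPR q hq r hr) ht).2)).trans hρ1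
        · exact (dg_le hG' hq hq0 (fun r hr t ht => (rho_at F hqF (hlr r hr) (hG'.gPR q hq r hr) ht).1)).trans hρ0
      · exact base q hq hqF

open scoped Classical in
/-- same for arbitrary nonzero polynomials -/
theorem surface {p : ℕ} [Fact p.Prime] [CharP K p] [Infinite K] (k : ℕ) (F : MvPolynomial (Fin 3) K) (hF : F ≠ 0) :
    F.totalDegree < p → ∀ P R : Finset (Tri K), Good P R k → ∃ P₁ ⊆ P, P₁.card ≤ 8 * F.totalDegree ^ 2 ∧
      ∑ q ∈ P \ P₁, dg q (R.filter fun r => lr r F = 0) ≤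
        4 * F.totalDegree * P.card + (k + 1) * (R.filter fun r => lr r F = 0).card := by
  induction F using WfDvdMonoid.induction_on_irreducible with
  | zero => exact absurd rfl hF
  | unit u hu =>
    intro _ P R _
    refine ⟨∅, by simp, by simp, ?_⟩
    have : (R.filter fun r => lr r u = 0) = ∅ := by
      rw [Finset.filter_eq_empty_iff]
      intro r _ h
      exact (hu.map (lr r)).ne_zero h
    simp [this, dg]
  | mul G F hG0 hFi ih =>
    intro hd P R hgood
    have hdeg := totalDegree_mul_of_isDomain hFi.ne_zero hG0
    rw [hdeg] at hd ⊢
    obtain ⟨P1, P2, hP1, hP2, c1, c2, hq⟩ := surface_irred F hFi (by omega) hgood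
    obtain ⟨P3, hP3, c3, hs⟩ := ih hG0 (by omega) P (R.filter fun r => lr r F ≠ 0)
      (hgood.mono (Finset.Subset.refl _) (Finset.filter_subset _ _))
    have hsplit : (R.filter fun r => lr r (F * G) = 0) = (R.filter fun r => lr r F = 0) ∪
        ((R.filter fun r => lr r F ≠ 0).filter fun r => lr r G = 0) := by
      ext r
      simp only [Finset.mem_filter, Finset.mem_union, map_mul, mul_eq_zero]
      tauto
    have hdisj : Disjoint (R.filter fun r => lr r F = 0)
        ((R.filter fun r => lr r F ≠ 0).filter fun r => lr r G = 0) := by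
      rw [Finset.disjoint_left]
      intro r h1 h2
      simp only [Finset.mem_filter] at h1 h2
      exact h2.1.2 h1.2
    rw [hsplit]
    set RA := R.filter fun r => lr r F = 0
    set RB := (R.filter fun r => lr r F ≠ 0).filter fun r => lr r G = 0
    refine ⟨P1 ∪ P3, Finset.union_subset hP1 hP3, ?_, ?_⟩
    · refine (Finset.card_union_le _ _).trans ?_
      nlinarith
    · rw [Finset.card_union_of_disjoint hdisj]
      have hdgu : ∀ q, dg q (RA ∪ RB) ≤ dg q RA + dg q RB := by
        intro q
        unfold dg
        rw [Finset.filter_union]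
        exact Finset.card_union_le _ _
      have hdgc : ∀ q, dg q RA ≤ RA.card := fun q => Finset.card_filter_le _ _
      have s1 : ∑ q ∈ P \ (P1 ∪ P3), dg q RB ≤ ∑ q ∈ P \ P3, dg q RB :=
        Finset.sum_le_sum_of_subset (Finset.sdiff_subset_sdiff (Finset.Subset.refl _) Finset.subset_union_right)
      have s2 : ∑ q ∈ P \ (P1 ∪ P3), dg q RA ≤ ∑ q ∈ P \ P1, dg q RA :=
        Finset.sum_le_sum_of_subset (Finset.sdiff_subset_sdiff (Finset.Subset.refl _) Finset.subset_union_left)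
      have s3 : ∑ q ∈ P \ P1, dg q RA ≤ ∑ q ∈ P, (4 * F.totalDegree + if q ∈ P2 then RA.card else 0) := by
        refine (Finset.sum_le_sum (fun q hq' => ?_)).trans (Finset.sum_le_sum_of_subset Finset.sdiff_subset)
        obtain ⟨h1, h2⟩ := Finset.mem_sdiff.1 hq'
        by_cases h3 : q ∈ P2
        · rw [if_pos h3]; have := hdgc q; omega
        · have := hq q h1 h2 h3; omega
      have s4 : ∑ q ∈ P, (4 * F.totalDegree + if q ∈ P2 then RA.card else 0) ≤ 4 * F.totalDegree * P.card + (k + 1) * RA.card := by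
        rw [Finset.sum_add_distrib, Finset.sum_const, ← Finset.sum_filter, Finset.sum_const, smul_eq_mul, smul_eq_mul]
        have : (P.filter (· ∈ P2)).card ≤ k + 1 := by
          refine (Finset.card_le_card ?_).trans c2
          intro q hq; exact (Finset.mem_filter.1 hq).2
        have := Nat.mul_le_mul_right RA.card this
        nlinarith
      have s5 : ∑ q ∈ P \ (P1 ∪ P3), dg q (RA ∪ RB) ≤ ∑ q ∈ P \ (P1 ∪ P3), dg q RA + ∑ q ∈ P \ (P1 ∪ P3), dg q RB := by
        rw [← Finset.sum_add_distrib]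
        exact Finset.sum_le_sum fun q _ => hdgu q
      nlinarith

end Q9

namespace Q9
open MvPolynomial

variable {K : Type*} [Field K]

theorem interp (S : Finset (Tri K)) (d : ℕ) (h : 6 * S.card ≤ d ^ 2) :
    ∃ F : MvPolynomial (Fin 3) K, F ≠ 0 ∧ F.totalDegree ≤ d ∧ ∀ q ∈ S, lr q F = 0 := by
  classical
  let φ : restrictTotalDegree (Fin 3) K d →ₗ[K] (S × Fin (d+1) → K) :=
    LinearMap.pi fun x => (Polynomial.lcoeff K x.2).comp ((lr x.1.1).toLinearMap.comp (Submodule.subtype _))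
  have hdim : Module.finrank K (S × Fin (d+1) → K) < Module.finrank K (restrictTotalDegree (Fin 3) K d) := by
    rw [finrank_V 2 d, Module.finrank_pi]
    simp only [Fintype.card_prod, Fintype.card_coe, Fintype.card_fin]
    have h1 : (d+3).choose 3 * 6 = (d+3)*(d+2)*(d+1) := by
      have := Nat.descFactorial_eq_factorial_mul_choose (d+3) 3
      simp [Nat.descFactorial, Nat.factorial] at this
      linarith
    have h2 : (S.card * (d+1)) * 6 < (d+3).choose 3 * 6 := by
      rw [h1]
      have : 6 * S.card < (d+3)*(d+2) := by nlinarith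
      nlinarith
    exact lt_of_mul_lt_mul_right h2 (by norm_num)
  have : FiniteDimensional K (restrictTotalDegree (Fin 3) K d) := by
    apply Module.finite_of_finrank_pos
    omega
  have hk := LinearMap.ker_ne_bot_of_finrank_lt (f := φ) hdim
  obtain ⟨F, hF, hF0⟩ := Submodule.exists_mem_ne_zero_of_ne_bot hk
  refine ⟨F.1, fun h => hF0 (Subtype.ext h), (mem_restrictTotalDegree _ _ _).1 F.2, fun q hq => ?_⟩
  ext i
  rw [Polynomial.coeff_zero]
  by_cases hi : i < d + 1
  · have := congrFun (LinearMap.mem_ker.1 hF) (⟨q, hq⟩, ⟨i, hi⟩)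
    simpa [φ] using this
  · apply Polynomial.coeff_eq_zero_of_natDegree_lt
    have h1 := natDegree_lr q F.1
    have h2 := (mem_restrictTotalDegree _ _ _).1 F.2
    omega

noncomputable def inc (P R : Finset (Tri K)) : ℕ := ∑ q ∈ P, dg q R

theorem inc_symm (P R : Finset (Tri K)) : inc P R = inc R P := by
  classical
  unfold inc dg
  have := Finset.sum_card_bipartiteAbove_eq_sum_card_bipartiteBelow (s := P) (t := R) (fun q r => perp q r)
  unfold Finset.bipartiteAbove Finset.bipartiteBelow at this
  convert this using 3
  ext r
  simp only [Finset.mem_filter]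
  exact ⟨fun h => ⟨h.1, perp_symm h.2⟩, fun h => ⟨h.1, perp_symm h.2⟩⟩

theorem dg_le_card (q : Tri K) (R : Finset (Tri K)) : dg q R ≤ R.card := by
  classical
  exact Finset.card_filter_le _ _

theorem inc_le (P R : Finset (Tri K)) : inc P R ≤ P.card * R.card := by
  unfold inc
  exact (Finset.sum_le_sum fun q _ => dg_le_card q R).trans (by simp)

/-- splitting -/
theorem split {α : Type*} [DecidableEq α] (P : Finset α) (M t : ℕ) (ht : P.card < t * M) :
    ∃ f : α → ℕ, (∀ q ∈ P, f q < M) ∧ ∀ j, (P.filter fun q => f q = j).card ≤ t := by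
  have ht0 : 0 < t := by
    rcases Nat.eq_zero_or_pos t with h | h
    · simp [h] at ht
    · exact h
  let e := P.equivFin
  refine ⟨fun q => if h : q ∈ P then (e ⟨q, h⟩ : ℕ) / t else 0, ?_, ?_⟩
  · intro q hq
    simp only [hq, dif_pos]
    rw [Nat.div_lt_iff_lt_mul ht0]
    have := (e ⟨q, hq⟩).2
    nlinarith
  · intro j
    have : (P.filter fun q => (if h : q ∈ P then (e ⟨q, h⟩ : ℕ) / t else 0) = j).card ≤ (Finset.range t).card := by
      apply Finset.card_le_card_of_injOn (fun q => if h : q ∈ P then (e ⟨q, h⟩ : ℕ) % t else 0)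
      · intro q hq
        have hq' := (Finset.mem_filter.1 (Finset.mem_coe.1 hq)).1
        simp only [hq', dif_pos, Finset.coe_range, Set.mem_Iio]
        exact Nat.mod_lt _ ht0
      · intro q hq q' hq' hh
        obtain ⟨h1, h2⟩ := (Finset.mem_filter.1 (Finset.mem_coe.1 hq))
        obtain ⟨h1', h2'⟩ := (Finset.mem_filter.1 (Finset.mem_coe.1 hq'))
        simp only [h1, h1', dif_pos] at h2 h2' hh
        have : (e ⟨q, h1⟩ : ℕ) = (e ⟨q', h1'⟩ : ℕ) := by
          rw [← Nat.div_add_mod (e ⟨q, h1⟩ : ℕ) t, ← Nat.div_add_mod (e ⟨q', h1'⟩ : ℕ) t, h2, h2', hh]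
        have := e.injective (Fin.ext this)
        simpa using this
    simpa using this

theorem inc_split {p : ℕ} [Fact p.Prime] [CharP K p] [Infinite K] (k M t d : ℕ) (P R : Finset (Tri K)) (h : Good P R k)
    (ht : P.card < t * M) (hd : 6 * t ≤ d ^ 2) (hdp : d < p) :
    ∃ (P' R' : ℕ → Finset (Tri K)), (∀ j, P' j ⊆ P ∧ R' j ⊆ R ∧ (P' j).card ≤ 8 * d ^ 2) ∧
      ∑ j ∈ range M, (R' j).card ≤ R.card ∧
      inc P R ≤ R.card * (M * d) + M * (4 * d * P.card) + (k + 1) * R.card + ∑ j ∈ range M, inc (P' j) (R' j) := by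
  classical
  obtain ⟨f, hf, hft⟩ := split P M t ht
  have : ∀ j, ∃ F : MvPolynomial (Fin 3) K, F ≠ 0 ∧ F.totalDegree ≤ d ∧ ∀ q ∈ (P.filter fun q => f q = j), lr q F = 0 := by
    intro j
    apply interp
    have := hft j
    omega
  choose F hF0 hFd hFv using this
  let R₀ := R.filter fun r => ∀ j ∈ range M, lr r (F j) ≠ 0
  have hx : ∀ r : Tri K, ∃ j, r ∈ R \ R₀ → j ∈ range M ∧ lr r (F j) = 0 := by
    intro r
    by_cases hr : r ∈ R \ R₀
    · simp only [R₀, Finset.mem_sdiff, Finset.mem_filter, not_and, not_forall] at hr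
      obtain ⟨j, hj, hj'⟩ := hr.2 hr.1
      exact ⟨j, fun _ => ⟨hj, not_not.1 hj'⟩⟩
    · exact ⟨0, fun h => absurd h hr⟩
  choose g hg using hx
  let R' := fun j => (R \ R₀).filter fun r => g r = j
  have hR' : ∀ j, R' j ⊆ R := fun j => (Finset.filter_subset _ _).trans Finset.sdiff_subset
  have hR'f : ∀ j, (R' j).filter (fun r => lr r (F j) = 0) = R' j := by
    intro j
    apply Finset.filter_true_of_mem
    intro r hr
    obtain ⟨h1, h2⟩ := Finset.mem_filter.1 hr
    rw [← h2]
    exact (hg r h1).2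
  have hs : ∀ j, ∃ P₁ ⊆ P, P₁.card ≤ 8 * d ^ 2 ∧
      ∑ q ∈ P \ P₁, dg q (R' j) ≤ 4 * d * P.card + (k + 1) * (R' j).card := by
    intro j
    obtain ⟨P₁, h1, h2, h3⟩ := surface k (F j) (hF0 j) ((hFd j).trans_lt hdp) P (R' j) (h.mono subset_rfl (hR' j))
    have hR2 := hR'f j
    refine ⟨P₁, h1, h2.trans (by have := hFd j; gcongr), ?_⟩
    have h4 : ∑ q ∈ P \ P₁, dg q (R' j) ≤ 4 * (F j).totalDegree * P.card + (k + 1) * (R' j).card := by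
      convert h3 using 2
      · congr 1
        convert hR2.symm
      · congr 2
        convert hR2.symm
    refine h4.trans ?_
    have := hFd j
    gcongr
  choose P' hP' hPc hPs using hs
  have hcards : ∑ j ∈ range M, (R' j).card = (R \ R₀).card := by
    symm
    apply Finset.card_eq_sum_card_fiberwise
    intro r hr
    exact (hg r hr).1
  refine ⟨P', R', fun j => ⟨hP' j, hR' j, hPc j⟩, ?_, ?_⟩
  · rw [hcards]
    exact Finset.card_le_card Finset.sdiff_subset
  · have hR0 : inc P R₀ ≤ R.card * (M * d) := by
      rw [inc_symm]
      unfold inc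
      refine (Finset.sum_le_card_nsmul R₀ _ (M * d) ?_).trans ?_
      · intro r hr
        obtain ⟨hrR, hr0⟩ := Finset.mem_filter.1 hr
        have h1 : dg r P = ∑ j ∈ range M, dg r (P.filter fun q => f q = j) := by
          unfold dg
          rw [Finset.card_eq_sum_card_fiberwise (f := f) (t := range M)]
          · apply Finset.sum_congr rfl
            intro j _
            congr 1
            ext q
            simp only [Finset.mem_filter]
            tauto
          · intro q hq
            have := hf q (Finset.mem_filter.1 (Finset.mem_coe.1 hq)).1
            simpa using this
        rw [h1]
        refine (Finset.sum_le_card_nsmul _ _ d ?_).trans (by simp)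
        intro j hj
        refine (dg_le (h.symm.mono subset_rfl (Finset.filter_subset (fun q => f q = j) P)) hrR (hr0 j hj) ?_).trans (hFd j)
        intro q hq t hqt
        rw [hqt]
        exact eval_of_lr (hFv j q hq) t
      · rw [smul_eq_mul]
        exact Nat.mul_le_mul_right _ (Finset.card_le_card (Finset.filter_subset _ _))
    have hsum : inc P R = inc P R₀ + ∑ j ∈ range M, inc P (R' j) := by
      simp only [inc_symm P]
      unfold inc
      have h1 : ∑ j ∈ range M, ∑ q ∈ R' j, dg q P = ∑ q ∈ R \ R₀, dg q P := by
        apply Finset.sum_fiberwise_of_maps_to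
        intro r hr
        exact (hg r hr).1
      rw [h1, add_comm, Finset.sum_sdiff (Finset.filter_subset _ _)]
    have hj : ∀ j, inc P (R' j) ≤ 4 * d * P.card + (k + 1) * (R' j).card + inc (P' j) (R' j) := by
      intro j
      unfold inc
      rw [← Finset.sum_sdiff (hP' j)]
      have := hPs j
      omega
    rw [hsum]
    have h5 := Finset.sum_le_sum fun j (_ : j ∈ range M) => hj j
    simp only [Finset.sum_add_distrib, Finset.sum_const, Finset.card_range, smul_eq_mul, ← Finset.mul_sum] at h5
    have h6 : (k+1) * ∑ j ∈ range M, (R' j).card ≤ (k+1) * R.card := by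
      rw [hcards]
      exact Nat.mul_le_mul_left _ (Finset.card_le_card Finset.sdiff_subset)
    omega
end Q9

namespace Q9

variable {K : Type*} [Field K]

noncomputable def Bd (ε k m n : ℝ) : ℝ := m * √n + n * √m + k * (m + n) * (m * n) ^ ε

theorem Bd_symm (ε k m n : ℝ) : Bd ε k m n = Bd ε k n m := by
  unfold Bd; rw [mul_comm m n, add_comm m n]; ring

theorem exists_M {ε : ℝ} (hε : 0 < ε) : ∃ M : ℕ, 1536 ≤ M ∧ 384 * √M ≤ M / 2 ∧ 385 * (384 / (M:ℝ)) ^ ε ≤ 1 / 2 := by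
  have h1 : Filter.Tendsto (fun M : ℕ => 385 * (384 / (M:ℝ)) ^ ε) Filter.atTop (nhds (385 * (0:ℝ) ^ ε)) := by
    apply Filter.Tendsto.const_mul
    apply Filter.Tendsto.rpow_const
    · exact tendsto_const_div_atTop_nhds_zero_nat 384
    · right; exact hε.le
  rw [Real.zero_rpow hε.ne', mul_zero] at h1
  have h2 := h1.eventually (gt_mem_nhds (show (0:ℝ) < 1/2 by norm_num))
  obtain ⟨M, hM⟩ := (h2.and (Filter.eventually_ge_atTop 1000000)).exists
  refine ⟨M, by omega, ?_, hM.1.le⟩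
  have h3 : (1000000:ℝ) ≤ M := by exact_mod_cast hM.2
  have h4 : (768:ℝ) ≤ √M := by
    apply Real.le_sqrt_of_sq_le; linarith
  have h5 := Real.mul_self_sqrt (show (0:ℝ) ≤ M by positivity)
  nlinarith

theorem sum_sqrt (M : ℕ) (c : ℕ → ℕ) (n : ℝ) (h : ∑ j ∈ range M, (c j : ℝ) ≤ n) :
    ∑ j ∈ range M, √(c j : ℝ) ≤ √M * √n := by
  rw [← Real.sqrt_mul (by positivity)]
  apply Real.le_sqrt_of_sq_le
  have := sq_sum_le_card_mul_sum_sq (s := range M) (f := fun j => √(c j : ℝ))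
  simp only [Real.sq_sqrt (Nat.cast_nonneg _), card_range] at this
  refine this.trans ?_
  gcongr

theorem rud_analytic {ε k m n 𝒦 : ℝ} (hε : 0 < ε) (hk : 1 ≤ k) (hm : 1 ≤ m) (hmn : m ≤ n) (M : ℕ)
    (hM : 1536 ≤ M) (hM1 : 384 * √M ≤ M / 2) (hM2 : 385 * (384 / (M:ℝ)) ^ ε ≤ 1 / 2)
    (h𝒦 : 2 * (5 * √(48 * M) + 2) ≤ 𝒦) (d : ℝ) (hd0 : 0 ≤ d) (hd : d ^ 2 ≤ 48 * m / M)
    (a c : ℕ → ℕ) (ha : ∀ j, (a j : ℝ) ≤ 384 * m / M) (hc : ∑ j ∈ range M, (c j : ℝ) ≤ n) (I : ℝ)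
    (hI : I ≤ n * (M * d) + M * (4 * d * m) + (k + 1) * n + ∑ j ∈ range M, 𝒦 * Bd ε k (a j) (c j)) :
    I ≤ 𝒦 * Bd ε k m n := by
  have hMpos : (0:ℝ) < M := by exact_mod_cast (by omega : 0 < M)
  have hM' : (1536:ℝ) ≤ M := by exact_mod_cast hM
  have hn : 1 ≤ n := hm.trans hmn
  have hMd : M * d ≤ √(48 * M) * √m := by
    rw [← Real.sqrt_mul (by positivity)]
    apply Real.le_sqrt_of_sq_le
    calc (M * d)^2 = M^2 * d^2 := by ring
      _ ≤ M^2 * (48 * m / M) := by gcongr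
      _ = 48 * M * m := by field_simp
  have h1 : n * (M * d) ≤ √(48 * M) * (n * √m) := by
    calc n * (M*d) ≤ n * (√(48 * M) * √m) := by gcongr
      _ = _ := by ring
  have h2 : M * (4 * d * m) ≤ 4 * √(48 * M) * (m * √n) := by
    calc M * (4*d*m) = 4 * (M * d) * m := by ring
      _ ≤ 4 * (√(48 * M) * √m) * m := by gcongr
      _ ≤ 4 * (√(48 * M) * √n) * m := by gcongr
      _ = _ := by ring
  have hmn1 : 1 ≤ (m * n) ^ ε := Real.one_le_rpow (by nlinarith) hε.le
  have h3 : (k + 1) * n ≤ 2 * (k * (m + n) * (m * n) ^ ε) := by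
    calc (k+1) * n ≤ (2 * k) * (m + n) := by gcongr <;> linarith
      _ = 2 * (k * (m + n)) * 1 := by ring
      _ ≤ 2 * (k * (m + n)) * (m * n) ^ ε := by gcongr
      _ = _ := by ring
  have hcn : ∀ j ∈ range M, (c j : ℝ) ≤ n := fun j hj =>
    (Finset.single_le_sum (f := fun j => (c j : ℝ)) (fun i _ => Nat.cast_nonneg _) hj).trans hc
  have s1 : ∑ j ∈ range M, (a j : ℝ) * √(c j) ≤ 1/2 * (m * √n) := by
    calc _ ≤ ∑ j ∈ range M, 384 * m / M * √(c j) := by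
          apply Finset.sum_le_sum; intro j _; gcongr; exact ha j
      _ = 384 * m / M * ∑ j ∈ range M, √(c j) := by rw [Finset.mul_sum]
      _ ≤ 384 * m / M * (√M * √n) := by gcongr; exact sum_sqrt M c n hc
      _ = (384 * √M) * (m * √n) / M := by ring
      _ ≤ (M/2) * (m * √n) / M := by gcongr
      _ = _ := by field_simp
  have s2 : ∑ j ∈ range M, (c j : ℝ) * √(a j) ≤ 1/2 * (n * √m) := by
    have : ∀ j, √(a j : ℝ) ≤ 1/2 * √m := by
      intro j
      rw [show (1/2:ℝ) = √(1/4) by rw [show (1/4:ℝ) = (1/2)^2 by norm_num, Real.sqrt_sq (by norm_num)],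
        ← Real.sqrt_mul (by norm_num)]
      apply Real.sqrt_le_sqrt
      refine (ha j).trans ?_
      rw [div_le_iff₀ hMpos]
      nlinarith
    calc _ ≤ ∑ j ∈ range M, (c j : ℝ) * (1/2 * √m) := by
          apply Finset.sum_le_sum; intro j _; gcongr; exact this j
      _ = (∑ j ∈ range M, (c j : ℝ)) * (1/2 * √m) := by rw [Finset.sum_mul]
      _ ≤ n * (1/2 * √m) := by gcongr
      _ = _ := by ring
  have s3 : ∑ j ∈ range M, k * ((a j : ℝ) + c j) * ((a j : ℝ) * c j) ^ ε ≤ 1/2 * (k * (m + n) * (m * n) ^ ε) := by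
    have hp : ∀ j ∈ range M, ((a j : ℝ) * c j) ^ ε ≤ (384 / (M:ℝ)) ^ ε * (m * n) ^ ε := by
      intro j hj
      rw [← Real.mul_rpow (by positivity) (by positivity)]
      apply Real.rpow_le_rpow (by positivity) _ hε.le
      calc (a j : ℝ) * c j ≤ (384 * m / M) * n := by
            gcongr
            · exact ha j
            · exact hcn j hj
        _ = _ := by ring
    have hsum : ∑ j ∈ range M, ((a j : ℝ) + c j) ≤ 385 * (m + n) := by
      rw [Finset.sum_add_distrib]
      have : ∑ j ∈ range M, (a j : ℝ) ≤ 384 * m := by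
        calc _ ≤ ∑ j ∈ range M, 384 * m / (M:ℝ) := Finset.sum_le_sum fun j _ => ha j
          _ = 384 * m := by simp; field_simp
      linarith
    calc _ ≤ ∑ j ∈ range M, k * ((a j : ℝ) + c j) * ((384 / (M:ℝ)) ^ ε * (m * n) ^ ε) := by
          apply Finset.sum_le_sum; intro j hj; gcongr; exact hp j hj
      _ = (∑ j ∈ range M, ((a j : ℝ) + c j)) * (k * ((384 / (M:ℝ)) ^ ε * (m * n) ^ ε)) := by
          rw [Finset.sum_mul]; apply Finset.sum_congr rfl; intro j _; ring
      _ ≤ (385 * (m + n)) * (k * ((384 / (M:ℝ)) ^ ε * (m * n) ^ ε)) := by gcongr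
      _ = (385 * (384 / (M:ℝ)) ^ ε) * (k * (m + n) * (m * n) ^ ε) := by ring
      _ ≤ _ := by gcongr
  have s4 : ∑ j ∈ range M, 𝒦 * Bd ε k (a j) (c j) ≤ 𝒦 * (1/2 * Bd ε k m n) := by
    rw [← Finset.mul_sum]
    have : 0 ≤ 𝒦 := le_trans (by positivity) h𝒦
    gcongr
    unfold Bd
    rw [Finset.sum_add_distrib, Finset.sum_add_distrib]
    linarith
  have h4 : n * (M * d) + M * (4 * d * m) + (k + 1) * n ≤ (5 * √(48 * M) + 2) * Bd ε k m n := by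
    unfold Bd
    have e1 : 0 ≤ m * √n := by positivity
    have e2 : 0 ≤ n * √m := by positivity
    have e3 : 0 ≤ k * (m + n) * (m * n) ^ ε := by positivity
    have e4 : 0 ≤ √(48 * (M:ℝ)) := by positivity
    nlinarith [mul_nonneg e4 e1, mul_nonneg e4 e2, mul_nonneg e4 e3]
  have h5 : (5 * √(48 * M) + 2) * Bd ε k m n ≤ (𝒦/2) * Bd ε k m n := by
    have : 0 ≤ Bd ε k m n := by unfold Bd; positivity
    gcongr
    linarith
  linarith

theorem rudnev_good {ε : ℝ} (hε : 0 < ε) : ∃ 𝒦 : ℝ, 0 < 𝒦 ∧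
    ∀ (K : Type) [Field K] [Infinite K] (p : ℕ) [Fact p.Prime] [CharP K p] (k : ℕ), 1 ≤ k →
    ∀ s : ℕ, ∀ P R : Finset (Tri K), P.card + R.card = s → Good P R k → min P.card R.card ≤ p ^ 2 →
      (inc P R : ℝ) ≤ 𝒦 * Bd ε k P.card R.card := by
  obtain ⟨M, hM, hM1, hM2⟩ := exists_M hε
  refine ⟨2 * (5 * √(48 * M) + 2) + √M, by positivity, ?_⟩
  intro K _ _ p _ _ k hk s
  induction s using Nat.strong_induction_on with
  | _ s ih =>
    set 𝒦 := 2 * (5 * √(48 * M) + 2) + √M with h𝒦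
    have key : ∀ P R : Finset (Tri K), P.card + R.card = s → Good P R k → P.card ≤ R.card → P.card ≤ p ^ 2 →
        (inc P R : ℝ) ≤ 𝒦 * Bd ε k P.card R.card := by
      intro P R hs hg hPR hp
      by_cases hPM : P.card < M
      · have h1 : (inc P R : ℝ) ≤ P.card * R.card := by exact_mod_cast inc_le P R
        have h2 : (P.card : ℝ) ≤ √M * √P.card := by
          rw [← Real.sqrt_mul (by positivity)]
          apply Real.le_sqrt_of_sq_le
          rw [sq]
          have : (P.card : ℝ) ≤ M := by exact_mod_cast hPM.le
          gcongr
        have h3 : (R.card : ℝ) * √P.card ≤ Bd ε k P.card R.card := by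
          unfold Bd
          have e1 : 0 ≤ (P.card : ℝ) * √R.card := by positivity
          have e3 : 0 ≤ (k : ℝ) * (P.card + R.card) * (P.card * R.card : ℝ) ^ ε := by positivity
          linarith
        calc (inc P R : ℝ) ≤ P.card * R.card := h1
          _ ≤ (√M * √P.card) * R.card := by gcongr
          _ = √M * (R.card * √P.card) := by ring
          _ ≤ √M * Bd ε k P.card R.card := by gcongr
          _ ≤ 𝒦 * Bd ε k P.card R.card := by
            have : 0 ≤ Bd ε k P.card R.card := by unfold Bd; positivity
            gcongr
            rw [h𝒦]
            have : 0 ≤ √(48 * (M:ℝ)) := by positivity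
            linarith
      · push Not at hPM
        have hMpos : (0:ℝ) < M := by exact_mod_cast (by omega : 0 < M)
        set t := P.card / M + 1 with ht
        have htM : (t : ℝ) ≤ 2 * P.card / M := by
          rw [le_div_iff₀ hMpos]
          have h1 : P.card / M * M ≤ P.card := Nat.div_mul_le_self _ _
          have : t * M ≤ 2 * P.card := by rw [ht]; nlinarith
          exact_mod_cast this
        set d := Nat.sqrt (6 * t) + 1 with hd
        have hd1 : 6 * t ≤ d ^ 2 := by
          have := Nat.lt_succ_sqrt (6 * t)
          rw [Nat.succ_eq_add_one] at this
          nlinarith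
        have hd2 : d ^ 2 ≤ 24 * t := by
          have h1 := Nat.sqrt_le (6 * t)
          have h2 : 1 ≤ Nat.sqrt (6 * t) := by
            have h3 : 1 ≤ t := Nat.le_add_left _ _
            rw [Nat.le_sqrt]; omega
          rw [hd]
          nlinarith
        have hd3 : (d : ℝ) ^ 2 ≤ 48 * P.card / M := by
          calc (d : ℝ)^2 ≤ 24 * t := by exact_mod_cast hd2
            _ ≤ 24 * (2 * P.card / M) := by gcongr
            _ = _ := by ring
        have hM' : (1536:ℝ) ≤ M := by exact_mod_cast hM
        have hPpos : (1:ℝ) ≤ P.card := by exact_mod_cast (by omega : 1 ≤ P.card)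
        have hdp : d < p := by
          have h1 : (d:ℝ)^2 < (p:ℝ)^2 := by
            have h2 : (P.card : ℝ) ≤ (p:ℝ)^2 := by exact_mod_cast hp
            refine hd3.trans_lt ?_
            rw [div_lt_iff₀ hMpos]
            nlinarith
          exact_mod_cast lt_of_pow_lt_pow_left₀ 2 (by positivity) h1
        obtain ⟨P', R', hsub, hcs, hI⟩ := inc_split k M t d P R hg (by rw [ht, mul_comm]; exact Nat.lt_mul_div_succ _ (by omega)) hd1 hdp
        have ha : ∀ j, ((P' j).card : ℝ) ≤ 384 * P.card / M := by
          intro j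
          calc ((P' j).card : ℝ) ≤ 8 * (d:ℝ)^2 := by exact_mod_cast (hsub j).2.2
            _ ≤ 8 * (48 * P.card / M) := by gcongr
            _ = _ := by ring
        have hlt : ∀ j, (P' j).card < P.card := by
          intro j
          have : ((P' j).card : ℝ) < P.card := by
            refine (ha j).trans_lt ?_
            rw [div_lt_iff₀ hMpos]
            nlinarith
          exact_mod_cast this
        apply rud_analytic hε (by exact_mod_cast hk) hPpos (by exact_mod_cast hPR) M hM hM1 hM2
          (by rw [h𝒦]; have : 0 ≤ √(M:ℝ) := by positivity
              linarith) d (by positivity) hd3 (fun j => (P' j).card) (fun j => (R' j).card) ha (by exact_mod_cast hcs)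
        calc (inc P R : ℝ) ≤ ((R.card * (M * d) + M * (4 * d * P.card) + (k + 1) * R.card + ∑ j ∈ range M, inc (P' j) (R' j) : ℕ) : ℝ) := by exact_mod_cast hI
          _ = R.card * (M * d) + M * (4 * d * P.card) + (k + 1) * R.card + ∑ j ∈ range M, (inc (P' j) (R' j) : ℝ) := by push_cast; ring
          _ ≤ _ := by
            gcongr with j hj
            have h1 := Finset.card_le_card (hsub j).2.1
            have h2 := hlt j
            exact ih _ (by omega) (P' j) (R' j) rfl (hg.mono (hsub j).1 (hsub j).2.1) ((min_le_left _ _).trans (by omega))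
    intro P R hs hg hp
    rcases le_total P.card R.card with h | h
    · exact key P R hs hg h (by rwa [min_eq_left h] at hp)
    · rw [inc_symm, Bd_symm]
      exact key R P (by omega) hg.symm h (by rwa [min_eq_right h] at hp)
end Q9

namespace Q9

section gp
variable {K : Type*} [Field K]

def TP (s : K) (q : Tri K) : Tri K := (q.1, q.2.1, s * q.1 + s^2 * q.2.1 + s^3 * q.2.2)
def TR (s : K) (r : Tri K) : Tri K := (s^3 * r.1 + s^2, s^3 * r.2.1 - s, s^3 * r.2.2)

theorem perp_T {s : K} (hs : s ≠ 0) (q r : Tri K) : perp (TP s q) (TR s r) ↔ perp q r := by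
  unfold perp TP TR
  constructor
  · intro h
    apply mul_left_cancel₀ (pow_ne_zero 3 hs)
    linear_combination h
  · intro h
    linear_combination s^3 * h

theorem TP_surj {s : K} (hs : s ≠ 0) (q : Tri K) : ∃ q', TP s q' = q :=
  ⟨(q.1, q.2.1, (q.2.2 - s * q.1 - s^2 * q.2.1)/s^3), by
    refine Prod.ext rfl (Prod.ext rfl ?_)
    simp only [TP]; field_simp; ring⟩

theorem TR_surj {s : K} (hs : s ≠ 0) (q : Tri K) : ∃ q', TR s q' = q :=
  ⟨((q.1 - s^2)/s^3, (q.2.1 + s)/s^3, q.2.2/s^3), by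
    refine Prod.ext ?_ (Prod.ext ?_ ?_) <;> simp only [TR] <;> field_simp <;> ring⟩

theorem TP_inj {s : K} (hs : s ≠ 0) : Function.Injective (TP s) := by
  rintro ⟨a, b, c⟩ ⟨a', b', c'⟩ h
  simp only [TP, Prod.mk.injEq] at h
  obtain ⟨rfl, rfl, h⟩ := h
  have : c = c' := by
    apply mul_left_cancel₀ (pow_ne_zero 3 hs)
    linear_combination h
  rw [this]

theorem TR_inj {s : K} (hs : s ≠ 0) : Function.Injective (TR s) := by
  rintro ⟨a, b, c⟩ ⟨a', b', c'⟩ h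
  simp only [TR, Prod.mk.injEq] at h
  obtain ⟨h1, h2, h3⟩ := h
  have e1 : a = a' := by
    apply mul_left_cancel₀ (pow_ne_zero 3 hs); linear_combination h1
  have e2 : b = b' := by
    apply mul_left_cancel₀ (pow_ne_zero 3 hs); linear_combination h2
  have e3 : c = c' := by
    apply mul_left_cancel₀ (pow_ne_zero 3 hs); linear_combination h3
  rw [e1, e2, e3]

noncomputable def cub (a b c d : K) : Polynomial K := Polynomial.C a + Polynomial.C b * Polynomial.X +
  Polynomial.C c * Polynomial.X ^ 2 + Polynomial.C d * Polynomial.X ^ 3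

theorem cub_zero {a b c d : K} (h : cub a b c d = 0) : a = 0 ∧ b = 0 ∧ c = 0 ∧ d = 0 := by
  have h' : ∀ i, (cub a b c d).coeff i = 0 := fun i => by rw [h, Polynomial.coeff_zero]
  refine ⟨?_, ?_, ?_, ?_⟩
  · simpa [cub, Polynomial.coeff_X, Polynomial.coeff_X_pow, Polynomial.coeff_C] using h' 0
  · simpa [cub, Polynomial.coeff_X, Polynomial.coeff_X_pow, Polynomial.coeff_C] using h' 1
  · simpa [cub, Polynomial.coeff_X, Polynomial.coeff_X_pow, Polynomial.coeff_C] using h' 2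
  · simpa [cub, Polynomial.coeff_X, Polynomial.coeff_X_pow, Polynomial.coeff_C] using h' 3

theorem cub_eval (a b c d s : K) : (cub a b c d).eval s = a + b * s + c * s^2 + d * s^3 := by
  simp [cub]

open scoped Classical in
theorem genpos [Infinite K] (P : Finset (Tri K)) (k : ℕ)
    (hk : ∀ r₁ r₂ : Tri K, r₁ ≠ r₂ → (P.filter fun q => perp q r₁ ∧ perp q r₂).card ≤ k) :
    ∃ s : K, s ≠ 0 ∧ Good (P.image (TP s)) (P.image (TR s)) k := by
  let f : Option (Fin 3 × Tri K × Tri K) → Polynomial K := fun o => match o with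
    | none => Polynomial.X
    | some (0, q, r) => cub (-(r.1 * q.2.1 - q.1 * r.2.1)) (q.1 - r.1) (q.2.1 - r.2.1) (q.2.2 - r.2.2)
    | some (1, q, r) => cub (q.2.2 - r.2.2) (-(q.1 - r.1)) (-(q.2.1 - r.2.1)) (-(r.1 * q.2.1 - q.1 * r.2.1))
    | some (2, q, r) => cub q.1 0 (-1) (-r.1)
  let S : Finset (Option (Fin 3 × Tri K × Tri K)) :=
    insertNone (((Finset.univ : Finset (Fin 3)) ×ˢ (P ×ˢ P)).filter fun x => x.1 = 2 ∨ x.2.1 ≠ x.2.2)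
  have hne : ∀ q r : Tri K, q ≠ r → ¬ (q.1 - r.1 = 0 ∧ q.2.1 - r.2.1 = 0 ∧ q.2.2 - r.2.2 = 0) := by
    rintro q r h ⟨h1, h2, h3⟩
    exact h (Prod.ext (sub_eq_zero.1 h1) (Prod.ext (sub_eq_zero.1 h2) (sub_eq_zero.1 h3)))
  obtain ⟨s, hs⟩ := avoid S f (by
    intro i hi
    match i with
    | none => exact Polynomial.X_ne_zero
    | some (0, q, r) =>
      have hqr : q ≠ r := by simpa [S] using (Finset.mem_filter.1 (Finset.some_mem_insertNone.1 hi)).2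
      intro h0
      obtain ⟨_, h1, h2, h3⟩ := cub_zero h0
      exact hne q r hqr ⟨h1, h2, h3⟩
    | some (1, q, r) =>
      have hqr : q ≠ r := by simpa [S] using (Finset.mem_filter.1 (Finset.some_mem_insertNone.1 hi)).2
      intro h0
      obtain ⟨h1, h2, h3, _⟩ := cub_zero h0
      exact hne q r hqr ⟨neg_eq_zero.1 h2, neg_eq_zero.1 h3, h1⟩
    | some (2, q, r) =>
      intro h0
      obtain ⟨_, _, h3, _⟩ := cub_zero h0
      simp at h3)
  have hs0 : s ≠ 0 := by simpa [f] using hs none (by simp [S])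
  refine ⟨s, hs0, ?_, ?_, ?_, ?_, ?_⟩
  · simp only [Finset.mem_image]
    rintro _ ⟨q, hq, rfl⟩ _ ⟨r, hr, rfl⟩ hqr hp
    have hqr' : q ≠ r := fun h => hqr (by rw [h])
    have := hs (some (0, q, r)) (Finset.some_mem_insertNone.2 (Finset.mem_filter.2 (by simp [hq, hr, hqr'])))
    apply this
    simp only [f, cub_eval]
    unfold perp TP at hp
    simp only at hp
    linear_combination hp
  · simp only [Finset.mem_image]
    rintro _ ⟨q, hq, rfl⟩ _ ⟨r, hr, rfl⟩ hqr hp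
    have hqr' : q ≠ r := fun h => hqr (by rw [h])
    have := hs (some (1, q, r)) (Finset.some_mem_insertNone.2 (Finset.mem_filter.2 (by simp [hq, hr, hqr'])))
    apply this
    simp only [f, cub_eval]
    unfold perp TR at hp
    simp only at hp
    apply mul_left_cancel₀ (pow_ne_zero 3 hs0)
    linear_combination hp
  · simp only [Finset.mem_image]
    rintro _ ⟨q, hq, rfl⟩ _ ⟨r, hr, rfl⟩ hp
    have := hs (some (2, q, r)) (Finset.some_mem_insertNone.2 (Finset.mem_filter.2 (by simp [hq, hr])))
    apply this
    simp only [f, cub_eval]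
    unfold TP TR at hp
    simp only at hp
    linear_combination hp
  · intro r₁ r₂ hr
    obtain ⟨r₁, rfl⟩ := TR_surj hs0 r₁
    obtain ⟨r₂, rfl⟩ := TR_surj hs0 r₂
    rw [Finset.filter_image]
    refine Finset.card_image_le.trans ?_
    simp only [perp_T hs0]
    exact hk r₁ r₂ (fun h => hr (by rw [h]))
  · intro r₁ r₂ hr
    obtain ⟨r₁, rfl⟩ := TP_surj hs0 r₁
    obtain ⟨r₂, rfl⟩ := TP_surj hs0 r₂
    rw [Finset.filter_image]
    refine Finset.card_image_le.trans ?_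
    have : ∀ q r, perp (TR s q) (TP s r) ↔ perp q r := fun q r =>
      ⟨fun h => perp_symm ((perp_T hs0 _ _).1 (perp_symm h)), fun h => perp_symm ((perp_T hs0 _ _).2 (perp_symm h))⟩
    simp only [this]
    exact hk r₁ r₂ (fun h => hr (by rw [h]))

theorem inc_image {L : Type*} [Field L] (P : Finset (Tri K)) (f g : Tri K → Tri L) [DecidableEq (Tri L)]
    (hf : Function.Injective f) (hg : Function.Injective g)
    (h : ∀ q r, perp (f q) (g r) ↔ perp q r) : inc (P.image f) (P.image g) = inc P P := by
  classical
  unfold inc dg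
  rw [Finset.sum_image (fun _ _ _ _ h => hf h)]
  apply Finset.sum_congr rfl
  intro q _
  have : (P.image g).filter (fun r => perp (f q) r) = (P.filter fun r => perp q r).image g := by
    rw [Finset.filter_image]
    simp only [h]
  rw [this, Finset.card_image_of_injective _ hg]

end gp

abbrev Kb (p : ℕ) [Fact p.Prime] := AlgebraicClosure (ZMod p)

noncomputable def emb (p : ℕ) [Fact p.Prime] (q : Tri (ZMod p)) : Tri (Kb p) :=
  (algebraMap _ _ q.1, algebraMap _ _ q.2.1, algebraMap _ _ q.2.2)

open scoped Classical in
def kc (p : ℕ) [Fact p.Prime] (P : Finset (Tri (ZMod p))) (k : ℕ) : Prop :=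
  ∀ r₁ r₂ : Tri (Kb p), r₁ ≠ r₂ → (P.filter fun q => perp (emb p q) r₁ ∧ perp (emb p q) r₂).card ≤ k

theorem emb_inj (p : ℕ) [Fact p.Prime] : Function.Injective (emb p) := by
  have h0 : Function.Injective (algebraMap (ZMod p) (Kb p)) := (algebraMap (ZMod p) (Kb p)).injective
  rintro ⟨a, b, c⟩ ⟨a', b', c'⟩ h
  simp only [emb, Prod.mk.injEq] at h
  rw [h0 h.1, h0 h.2.1, h0 h.2.2]

theorem emb_perp (p : ℕ) [Fact p.Prime] (q r : Tri (ZMod p)) : perp (emb p q) (emb p r) ↔ perp q r := by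
  have h0 : Function.Injective (algebraMap (ZMod p) (Kb p)) := (algebraMap (ZMod p) (Kb p)).injective
  unfold perp emb
  simp only [← map_sub, ← map_mul]
  exact h0.eq_iff

theorem rudnev {ε : ℝ} (hε : 0 < ε) : ∃ 𝒦 : ℝ, 0 < 𝒦 ∧
    ∀ (p : ℕ) [Fact p.Prime] (k : ℕ), 1 ≤ k → ∀ P : Finset (Tri (ZMod p)), P.card ≤ p ^ 2 → kc p P k →
      (inc P P : ℝ) ≤ 𝒦 * (P.card * √P.card + k * P.card * (P.card : ℝ) ^ ε) := by
  classical
  obtain ⟨𝒦, h𝒦, H⟩ := rudnev_good (half_pos hε)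
  refine ⟨2 * 𝒦, by positivity, ?_⟩
  intro p _ k hk P hP hkc
  have : CharP (Kb p) p := charP_of_injective_algebraMap (algebraMap (ZMod p) (Kb p)).injective p
  have : Infinite (Kb p) := IsAlgClosed.instInfinite
  obtain ⟨s, hs, hgood⟩ := genpos (P.image (emb p)) k (by
    intro r₁ r₂ hr
    rw [Finset.filter_image]
    refine Finset.card_image_le.trans ?_
    convert hkc r₁ r₂ hr)
  have c1 : ((P.image (emb p)).image (TP s)).card = P.card := by
    rw [Finset.card_image_of_injective _ (TP_inj hs), Finset.card_image_of_injective _ (emb_inj p)]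
  have c2 : ((P.image (emb p)).image (TR s)).card = P.card := by
    rw [Finset.card_image_of_injective _ (TR_inj hs), Finset.card_image_of_injective _ (emb_inj p)]
  have h1 := H (Kb p) p k hk _ _ _ rfl hgood (by rw [c1, c2, min_self]; exact hP)
  rw [c1, c2, inc_image _ _ _ (TP_inj hs) (TR_inj hs) (perp_T hs),
    inc_image _ _ _ (emb_inj p) (emb_inj p) (emb_perp p)] at h1
  refine h1.trans (le_of_eq ?_)
  unfold Bd
  have : ((P.card : ℝ) * P.card) ^ (ε/2) = (P.card : ℝ) ^ ε := by
    rw [← sq, ← Real.rpow_natCast, ← Real.rpow_mul (by positivity)]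
    congr 1
    push_cast; ring
  rw [this]
  ring
end Q9

namespace Q9

def RudT (p N : ℕ) [Fact p.Prime] (T : ℝ) : Prop :=
  ∀ P : Finset (Tri (ZMod p)), P.card ≤ p ^ 2 → P.card ≤ N ^ 6 → ∀ k : ℕ, 1 ≤ k → kc p P k →
    (inc P P : ℝ) ≤ T * (P.card * √P.card + k * P.card)

theorem inc_card {K : Type*} [Field K] [DecidableEq K] (P R : Finset (Tri K)) [DecidablePred fun x : Tri K × Tri K => perp x.1 x.2] :
    inc P R = ((P ×ˢ R).filter fun x => perp x.1 x.2).card := by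
  classical
  rw [Finset.card_filter, Finset.sum_product]
  unfold inc dg
  apply Finset.sum_congr rfl
  intro q _
  rw [Finset.card_filter]
  apply Finset.sum_congr rfl
  intro r _
  simp only
  congr

section
variable {p : ℕ} [Fact p.Prime] (A : Finset (ZMod p))

def il (l : ZMod p × ZMod p) : ℕ := (A.filter fun c => l.1 * c + l.2 ∈ A).card

theorem il_le (l : ZMod p × ZMod p) : il A l ≤ A.card := Finset.card_filter_le _ _

theorem sum_il : ∑ l, il A l = p * A.card ^ 2 := by
  classical
  unfold il
  simp_rw [Finset.card_filter]
  rw [Finset.sum_comm]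
  have : ∀ c ∈ A, ∑ l : ZMod p × ZMod p, (if l.1 * c + l.2 ∈ A then 1 else 0) = p * A.card := by
    intro c _
    rw [← Finset.card_filter]
    have h1 : (Finset.univ ×ˢ A : Finset (ZMod p × ZMod p)).card = p * A.card := by
      rw [Finset.card_product, Finset.card_univ, ZMod.card]
    rw [← h1]
    apply Finset.card_bij' (fun l _ => (l.1, l.1 * c + l.2)) (fun x _ => (x.1, x.2 - x.1 * c))
    · intro l hl; simpa using hl
    · intro x hx; simpa using hx
    · intro l hl; simp
    · intro x hx; simp
  rw [Finset.sum_congr rfl this]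
  simp; ring

theorem sum_il_sq : ∑ l, il A l ^ 2 ≤ p * A.card ^ 2 + A.card ^ 4 := by
  classical
  have h1 : ∀ l, il A l ^ 2 = il A l + (A.offDiag.filter fun x => l.1 * x.1 + l.2 ∈ A ∧ l.1 * x.2 + l.2 ∈ A).card := by
    intro l
    have h2 : (A.offDiag.filter fun x => l.1 * x.1 + l.2 ∈ A ∧ l.1 * x.2 + l.2 ∈ A)
        = (A.filter fun c => l.1 * c + l.2 ∈ A).offDiag := by
      ext x; simp only [Finset.mem_filter, Finset.mem_offDiag]; tauto
    rw [h2, Finset.offDiag_card]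
    unfold il
    rw [sq]
    have := Nat.le_mul_self (A.filter fun c => l.1 * c + l.2 ∈ A).card
    omega
  simp_rw [h1]
  rw [Finset.sum_add_distrib, sum_il]
  apply Nat.add_le_add_left
  rw [← Finset.card_sigma]
  have h3 : A.card ^ 4 = ((A ×ˢ A) ×ˢ (A ×ˢ A)).card := by simp only [Finset.card_product]; ring
  rw [h3]
  apply Finset.card_le_card_of_injOn (fun x => (x.2, (x.1.1 * x.2.1 + x.1.2, x.1.1 * x.2.2 + x.1.2)))
  · intro x hx
    simp only [Finset.coe_sigma, Set.mem_sigma_iff, Finset.mem_coe, Finset.mem_filter, Finset.mem_offDiag] at hx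
    simp only [Finset.coe_product, Set.mem_prod, Finset.mem_coe]
    tauto
  · rintro ⟨⟨a, b⟩, ⟨c, c'⟩⟩ hx ⟨⟨a', b'⟩, ⟨d, d'⟩⟩ hy hxy
    simp only [Finset.coe_sigma, Set.mem_sigma_iff, Finset.mem_coe, Finset.mem_filter, Finset.mem_offDiag] at hx
    simp only [Prod.mk.injEq] at hxy
    obtain ⟨⟨rfl, rfl⟩, h1, h2⟩ := hxy
    have hne : c - c' ≠ 0 := sub_ne_zero.2 hx.2.1.2.2
    have e1 : a = a' := by
      apply mul_right_cancel₀ hne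
      linear_combination h1 - h2
    subst e1
    have e2 : b = b' := by linear_combination h1
    subst e2
    rfl

noncomputable def Lr (H : ℝ) : Finset (ZMod p × ZMod p) := by
  classical exact Finset.univ.filter fun l => H ≤ il A l

theorem mem_Lr {H : ℝ} {l} : l ∈ Lr A H ↔ H ≤ il A l := by simp [Lr]

theorem Lr_card_le (H : ℝ) (hH : 2 ≤ H) : (Lr A H).card ≤ A.card ^ 4 := by
  classical
  have h1 := sum_il_sq A
  have h2 := sum_il A
  have h3 : ∑ l, il A l + (Lr A H).card ≤ ∑ l, il A l ^ 2 := by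
    have : (Lr A H).card = ∑ l, if l ∈ Lr A H then 1 else 0 := by
      rw [← Finset.card_filter]; congr 1; ext; simp
    rw [this, ← Finset.sum_add_distrib]
    apply Finset.sum_le_sum
    intro l _
    split_ifs with h
    · rw [mem_Lr] at h
      have : 2 ≤ il A l := by exact_mod_cast hH.trans h
      nlinarith
    · nlinarith [Nat.le_mul_self (il A l)]
  omega

theorem vinh (H : ℝ) (hH : 2 * (A.card:ℝ) ^ 2 / p ≤ H) (hH0 : 0 ≤ H) : (Lr A H).card * H ^ 2 ≤ 4 * p * (A.card:ℝ) ^ 2 := by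
  classical
  have hp : (0:ℝ) < p := by exact_mod_cast (Fact.out : p.Prime).pos
  have h1 : (∑ l, (il A l : ℝ) ^ 2) ≤ p * (A.card:ℝ) ^ 2 + (A.card:ℝ) ^ 4 := by exact_mod_cast sum_il_sq A
  have h2 : (∑ l, (il A l : ℝ)) = p * (A.card:ℝ) ^ 2 := by exact_mod_cast sum_il A
  set e : ℝ := (A.card:ℝ) ^ 2 / p with he
  have hep : e * p = (A.card:ℝ) ^ 2 := by rw [he]; field_simp
  have hcard : ((Finset.univ : Finset (ZMod p × ZMod p)).card : ℝ) = p ^ 2 := by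
    rw [Finset.card_univ, Fintype.card_prod, ZMod.card]; push_cast; ring
  have h3 : ∑ l, ((il A l : ℝ) - e) ^ 2 ≤ p * (A.card:ℝ) ^ 2 := by
    have : ∀ l, ((il A l : ℝ) - e) ^ 2 = (il A l : ℝ)^2 - 2 * e * il A l + e ^ 2 := fun l => by ring
    simp_rw [this]
    rw [Finset.sum_add_distrib, Finset.sum_sub_distrib, ← Finset.mul_sum, h2, Finset.sum_const, nsmul_eq_mul, hcard]
    rw [← hep] at h1 ⊢
    have : (A.card:ℝ)^4 = (e * p)^2 := by rw [hep]; ring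
    nlinarith
  have h4 : (Lr A H).card * (H/2) ^ 2 ≤ ∑ l ∈ Lr A H, ((il A l : ℝ) - e) ^ 2 := by
    rw [← nsmul_eq_mul]
    apply Finset.card_nsmul_le_sum
    intro l hl
    rw [mem_Lr] at hl
    have : 2 * e ≤ H := by rw [he]; convert hH using 1; ring
    apply pow_le_pow_left₀ (by positivity)
    linarith
  have h5 : ∑ l ∈ Lr A H, ((il A l : ℝ) - e) ^ 2 ≤ ∑ l, ((il A l : ℝ) - e) ^ 2 :=
    Finset.sum_le_sum_of_subset_of_nonneg (Finset.subset_univ _) (fun _ _ _ => sq_nonneg _)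
  nlinarith

/-- lines through a common point -/
theorem pencil (H : ℝ) (hH : 2 ≤ H) (w u : Kb p) (S : Finset (ZMod p × ZMod p)) (hS : S ⊆ Lr A H)
    (hl : ∀ l ∈ S, algebraMap (ZMod p) (Kb p) l.2 + algebraMap (ZMod p) (Kb p) l.1 * w = u) :
    (S.card : ℝ) ≤ 2 * (A.card:ℝ)^2 / H := by
  classical
  have h0 : Function.Injective (algebraMap (ZMod p) (Kb p)) := (algebraMap (ZMod p) (Kb p)).injective
  set ι := algebraMap (ZMod p) (Kb p)
  let Q := fun l : ZMod p × ZMod p => (A.filter fun c => l.1 * c + l.2 ∈ A).filter fun c => ι c ≠ w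
  have h1 : ∀ l ∈ S, H / 2 ≤ (Q l).card := by
    intro l hlS
    have h2 := (mem_Lr A).1 (hS hlS)
    have h3 : il A l ≤ (Q l).card + 1 := by
      unfold il
      rw [← Finset.card_filter_add_card_filter_not (s := A.filter fun c => l.1 * c + l.2 ∈ A) (fun c => ι c ≠ w)]
      apply Nat.add_le_add_left
      rw [Finset.card_le_one]
      intro a ha b hb
      simp only [Finset.mem_filter, not_not] at ha hb
      exact h0 (ha.2.trans hb.2.symm)
    have h4 : (il A l : ℝ) ≤ (Q l).card + 1 := by exact_mod_cast h3
    linarith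
  have h2 : (S.sigma Q).card ≤ (A ×ˢ A).card := by
    apply Finset.card_le_card_of_injOn (fun x => (x.2, x.1.1 * x.2 + x.1.2))
    · intro x hx
      simp only [Finset.coe_sigma, Set.mem_sigma_iff, Finset.mem_coe, Q, Finset.mem_filter] at hx
      simp only [Finset.coe_product, Set.mem_prod, Finset.mem_coe]
      tauto
    · rintro ⟨⟨a, b⟩, c⟩ hx ⟨⟨a', b'⟩, c'⟩ hy hxy
      simp only [Finset.coe_sigma, Set.mem_sigma_iff, Finset.mem_coe, Q, Finset.mem_filter] at hx hy
      simp only [Prod.mk.injEq] at hxy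
      obtain ⟨rfl, h1⟩ := hxy
      have e1 := hl _ hx.1
      have e2 := hl _ hy.1
      have e3 : ι a * ι c + ι b = ι a' * ι c + ι b' := by
        rw [← map_mul, ← map_mul, ← map_add, ← map_add, h1]
      have e4 : a = a' := by
        apply h0
        apply mul_right_cancel₀ (sub_ne_zero.2 hx.2.2)
        simp only at e1 e2
        linear_combination e3 - e1 + e2
      subst e4
      have e5 : b = b' := by linear_combination h1
      subst e5
      rfl
  rw [Finset.card_sigma, Finset.card_product] at h2
  have h3 : (S.card : ℝ) * (H/2) ≤ ∑ l ∈ S, ((Q l).card : ℝ) := by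
    rw [← nsmul_eq_mul]
    exact Finset.card_nsmul_le_sum _ _ _ h1
  have h4 : ∑ l ∈ S, ((Q l).card : ℝ) ≤ (A.card:ℝ) * A.card := by exact_mod_cast h2
  rw [le_div_iff₀ (by linarith)]
  nlinarith

def PL (L : Finset (ZMod p × ZMod p)) : Finset (Tri (ZMod p)) :=
  (L ×ˢ A).image fun x => (x.1.1, x.2, x.1.2)

theorem PL_card (L : Finset (ZMod p × ZMod p)) : (PL A L).card = L.card * A.card := by
  unfold PL
  rw [Finset.card_image_of_injective, Finset.card_product]
  rintro ⟨⟨a, b⟩, c⟩ ⟨⟨a', b'⟩, c'⟩ h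
  simp only [Prod.mk.injEq] at h ⊢
  tauto

theorem mem_PL {L : Finset (ZMod p × ZMod p)} {q : Tri (ZMod p)} : q ∈ PL A L ↔ (q.1, q.2.2) ∈ L ∧ q.2.1 ∈ A := by
  unfold PL
  simp only [Finset.mem_image, Finset.mem_product]
  constructor
  · rintro ⟨x, ⟨h1, h2⟩, rfl⟩; exact ⟨h1, h2⟩
  · intro h; exact ⟨((q.1, q.2.2), q.2.1), h, rfl⟩

theorem PL_kc (H : ℝ) (hH : 2 ≤ H) (L : Finset (ZMod p × ZMod p)) (hL : L ⊆ Lr A H) :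
    kc p (PL A L) (A.card + ⌊2 * (A.card:ℝ)^2 / H⌋₊) := by
  classical
  intro r₁ r₂ hr
  have h0 : Function.Injective (algebraMap (ZMod p) (Kb p)) := (algebraMap (ZMod p) (Kb p)).injective
  set ι := algebraMap (ZMod p) (Kb p) with hι
  by_cases ha : r₁.1 = r₂.1
  · have hb : r₁.2.1 - r₂.2.1 ≠ 0 ∨ ∀ q : Tri (ZMod p), ¬ (perp (emb p q) r₁ ∧ perp (emb p q) r₂) := by
      by_contra hcon
      push Not at hcon
      obtain ⟨hb, q, h1, h2⟩ := hcon
      unfold perp at h1 h2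
      apply hr
      have hb' := sub_eq_zero.1 hb
      refine Prod.ext ha (Prod.ext hb' ?_)
      rw [ha, hb'] at h1
      linear_combination h2 - h1
    rcases hb with hb | hb
    · refine le_trans ?_ (Nat.le_add_right _ _)
      apply Finset.card_le_card_of_injOn (fun q => q.2.1)
      · intro q hq
        exact ((mem_PL A).1 (Finset.mem_filter.1 (Finset.mem_coe.1 hq)).1).2
      · rintro ⟨a, b, c⟩ hq ⟨a', b', c'⟩ hq' h
        obtain ⟨_, h1, h2⟩ := Finset.mem_filter.1 (Finset.mem_coe.1 hq)
        obtain ⟨_, h1', h2'⟩ := Finset.mem_filter.1 (Finset.mem_coe.1 hq')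
        simp only at h
        subst h
        simp only [perp, emb] at h1 h2 h1' h2'
        rw [← ha] at h2 h2'
        have e : a = a' := by
          apply h0
          apply mul_right_cancel₀ hb
          linear_combination h1 - h2 - h1' + h2'
        subst e
        have e : c = c' := by
          apply h0
          linear_combination h1 - h1'
        rw [e]
    · rw [Finset.filter_false_of_mem (fun q _ => hb q)]
      simp
  · have ha' := sub_ne_zero.2 ha
    refine le_trans ?_ (Nat.le_add_left _ _)
    apply Nat.le_floor
    set S := (PL A L).filter (fun q => perp (emb p q) r₁ ∧ perp (emb p q) r₂) with hS
    have hc : S.card = (S.image fun q => (q.1, q.2.2)).card := by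
      symm
      apply Finset.card_image_of_injOn
      rintro ⟨a, b, c⟩ hq ⟨a', b', c'⟩ hq' h
      obtain ⟨_, h1, h2⟩ := Finset.mem_filter.1 (Finset.mem_coe.1 hq)
      obtain ⟨_, h1', h2'⟩ := Finset.mem_filter.1 (Finset.mem_coe.1 hq')
      simp only [Prod.mk.injEq] at h
      obtain ⟨rfl, rfl⟩ := h
      simp only [perp, emb] at h1 h2 h1' h2'
      have : b = b' := by
        apply h0
        apply mul_left_cancel₀ ha'
        linear_combination -h1 + h2 + h1' - h2'
      rw [this]
    rw [hc]
    set κ := (r₁.1 - r₂.1)⁻¹ with hκ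
    have hκ1 : (r₁.1 - r₂.1) * κ = 1 := mul_inv_cancel₀ ha'
    apply pencil A H hH (r₁.2.1 - r₁.1 * κ * (r₁.2.1 - r₂.2.1)) (r₁.2.2 + r₁.1 * κ * (r₂.2.2 - r₁.2.2))
    · intro l hl
      obtain ⟨q, hq, rfl⟩ := Finset.mem_image.1 hl
      exact hL ((mem_PL A).1 (Finset.mem_filter.1 hq).1).1
    · intro l hl
      obtain ⟨q, hq, rfl⟩ := Finset.mem_image.1 hl
      obtain ⟨_, h1, h2⟩ := Finset.mem_filter.1 hq
      simp only [perp, emb] at h1 h2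
      simp only [← hι] at h1 h2 ⊢
      linear_combination h1 - r₁.1 * κ * (h1 - h2) - r₁.1 * ι q.2.1 * hκ1

theorem PL_inc (H : ℝ) (hH : 0 ≤ H) (L : Finset (ZMod p × ZMod p)) (hL : L ⊆ Lr A H) :
    (H * L.card) ^ 2 ≤ A.card * (inc (PL A L) (PL A L) : ℝ) := by
  classical
  let B := fun a : ZMod p => (L ×ˢ A).filter fun x => x.1.1 * x.2 + x.1.2 = a
  have h1 : ∑ l ∈ L, il A l = ∑ a ∈ A, (B a).card := by
    simp only [B, il]
    simp_rw [Finset.card_filter, Finset.sum_product]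
    symm
    rw [Finset.sum_comm]
    apply Finset.sum_congr rfl
    intro l _
    rw [Finset.sum_comm]
    apply Finset.sum_congr rfl
    intro c _
    rw [Finset.sum_ite_eq]
  have h2 : H * L.card ≤ ∑ a ∈ A, ((B a).card : ℝ) := by
    have : ∑ a ∈ A, ((B a).card : ℝ) = ∑ l ∈ L, (il A l : ℝ) := by exact_mod_cast h1.symm
    rw [this, mul_comm, ← nsmul_eq_mul]
    apply Finset.card_nsmul_le_sum
    intro l hl
    exact (mem_Lr A).1 (hL hl)
  have h3 : ∑ a ∈ A, (B a).card ^ 2 ≤ inc (PL A L) (PL A L) := by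
    rw [inc_card]
    have : ∑ a ∈ A, (B a).card ^ 2 = (A.sigma fun a => B a ×ˢ B a).card := by
      rw [Finset.card_sigma]
      apply Finset.sum_congr rfl
      intro a _
      rw [Finset.card_product, sq]
    rw [this]
    apply Finset.card_le_card_of_injOn (fun x => ((x.2.1.1.1, x.2.2.2, x.2.1.1.2), (x.2.2.1.1, x.2.1.2, x.2.2.1.2)))
    · rintro ⟨a, ⟨⟨l, b⟩, c⟩, ⟨⟨l', b'⟩, c'⟩⟩ hx
      simp only [Finset.coe_sigma, Set.mem_sigma_iff, Finset.mem_coe, B, Finset.mem_filter, Finset.mem_product] at hx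
      refine Finset.mem_coe.2 (Finset.mem_filter.2 ⟨Finset.mem_product.2 ⟨(mem_PL A).2 ⟨hx.2.1.1.1, hx.2.2.1.2⟩, (mem_PL A).2 ⟨hx.2.2.1.1, hx.2.1.1.2⟩⟩, ?_⟩)
      simp only [perp]
      linear_combination hx.2.1.2 - hx.2.2.2
    · rintro ⟨a, ⟨⟨l, b⟩, c⟩, ⟨⟨l', b'⟩, c'⟩⟩ hx ⟨a2, ⟨⟨l2, b2⟩, c2⟩, ⟨⟨l2', b2'⟩, c2'⟩⟩ hy hxy
      simp only [Finset.coe_sigma, Set.mem_sigma_iff, Finset.mem_coe, B, Finset.mem_filter, Finset.mem_product] at hx hy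
      simp only [Prod.mk.injEq] at hxy
      obtain ⟨⟨rfl, rfl, rfl⟩, rfl, rfl, rfl⟩ := hxy
      have : a = a2 := hx.2.1.2.symm.trans hy.2.1.2
      subst this
      rfl
  have h4 := sq_sum_le_card_mul_sum_sq (s := A) (f := fun a => ((B a).card : ℝ))
  have h5 : ∑ a ∈ A, ((B a).card : ℝ) ^ 2 ≤ (inc (PL A L) (PL A L) : ℝ) := by exact_mod_cast h3
  calc (H * L.card) ^ 2 ≤ (∑ a ∈ A, ((B a).card : ℝ))^2 := by gcongr
    _ ≤ A.card * ∑ a ∈ A, ((B a).card : ℝ) ^ 2 := h4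
    _ ≤ _ := by gcongr
end
end Q9

namespace Q9

theorem dyadic {α : Type*} [DecidableEq α] (S : Finset α) (f : α → ℕ) (g : α → ℝ) (B : ℕ) (T : ℝ)
    (hT : (Nat.log 2 B + 1 : ℝ) ≤ T) (hf : ∀ s ∈ S, 1 ≤ f s) (hB : ∀ s ∈ S, f s ≤ B) (hg : ∀ s ∈ S, 0 ≤ g s) :
    ∃ j : ℕ, ∑ s ∈ S, g s ≤ T * ∑ s ∈ S with (2 ^ j ≤ f s ∧ f s < 2 ^ (j + 1)), g s := by
  obtain ⟨j, _, hj⟩ := Finset.exists_max_image (range (Nat.log 2 B + 1))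
    (fun j => ∑ s ∈ S with Nat.log 2 (f s) = j, g s) ⟨0, by simp⟩
  refine ⟨j, ?_⟩
  have h1 : ∑ s ∈ S with (2 ^ j ≤ f s ∧ f s < 2 ^ (j + 1)), g s = ∑ s ∈ S with Nat.log 2 (f s) = j, g s := by
    apply Finset.sum_congr _ (fun _ _ => rfl)
    apply Finset.filter_congr
    intro s hs
    rw [Nat.log_eq_iff (Or.inr ⟨by norm_num, by have := hf s hs; omega⟩)]
  rw [h1, ← Finset.sum_fiberwise_of_maps_to (t := range (Nat.log 2 B + 1)) (g := fun s => Nat.log 2 (f s))]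
  · refine (Finset.sum_le_card_nsmul _ _ _ hj).trans ?_
    rw [nsmul_eq_mul, card_range]
    have : 0 ≤ ∑ s ∈ S with Nat.log 2 (f s) = j, g s := Finset.sum_nonneg fun s hs => hg s (Finset.mem_filter.1 hs).1
    push_cast
    gcongr
  · intro s hs
    have := Nat.log_mono_right (b := 2) (hB s hs)
    simp; omega

section
variable {p : ℕ} [Fact p.Prime] (A : Finset (ZMod p)) {T : ℝ}

theorem line_small (hR : RudT p A.card T) (hT : 1 ≤ T) (hA : 1 ≤ A.card) (H : ℝ) (hH : 2 ≤ H)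
    (L : Finset (ZMod p × ZMod p)) (hL : L ⊆ Lr A H) (hLp : L.card * A.card ≤ p ^ 2) :
    L.card * H ^ 4 ≤ 6 * T ^ 2 * (A.card : ℝ) ^ 5 := by
  rcases L.eq_empty_or_nonempty with rfl | ⟨l, hl⟩
  · simp; positivity
  have hHN : H ≤ A.card := ((mem_Lr A).1 (hL hl)).trans (by exact_mod_cast il_le A l)
  have hL4 : L.card ≤ A.card ^ 4 := (Finset.card_le_card hL).trans (Lr_card_le A H hH)
  have h6 : L.card * A.card ≤ A.card ^ 6 := by
    calc L.card * A.card ≤ A.card ^ 4 * A.card := Nat.mul_le_mul_right _ hL4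
      _ = A.card ^ 5 := by ring
      _ ≤ _ := Nat.pow_le_pow_right hA (by norm_num)
  have h1 := hR (PL A L) (by rw [PL_card]; exact hLp) (by rw [PL_card]; exact h6) _ (by omega) (PL_kc A H hH L hL)
  have h2 := PL_inc A H (by linarith) L hL
  rw [PL_card] at h1
  have hx : (1:ℝ) ≤ L.card := by exact_mod_cast Finset.card_pos.2 ⟨l, hl⟩
  have hN : (1:ℝ) ≤ A.card := by exact_mod_cast hA
  set k := (A.card + ⌊2 * (A.card:ℝ)^2 / H⌋₊) with hk
  set x : ℝ := (L.card : ℝ)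
  set N : ℝ := (A.card : ℝ)
  have hkN : (k : ℝ) * H ≤ 3 * N ^ 2 := by
    have e1 : (⌊2 * N^2 / H⌋₊ : ℝ) ≤ 2 * N ^ 2 / H := Nat.floor_le (by positivity)
    have e2 : (k:ℝ) ≤ N + 2 * N^2/H := by rw [hk]; push_cast; linarith
    calc (k:ℝ) * H ≤ (N + 2 * N^2/H) * H := by gcongr
      _ = N * H + 2 * N^2 := by field_simp
      _ ≤ _ := by nlinarith
  push_cast at h1
  set y := √(x * N) with hy
  have hy0 : 0 ≤ y := Real.sqrt_nonneg _
  have hy2 : y ^ 2 = x * N := Real.sq_sqrt (by positivity)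
  have h3 : H ^ 2 * x ≤ T * N ^ 2 * (y + k) := by
    have e : H ^ 2 * x * x ≤ T * N ^ 2 * (y + k) * x := by
      calc H^2 * x * x = (H * x)^2 := by ring
        _ ≤ N * (T * (x * N * y + k * (x * N))) := h2.trans (by gcongr)
        _ = _ := by ring
    exact le_of_mul_le_mul_right e (by linarith)
  have hk0 : (0:ℝ) ≤ k := Nat.cast_nonneg k
  rcases le_total (k:ℝ) y with h | h
  · have h4 : H^2 * x ≤ 2 * T * N^2 * y := by
      refine h3.trans ?_
      calc T * N ^ 2 * (y + k) ≤ T * N^2 * (y + y) := by gcongr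
        _ = _ := by ring
    have h5 : x * H^4 * x ≤ 6 * T^2 * N^5 * x := by
      calc x * H^4 * x = (H^2 * x)^2 := by ring
        _ ≤ (2 * T * N^2 * y)^2 := by gcongr
        _ = 4 * T^2 * N^4 * y^2 := by ring
        _ = 4 * T^2 * N^5 * x := by rw [hy2]; ring
        _ ≤ _ := by gcongr; norm_num
    exact le_of_mul_le_mul_right h5 (by linarith)
  · have h4 : H^2 * x ≤ 2 * T * N^2 * k := by
      refine h3.trans ?_
      calc T * N ^ 2 * (y + k) ≤ T * N^2 * (k + k) := by gcongr
        _ = _ := by ring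
    calc x * H^4 = (H^2 * x) * H * H := by ring
      _ ≤ (2 * T * N^2 * k) * H * H := by gcongr
      _ = 2 * T * N^2 * (k * H) * H := by ring
      _ ≤ 2 * T * N^2 * (3 * N^2) * N := by gcongr
      _ = 6 * T * N^5 := by ring
      _ ≤ 6 * T^2 * N^5 := by gcongr; nlinarith

theorem line_bound (hR : RudT p A.card T) (hT : 1 ≤ T) (hA : 1 ≤ A.card) (H : ℝ) (hH : 2 ≤ H)
    (hHp : 2 * (A.card:ℝ) ^ 2 / p ≤ H) :
    (Lr A H).card * H ^ 4 ≤ 16 * T ^ 2 * (A.card : ℝ) ^ 5 := by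
  by_cases hc : (Lr A H).card * A.card ≤ p ^ 2
  · refine (line_small A hR hT hA H hH _ subset_rfl hc).trans ?_
    gcongr; norm_num
  push Not at hc
  have hAp : A.card ≤ p := by
    have := Finset.card_le_univ A
    rwa [ZMod.card] at this
  have hp1 : 1 ≤ p := (Fact.out : p.Prime).pos
  obtain ⟨L, hL, hLc⟩ := Finset.exists_subset_card_eq (s := Lr A H) (n := p ^ 2 / A.card)
    (Nat.div_le_of_le_mul (by rw [mul_comm]; exact hc.le))
  have h1 := line_small A hR hT hA H hH L hL (by rw [hLc]; exact Nat.div_mul_le_self _ _)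
  have h2 : p ^ 2 ≤ 2 * (L.card * A.card) := by
    rw [hLc]
    have e1 := Nat.div_add_mod (p^2) A.card
    have e2 := Nat.mod_lt (p^2) (show A.card > 0 by omega)
    have e3 : 1 ≤ p^2 / A.card := by
      rw [Nat.one_le_div_iff (by omega)]; nlinarith
    nlinarith
  have h2' : (p:ℝ)^2 ≤ 2 * (L.card * A.card) := by exact_mod_cast h2
  have hN : (1:ℝ) ≤ A.card := by exact_mod_cast hA
  have hV := vinh A H hHp (by linarith)
  have hp0 : (1:ℝ) ≤ p := by exact_mod_cast hp1
  set N : ℝ := (A.card : ℝ)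
  have h3 : (p * H^2) ≤ 4 * T * N^3 := by
    apply le_of_sq_le_sq _ (by positivity)
    calc (p * H^2)^2 = (p:ℝ)^2 * H^4 := by ring
      _ ≤ (2 * (L.card * N)) * H^4 := by gcongr
      _ = 2 * N * (L.card * H^4) := by ring
      _ ≤ 2 * N * (6 * T^2 * N^5) := by gcongr
      _ = 12 * (T^2 * N^6) := by ring
      _ ≤ 16 * (T^2 * N^6) := by gcongr; norm_num
      _ = _ := by ring
  calc ((Lr A H).card : ℝ) * H^4 = ((Lr A H).card * H^2) * H^2 := by ring
    _ ≤ (4 * p * N^2) * H^2 := by gcongr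
    _ = 4 * N^2 * (p * H^2) := by ring
    _ ≤ 4 * N^2 * (4 * T * N^3) := by gcongr
    _ = 16 * T * N^5 := by ring
    _ ≤ _ := by gcongr; nlinarith

def qf (l : ZMod p) : ℕ :=
  ((A.offDiag ×ˢ A.offDiag).filter fun x => x.1.1 - x.1.2 = l * (x.2.1 - x.2.2)).card

theorem qf_le (l : ZMod p) : qf A l ≤ A.card ^ 4 := by
  unfold qf
  refine (Finset.card_filter_le _ _).trans ?_
  rw [Finset.card_product, Finset.offDiag_card]
  calc (A.card * A.card - A.card) * (A.card * A.card - A.card) ≤ (A.card * A.card) * (A.card * A.card) := by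
        gcongr <;> exact Nat.sub_le _ _
    _ = _ := by ring

theorem sum_qf : ∑ l, qf A l ≤ A.card ^ 4 := by
  classical
  unfold qf
  rw [← Finset.card_sigma]
  have h3 : A.card ^ 4 = ((A ×ˢ A) ×ˢ (A ×ˢ A)).card := by simp only [Finset.card_product]; ring
  rw [h3]
  apply Finset.card_le_card_of_injOn (fun x => x.2)
  · rintro ⟨l, x, y⟩ hx
    simp only [Finset.coe_sigma, Set.mem_sigma_iff, Finset.mem_coe, Finset.mem_filter, Finset.mem_product, Finset.mem_offDiag] at hx
    simp only [Finset.coe_product, Set.mem_prod, Finset.mem_coe]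
    tauto
  · rintro ⟨l, x, y⟩ hx ⟨l', x', y'⟩ hx' h
    simp only [Finset.coe_sigma, Set.mem_sigma_iff, Finset.mem_coe, Finset.mem_filter, Finset.mem_product, Finset.mem_offDiag] at hx hx'
    simp only [Prod.mk.injEq] at h
    obtain ⟨rfl, rfl⟩ := h
    have : l = l' := by
      apply mul_right_cancel₀ (sub_ne_zero.2 hx.2.1.2.2.2)
      rw [← hx.2.2, ← hx'.2.2]
    subst this
    rfl

theorem sum_il_row (l : ZMod p) : ∑ b, il A (l, b) = A.card ^ 2 := by
  classical
  unfold il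
  simp_rw [Finset.card_filter]
  rw [Finset.sum_comm]
  have : ∀ c ∈ A, ∑ b : ZMod p, (if l * c + b ∈ A then 1 else 0) = A.card := by
    intro c _
    rw [← Finset.card_filter]
    apply Finset.card_bij' (fun b _ => l * c + b) (fun x _ => x - l * c)
    · intro l hl; simpa using hl
    · intro x hx; simpa using hx
    · intro l hl; simp
    · intro x hx; simp
  rw [Finset.sum_congr rfl this]
  simp; ring

theorem qf_le_il (l : ZMod p) : qf A l ≤ ∑ b, il A (l, b) ^ 2 := by
  classical
  have : ∑ b, il A (l, b) ^ 2 = (Finset.univ.sigma fun b => (A.filter fun c => l * c + b ∈ A) ×ˢ (A.filter fun c => l * c + b ∈ A)).card := by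
    rw [Finset.card_sigma]
    apply Finset.sum_congr rfl
    intro b _
    rw [Finset.card_product, sq]; rfl
  rw [this]
  unfold qf
  apply Finset.card_le_card_of_injOn (fun x => ⟨x.1.1 - l * x.2.1, x.2⟩)
  · rintro ⟨⟨a, b⟩, ⟨c, d⟩⟩ hx
    simp only [Finset.mem_coe, Finset.mem_filter, Finset.mem_product, Finset.mem_offDiag] at hx
    simp only [Finset.coe_sigma, Set.mem_sigma_iff, Finset.mem_coe, Finset.mem_filter, Finset.mem_product, Finset.mem_univ, true_and]
    obtain ⟨⟨h1, h2⟩, h3⟩ := hx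
    have e1 : l * c + (a - l * c) = a := by ring
    have e2 : l * d + (a - l * c) = b := by linear_combination h3
    rw [e1, e2]
    tauto
  · rintro ⟨⟨a, b⟩, ⟨c, d⟩⟩ hx ⟨⟨a', b'⟩, ⟨c', d'⟩⟩ hx' h
    simp only [Finset.mem_coe, Finset.mem_filter, Finset.mem_product, Finset.mem_offDiag] at hx hx'
    simp only [Sigma.mk.injEq, heq_eq_eq, Prod.mk.injEq] at h
    obtain ⟨h1, rfl, rfl⟩ := h
    have e1 : a = a' := by linear_combination h1
    subst e1
    have e2 : b = b' := by linear_combination hx'.2 - hx.2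
    rw [e2]

noncomputable def XK (K : ℝ) : Finset (ZMod p) := by
  classical exact Finset.univ.filter fun l => l ≠ 0 ∧ K ≤ qf A l

theorem mem_XK {K : ℝ} {l : ZMod p} : l ∈ XK A K ↔ l ≠ 0 ∧ K ≤ qf A l := by simp [XK]

theorem XK_first (K : ℝ) : (XK A K).card * K ≤ (A.card : ℝ) ^ 4 := by
  have h1 : (XK A K).card * K ≤ ∑ l ∈ XK A K, (qf A l : ℝ) := by
    rw [← nsmul_eq_mul]
    exact Finset.card_nsmul_le_sum _ _ _ fun l hl => ((mem_XK A).1 hl).2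
  have h2 : ∑ l ∈ XK A K, (qf A l : ℝ) ≤ ∑ l, (qf A l : ℝ) :=
    Finset.sum_le_sum_of_subset_of_nonneg (Finset.subset_univ _) (fun _ _ _ => by positivity)
  have h3 : ∑ l, (qf A l : ℝ) ≤ (A.card : ℝ)^4 := by exact_mod_cast sum_qf A
  linarith

theorem XK_third (hR : RudT p A.card T) (hT : (Nat.log 2 (A.card ^ 4) + 1 : ℝ) ≤ T) (hA : 1 ≤ A.card)
    (hAp : A.card ^ 3 ≤ p ^ 2) (K : ℝ) (hK : 0 < K) :
    (XK A K).card * K ^ 3 ≤ 2048 * T ^ 3 * (A.card : ℝ) ^ 9 := by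
  classical
  have hT1 : 1 ≤ T := le_trans (by simp) hT
  have hN : (1:ℝ) ≤ A.card := by exact_mod_cast hA
  have hp0 : (0:ℝ) < p := by exact_mod_cast (Fact.out : p.Prime).pos
  have hAp' : (A.card:ℝ) ^ 3 ≤ (p:ℝ) ^ 2 := by exact_mod_cast hAp
  have hfirst := XK_first A K
  by_cases c1 : K * p ≤ 8 * (A.card:ℝ) ^ 4
  · set N : ℝ := (A.card : ℝ)
    have e : (XK A K).card * K ^ 3 * (p:ℝ)^2 ≤ 2048 * T ^ 3 * N ^ 9 * (p:ℝ)^2 := by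
      calc (XK A K).card * K ^ 3 * (p:ℝ)^2 = ((XK A K).card * K) * (K * p)^2 := by ring
        _ ≤ N^4 * (8 * N^4)^2 := by gcongr
        _ = 64 * 1 * N^9 * N^3 := by ring
        _ ≤ 2048 * T^3 * N^9 * (p:ℝ)^2 := by
          gcongr
          · norm_num
          · exact one_le_pow₀ hT1
    exact le_of_mul_le_mul_right e (by positivity)
  by_cases c2 : K ≤ 8 * (A.card:ℝ) ^ 2
  · set N : ℝ := (A.card : ℝ)
    calc (XK A K).card * K ^ 3 = ((XK A K).card * K) * K^2 := by ring
        _ ≤ N^4 * (8 * N^2)^2 := by gcongr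
        _ = 64 * 1 * N^8 := by ring
        _ ≤ 2048 * T^3 * N^9 := by
          gcongr
          · norm_num
          · exact one_le_pow₀ hT1
          · norm_num
  push Not at c1 c2
  set h : ℝ := K / (2 * (A.card:ℝ)^2) with hh
  have hh4 : 4 ≤ h := by rw [hh, le_div_iff₀ (by positivity)]; linarith
  have hhp : 4 * (A.card:ℝ)^2 / p ≤ h := by
    rw [hh, div_le_div_iff₀ hp0 (by positivity)]; nlinarith
  have hKh : K = h * (2 * (A.card:ℝ)^2) := by rw [hh]; field_simp
  clear_value h
  clear hh
  have hrow : ∀ l ∈ XK A K, K / 2 ≤ ∑ b with h ≤ il A (l, b), (il A (l, b) : ℝ) ^ 2 := by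
    intro l hl
    have h1 : K ≤ ∑ b, (il A (l, b) : ℝ) ^ 2 := ((mem_XK A).1 hl).2.trans (by exact_mod_cast qf_le_il A l)
    rw [← Finset.sum_filter_add_sum_filter_not Finset.univ (fun b => h ≤ il A (l, b))] at h1
    have h2 : ∑ b with ¬ h ≤ il A (l, b), (il A (l, b) : ℝ) ^ 2 ≤ K / 2 := by
      calc _ ≤ ∑ b with ¬ h ≤ il A (l, b), h * (il A (l, b) : ℝ) := by
            apply Finset.sum_le_sum
            intro b hb
            have := (Finset.mem_filter.1 hb).2
            push Not at this
            rw [sq]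
            gcongr
        _ ≤ ∑ b, h * (il A (l, b) : ℝ) :=
            Finset.sum_le_sum_of_subset_of_nonneg (Finset.subset_univ _) (fun _ _ _ => by positivity)
        _ = h * (A.card:ℝ)^2 := by
            rw [← Finset.mul_sum]
            congr 1
            exact_mod_cast sum_il_row A l
        _ = K / 2 := by rw [hKh]; ring
    linarith
  have hsum : (XK A K).card * (K/2) ≤ ∑ l ∈ Lr A h, (il A l : ℝ)^2 := by
    have e1 : (XK A K).card * (K/2) ≤ ∑ l ∈ XK A K, ∑ b with h ≤ il A (l, b), (il A (l, b) : ℝ) ^ 2 := by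
      rw [← nsmul_eq_mul]
      exact Finset.card_nsmul_le_sum _ _ _ hrow
    refine e1.trans ?_
    have e2 : ∑ l ∈ Lr A h, (il A l : ℝ)^2 = ∑ l, ∑ b with h ≤ il A (l, b), (il A (l, b) : ℝ) ^ 2 := by
      simp only [Lr, Finset.sum_filter]
      rw [Fintype.sum_prod_type]
    rw [e2]
    exact Finset.sum_le_sum_of_subset_of_nonneg (Finset.subset_univ _) (fun _ _ _ => Finset.sum_nonneg fun _ _ => by positivity)
  obtain ⟨j, hj⟩ := dyadic (Lr A h) (il A) (fun l => (il A l : ℝ)^2) (A.card ^ 4) T (by exact_mod_cast hT)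
    (by
      intro l hl
      have := (mem_Lr A).1 hl
      have : (1:ℝ) ≤ il A l := by linarith
      exact_mod_cast this)
    (by
      intro l _
      exact (il_le A l).trans (Nat.le_self_pow (by norm_num) _))
    (by intro l _; positivity)
  have hlev : ∑ l ∈ Lr A h with (2 ^ j ≤ il A l ∧ il A l < 2 ^ (j + 1)), (il A l : ℝ)^2 ≤ 256 * T^2 * (A.card:ℝ)^5 / h^2 := by
    set H : ℝ := 2 ^ j with hHdef
    have hH0 : 0 < H := by positivity
    set S := {l ∈ Lr A h | 2 ^ j ≤ il A l ∧ il A l < 2 ^ (j + 1)}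
    rcases S.eq_empty_or_nonempty with hS | ⟨l, hl⟩
    · rw [hS, Finset.sum_empty]; positivity
    obtain ⟨hl1, hl2⟩ := Finset.mem_filter.1 hl
    have hHh : h ≤ 2 * H := by
      have h1 := (mem_Lr A).1 hl1
      have h2 : (il A l : ℝ) < 2 ^ (j+1) := by exact_mod_cast hl2.2
      rw [pow_succ] at h2
      linarith
    have hb := line_bound A hR hT1 hA H (by linarith) (by
      have : 2 * (A.card:ℝ)^2/p = (4 * (A.card:ℝ)^2/p)/2 := by ring
      rw [this]; linarith)
    have hS1 : ∑ l ∈ S, (il A l : ℝ)^2 ≤ (Lr A H).card * (4 * H^2) := by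
      have hsub : S ⊆ Lr A H := by
        intro l hl
        rw [mem_Lr]
        rw [hHdef]; exact_mod_cast (Finset.mem_filter.1 hl).2.1
      refine (Finset.sum_le_card_nsmul S _ (4 * H^2) ?_).trans ?_
      · intro l hl
        have h2 : (il A l : ℝ) < 2 ^ (j+1) := by exact_mod_cast (Finset.mem_filter.1 hl).2.2
        rw [pow_succ] at h2
        have : (4 * H^2) = (H * 2)^2 := by ring
        rw [this]
        gcongr
      · rw [nsmul_eq_mul]
        have : (S.card : ℝ) ≤ (Lr A H).card := by exact_mod_cast Finset.card_le_card hsub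
        gcongr
    refine hS1.trans ?_
    rw [le_div_iff₀ (by positivity)]
    calc (Lr A H).card * (4 * H^2) * h^2 ≤ (Lr A H).card * (4 * H^2) * (2 * H)^2 := by gcongr
      _ = 16 * ((Lr A H).card * H^4) := by ring
      _ ≤ 16 * (16 * T^2 * (A.card:ℝ)^5) := by gcongr
      _ = _ := by ring
  have hfin : (XK A K).card * (K/2) ≤ T * (256 * T^2 * (A.card:ℝ)^5 / h^2) := by
    refine (hsum.trans hj).trans ?_
    gcongr
  rw [mul_div_assoc' T, le_div_iff₀ (by positivity)] at hfin
  have hK2 : K^2 = h^2 * (4 * (A.card:ℝ)^4) := by rw [hKh]; ring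
  calc (XK A K).card * K^3 = ((XK A K).card * (K/2) * h^2) * (8 * (A.card:ℝ)^4) := by
        rw [pow_succ K 2, hK2]; ring
    _ ≤ (T * (256 * T^2 * (A.card:ℝ)^5)) * (8 * (A.card:ℝ)^4) := by gcongr
    _ = _ := by ring

theorem M3_bound (hR : RudT p A.card T) (hT : (Nat.log 2 (A.card ^ 4) + 1 : ℝ) ≤ T) (hA : 1 ≤ A.card)
    (hAp : A.card ^ 3 ≤ p ^ 2) :
    ∑ l with l ≠ 0, (qf A l : ℝ) ^ 3 ≤ 2 ^ 14 * T ^ 4 * (A.card : ℝ) ^ 9 := by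
  classical
  have hT1 : 1 ≤ T := le_trans (by simp) hT
  have h0 : ∑ l with l ≠ 0, (qf A l : ℝ) ^ 3 = ∑ l with l ≠ 0 ∧ 1 ≤ qf A l, (qf A l : ℝ) ^ 3 := by
    symm
    apply Finset.sum_subset
    · intro l hl
      simp only [Finset.mem_filter, Finset.mem_univ, true_and] at hl ⊢
      exact hl.1
    · intro l hl hl'
      simp only [Finset.mem_filter, Finset.mem_univ, true_and, not_and] at hl hl'
      have : qf A l = 0 := by have := hl' hl; omega
      rw [this]; simp
  rw [h0]
  obtain ⟨j, hj⟩ := dyadic (Finset.univ.filter fun l => l ≠ 0 ∧ 1 ≤ qf A l) (qf A) (fun l => (qf A l : ℝ)^3) (A.card ^ 4) T (by exact_mod_cast hT)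
    (fun l hl => (Finset.mem_filter.1 hl).2.2) (fun l _ => qf_le A l) (fun l _ => by positivity)
  refine hj.trans ?_
  have h1 := XK_third A hR hT hA hAp (2^j) (by positivity)
  set S := {l ∈ Finset.univ.filter fun l => l ≠ 0 ∧ 1 ≤ qf A l | 2 ^ j ≤ qf A l ∧ qf A l < 2 ^ (j + 1)} with hS
  have h2 : ∑ l ∈ S, (qf A l : ℝ)^3 ≤ (XK A (2^j)).card * (8 * (2^j)^3) := by
    have hsub : S ⊆ XK A (2^j) := by
      intro l hl
      obtain ⟨h1, h2⟩ := Finset.mem_filter.1 hl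
      rw [mem_XK]
      exact ⟨(Finset.mem_filter.1 h1).2.1, by exact_mod_cast h2.1⟩
    refine (Finset.sum_le_card_nsmul S _ (8 * (2^j)^3) ?_).trans ?_
    · intro l hl
      have h2 : (qf A l : ℝ) < 2 ^ (j+1) := by exact_mod_cast (Finset.mem_filter.1 hl).2.2
      rw [pow_succ] at h2
      have : (8 * (2^j)^3 : ℝ) = (2^j * 2)^3 := by ring
      rw [this]
      gcongr
    · rw [nsmul_eq_mul]
      have : (S.card : ℝ) ≤ (XK A (2^j)).card := by exact_mod_cast Finset.card_le_card hsub
      gcongr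
  calc T * ∑ l ∈ S, (qf A l : ℝ)^3 ≤ T * ((XK A (2^j)).card * (8 * (2^j)^3)) := by gcongr
    _ = 8 * T * ((XK A (2^j)).card * (2^j)^3) := by ring
    _ ≤ 8 * T * (2048 * T^3 * (A.card:ℝ)^9) := by gcongr
    _ = _ := by ring
end
end Q9

namespace Q9

section
variable {G : Type*} [CommGroup G] [Fintype G] (n : G → ℝ)

def Q (l : G) : ℝ := ∑ m, n (l * m) * n m

def dL (Λ : Finset G) (y : G) : ℝ := ∑ l ∈ Λ, n (l * y)

theorem sum_div_right (f : G → ℝ) (l : G) : ∑ x, f (x / l) = ∑ x, f x :=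
  Equiv.sum_comp (Equiv.divRight l) f

theorem sum_div_left (f : G → ℝ) (l : G) : ∑ x, f (l / x) = ∑ x, f x :=
  Equiv.sum_comp (Equiv.divLeft l) f

theorem sum_mul_right (f : G → ℝ) (l : G) : ∑ x, f (x * l) = ∑ x, f x :=
  Equiv.sum_comp (Equiv.mulRight l) f

theorem Q_div (x y : G) : ∑ m, n (m / x) * n (m / y) = Q n (y / x) := by
  unfold Q
  rw [← sum_div_right (fun m => n (y / x * m) * n m) y]
  apply Finset.sum_congr rfl
  intro m _
  congr 2
  rw [div_mul_div_comm, mul_comm y m, mul_div_mul_right_eq_div]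

theorem Q_div' (x y : G) : ∑ m, n (x / m) * n (y / m) = Q n (x / y) := by
  unfold Q
  rw [← sum_div_left (fun m => n (x / y * m) * n m) y]
  apply Finset.sum_congr rfl
  intro m _
  congr 2
  rw [div_mul_div_cancel]

theorem sum_nnQ (h : G → ℝ) : ∑ x, ∑ y, n x * n y * h (x / y) = ∑ l, Q n l * h l := by
  unfold Q
  simp_rw [Finset.sum_mul]
  rw [Finset.sum_comm]
  conv_rhs => rw [Finset.sum_comm]
  apply Finset.sum_congr rfl
  intro y _
  rw [← sum_mul_right (fun x => n x * n y * h (x / y)) y]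
  apply Finset.sum_congr rfl
  intro m _
  simp

theorem comb [DecidableEq G] (hn : ∀ x, 0 ≤ n x) (Λ Y : Finset G) (g M3 E2 S : ℝ) (hg : 0 < g)
    (hY : ∀ y ∈ Y, g ≤ dL n Λ y) (hY2 : ∀ y ∈ Y, dL n Λ y ≤ 2 * g)
    (hM3 : M3 = ∑ l, Q n l ^ 3) (hM30 : 0 < M3) (hE2 : E2 = ∑ l₁ ∈ Λ, ∑ l₂ ∈ Λ, Q n (l₂ / l₁))
    (hS : ∑ x, n x ≤ S) (hS0 : 0 < S * Λ.card) :
    ((g ^ 2 * ∑ y ∈ Y, n y) ^ 2) ^ 3 ≤ 16 * g * M3 ^ 2 * E2 * (S * Λ.card) ^ 3 := by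
  have hQ0 : ∀ l, 0 ≤ Q n l := fun l => Finset.sum_nonneg fun m _ => mul_nonneg (hn _) (hn _)
  have hd0 : ∀ y, 0 ≤ dL n Λ y := fun l => Finset.sum_nonneg fun m _ => hn _
  have hE20 : 0 ≤ E2 := by rw [hE2]; exact Finset.sum_nonneg fun _ _ => Finset.sum_nonneg fun _ _ => hQ0 _
  let f : G → ℝ := fun y => if y ∈ Y then n y else 0
  have hf0 : ∀ y, 0 ≤ f y := fun y => by simp only [f]; split_ifs; exacts [hn y, le_rfl]
  have hfn : ∀ y, f y ≤ n y := fun y => by simp only [f]; split_ifs; exacts [le_rfl, hn y]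
  let W : ℝ := ∑ x, n x * ∑ l₁ ∈ Λ, ∑ l₂ ∈ Λ, f (x / l₁) * f (x / l₂) * Q n (l₂ / l₁)
  let r : G → G → ℝ := fun x ν => ∑ l ∈ Λ, f (x / l) * n (ν * (x / l))
  have hr2 : ∀ x, ∑ ν, r x ν ^ 2 = ∑ l₁ ∈ Λ, ∑ l₂ ∈ Λ, f (x / l₁) * f (x / l₂) * Q n (l₂ / l₁) := by
    intro x
    simp only [r, sq]
    simp_rw [Finset.sum_mul_sum]
    rw [Finset.sum_comm]
    apply Finset.sum_congr rfl
    intro l₁ _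
    rw [Finset.sum_comm]
    apply Finset.sum_congr rfl
    intro l₂ _
    rw [← Q_div, Finset.mul_sum]
    conv_rhs => rw [← sum_mul_right _ x]
    apply Finset.sum_congr rfl
    intro ν _
    rw [mul_div_assoc, mul_div_assoc]
    ring
  have hWr : W = ∑ x, ∑ ν, n x * r x ν ^ 2 := by
    simp only [W]
    apply Finset.sum_congr rfl
    intro x _
    rw [← hr2, Finset.mul_sum]
  have hsum : ∑ x, ∑ ν ∈ Λ, n x * r x ν = ∑ y, f y * dL n Λ y ^ 2 := by
    have e1 : ∀ x, ∑ ν ∈ Λ, n x * r x ν = ∑ l ∈ Λ, n x * (f (x / l) * dL n Λ (x / l)) := by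
      intro x
      rw [← Finset.mul_sum, ← Finset.mul_sum]
      congr 1
      simp only [r]
      rw [Finset.sum_comm]
      apply Finset.sum_congr rfl
      intro l _
      unfold dL
      rw [Finset.mul_sum]
    simp_rw [e1]
    rw [Finset.sum_comm]
    have e2 : ∀ l ∈ Λ, ∑ x, n x * (f (x / l) * dL n Λ (x / l)) = ∑ y, n (l * y) * (f y * dL n Λ y) := by
      intro l _
      rw [← sum_mul_right _ l]
      apply Finset.sum_congr rfl
      intro y _
      rw [mul_div_cancel_right, mul_comm y l]
    rw [Finset.sum_congr rfl e2, Finset.sum_comm]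
    apply Finset.sum_congr rfl
    intro y _
    rw [← Finset.sum_mul]
    change dL n Λ y * _ = _
    ring
  have hlow : g ^ 2 * ∑ y ∈ Y, n y ≤ ∑ x, ∑ ν ∈ Λ, n x * r x ν := by
    rw [hsum]
    have : ∑ y, f y * dL n Λ y ^ 2 = ∑ y ∈ Y, n y * dL n Λ y ^ 2 := by
      simp only [f, ite_mul, zero_mul]
      rw [Finset.sum_ite_mem, Finset.univ_inter]
    rw [this, Finset.mul_sum]
    apply Finset.sum_le_sum
    intro y hy
    rw [mul_comm]
    have := hY y hy
    have := hn y
    gcongr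
  have hnY : 0 ≤ ∑ y ∈ Y, n y := Finset.sum_nonneg fun y _ => hn y
  have hCS : (g ^ 2 * ∑ y ∈ Y, n y) ^ 2 ≤ (S * Λ.card) * W := by
    calc (g ^ 2 * ∑ y ∈ Y, n y) ^ 2 ≤ (∑ x, ∑ ν ∈ Λ, n x * r x ν) ^ 2 := by gcongr
      _ = (∑ z ∈ Finset.univ ×ˢ Λ, √(n z.1) * (√(n z.1) * r z.1 z.2)) ^ 2 := by
        rw [Finset.sum_product]
        congr 1
        apply Finset.sum_congr rfl; intro x _
        apply Finset.sum_congr rfl; intro y _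
        rw [← mul_assoc, Real.mul_self_sqrt (hn x)]
      _ ≤ (∑ z ∈ Finset.univ ×ˢ Λ, √(n z.1) ^ 2) * (∑ z ∈ Finset.univ ×ˢ Λ, (√(n z.1) * r z.1 z.2) ^ 2) :=
        Finset.sum_mul_sq_le_sq_mul_sq _ _ _
      _ ≤ (S * Λ.card) * W := by
        apply mul_le_mul _ _ (Finset.sum_nonneg fun _ _ => sq_nonneg _) hS0.le
        · rw [Finset.sum_product]
          simp only [Real.sq_sqrt (hn _), Finset.sum_const, nsmul_eq_mul]
          rw [← Finset.mul_sum, mul_comm]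
          gcongr
        · rw [Finset.sum_product, hWr]
          apply Finset.sum_le_sum; intro x _
          simp only [mul_pow, Real.sq_sqrt (hn _)]
          exact Finset.sum_le_sum_of_subset_of_nonneg (Finset.subset_univ _) (fun _ _ _ => mul_nonneg (hn _) (sq_nonneg _))
  set B := S * Λ.card with hB
  set V := (g ^ 2 * ∑ y ∈ Y, n y) ^ 2 with hV
  have hV0 : 0 ≤ V := sq_nonneg _
  -- upper bound of W in terms of κ
  have hhigh : ∑ x, n x * ∑ l₁ ∈ Λ, ∑ l₂ ∈ Λ, f (x / l₁) * f (x / l₂) * Q n (l₂ / l₁) ^ 2 ≤ 2 * g * M3 := by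
    have e1 : ∀ x, n x * ∑ l₁ ∈ Λ, ∑ l₂ ∈ Λ, f (x / l₁) * f (x / l₂) * Q n (l₂ / l₁) ^ 2 ≤
        ∑ l₁ ∈ Λ, n x * f (x / l₁) * ∑ z, n z * Q n (x / l₁ / z) ^ 2 := by
      intro x
      rw [Finset.mul_sum]
      apply Finset.sum_le_sum
      intro l₁ _
      rw [mul_assoc]
      apply mul_le_mul_of_nonneg_left _ (hn x)
      rw [Finset.mul_sum]
      have : ∑ z, f (x / l₁) * (n z * Q n (x / l₁ / z) ^ 2) = ∑ l₂, f (x / l₁) * (n (x / l₂) * Q n (l₂ / l₁) ^ 2) := by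
        rw [← sum_div_left _ x]
        apply Finset.sum_congr rfl
        intro z _
        congr 4
        rw [div_div_div_comm, div_self', one_div, inv_div]
      rw [this]
      refine le_trans (Finset.sum_le_sum fun l₂ _ => ?_) (Finset.sum_le_sum_of_subset_of_nonneg (Finset.subset_univ Λ)
        (fun l _ _ => mul_nonneg (hf0 _) (mul_nonneg (hn _) (sq_nonneg _))))
      rw [mul_assoc]
      apply mul_le_mul_of_nonneg_left _ (hf0 _)
      exact mul_le_mul_of_nonneg_right (hfn _) (sq_nonneg _)
    refine (Finset.sum_le_sum fun x _ => e1 x).trans ?_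
    rw [Finset.sum_comm]
    have e2 : ∀ l ∈ Λ, ∑ x, n x * f (x / l) * ∑ z, n z * Q n (x / l / z) ^ 2
        = ∑ y, n (l * y) * (f y * ∑ z, n z * Q n (y / z) ^ 2) := by
      intro l _
      rw [← sum_mul_right _ l]
      apply Finset.sum_congr rfl
      intro y _
      rw [mul_div_cancel_right, mul_comm y l, mul_assoc]
    rw [Finset.sum_congr rfl e2, Finset.sum_comm]
    have e3 : ∀ y, ∑ l ∈ Λ, n (l * y) * (f y * ∑ z, n z * Q n (y / z) ^ 2) ≤
        2 * g * ∑ z, n y * n z * Q n (y / z) ^ 2 := by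
      intro y
      rw [← Finset.sum_mul]
      change dL n Λ y * _ ≤ _
      have hz : 0 ≤ ∑ z, n z * Q n (y / z) ^ 2 := Finset.sum_nonneg fun z _ => mul_nonneg (hn _) (sq_nonneg _)
      have : ∑ z, n y * n z * Q n (y / z) ^ 2 = n y * ∑ z, n z * Q n (y / z) ^ 2 := by
        rw [Finset.mul_sum]; apply Finset.sum_congr rfl; intro z _; ring
      rw [this]
      by_cases hy : y ∈ Y
      · have h1 := hY2 y hy
        have h2 := hfn y
        have h3 := hf0 y
        gcongr
      · have : f y = 0 := by simp [f, hy]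
        rw [this, zero_mul, mul_zero]
        have := hn y
        positivity
    refine (Finset.sum_le_sum fun y _ => e3 y).trans ?_
    rw [← Finset.mul_sum, sum_nnQ n (fun l => Q n l ^ 2), hM3]
    apply le_of_eq
    congr 1
    apply Finset.sum_congr rfl
    intro l _; ring
  let R : G → G → ℝ := fun l₁ l₂ => ∑ x, n x * f (x / l₁) * f (x / l₂)
  have hR0 : ∀ l₁ l₂, 0 ≤ R l₁ l₂ := fun l₁ l₂ => Finset.sum_nonneg fun x _ => mul_nonneg (mul_nonneg (hn _) (hf0 _)) (hf0 _)
  have hRR : ∑ l₁ ∈ Λ, ∑ l₂ ∈ Λ, R l₁ l₂ ^ 2 ≤ M3 := by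
    calc ∑ l₁ ∈ Λ, ∑ l₂ ∈ Λ, R l₁ l₂ ^ 2 ≤ ∑ l₁, ∑ l₂, R l₁ l₂ ^ 2 := by
          refine (Finset.sum_le_sum fun l₁ _ => Finset.sum_le_sum_of_subset_of_nonneg (Finset.subset_univ Λ) (fun _ _ _ => sq_nonneg _)).trans ?_
          exact Finset.sum_le_sum_of_subset_of_nonneg (Finset.subset_univ Λ) (fun _ _ _ => Finset.sum_nonneg fun _ _ => sq_nonneg _)
      _ ≤ ∑ l₁, ∑ l₂, (∑ x, n x * n (x / l₁) * n (x / l₂)) ^ 2 := by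
          apply Finset.sum_le_sum; intro l₁ _
          apply Finset.sum_le_sum; intro l₂ _
          apply pow_le_pow_left₀ (hR0 _ _)
          apply Finset.sum_le_sum; intro x _
          have := hn x
          have := hn (x / l₁)
          have := hf0 (x / l₂)
          exact mul_le_mul (mul_le_mul_of_nonneg_left (hfn _) (hn x)) (hfn _) (hf0 _) (by positivity)
      _ = ∑ x, ∑ y, n x * n y * Q n (x / y) ^ 2 := by
          have e : ∀ l₁ l₂ : G, (∑ x, n x * n (x / l₁) * n (x / l₂)) ^ 2 =
              ∑ x, ∑ y, n x * n y * ((n (x / l₁) * n (y / l₁)) * (n (x / l₂) * n (y / l₂))) := by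
            intro l₁ l₂
            rw [sq, Finset.sum_mul_sum]
            apply Finset.sum_congr rfl; intro x _
            apply Finset.sum_congr rfl; intro y _
            ring
          simp_rw [e]
          have e2 : ∀ x y : G, n x * n y * Q n (x / y) ^ 2 =
              ∑ l₁, ∑ l₂, n x * n y * ((n (x / l₁) * n (y / l₁)) * (n (x / l₂) * n (y / l₂))) := by
            intro x y
            rw [← Q_div', sq, Finset.sum_mul_sum, Finset.mul_sum]
            apply Finset.sum_congr rfl; intro x _
            rw [Finset.mul_sum]
          simp_rw [e2]
          calc _ = ∑ l₁, ∑ x, ∑ l₂, ∑ y, n x * n y * ((n (x / l₁) * n (y / l₁)) * (n (x / l₂) * n (y / l₂))) := by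
                apply Finset.sum_congr rfl; intro l₁ _
                rw [Finset.sum_comm]
            _ = ∑ x, ∑ l₁, ∑ y, ∑ l₂, n x * n y * ((n (x / l₁) * n (y / l₁)) * (n (x / l₂) * n (y / l₂))) := by
                rw [Finset.sum_comm]
                apply Finset.sum_congr rfl; intro x _
                apply Finset.sum_congr rfl; intro l₁ _
                rw [Finset.sum_comm]
            _ = _ := by
                apply Finset.sum_congr rfl; intro x _
                rw [Finset.sum_comm]
      _ = M3 := by
          rw [sum_nnQ n (fun l => Q n l ^ 2), hM3]
          apply Finset.sum_congr rfl
          intro l _; ring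
  have hWR : ∀ h : G → ℝ, ∑ x, n x * ∑ l₁ ∈ Λ, ∑ l₂ ∈ Λ, f (x / l₁) * f (x / l₂) * h (l₂ / l₁)
      = ∑ l₁ ∈ Λ, ∑ l₂ ∈ Λ, R l₁ l₂ * h (l₂ / l₁) := by
    intro h
    simp_rw [Finset.mul_sum]
    rw [Finset.sum_comm]
    apply Finset.sum_congr rfl; intro l₁ _
    rw [Finset.sum_comm]
    apply Finset.sum_congr rfl; intro l₂ _
    simp only [R]
    rw [Finset.sum_mul]
    apply Finset.sum_congr rfl; intro x _
    ring
  have hW1 : W = ∑ l₁ ∈ Λ, ∑ l₂ ∈ Λ, R l₁ l₂ * Q n (l₂ / l₁) := hWR (Q n)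
  rw [hWR (fun l => Q n l ^ 2)] at hhigh
  have hsplit : ∀ κ : ℝ, 0 < κ → W ≤ 2 * g * M3 / κ + √(M3 * (κ * E2)) := by
    intro κ hκ
    let m : G → ℝ := fun l => if Q n l < κ then Q n l else 0
    have hQm : ∀ l, Q n l ≤ Q n l ^ 2 / κ + m l := by
      intro l
      simp only [m]
      split_ifs with h
      · have := hQ0 l
        have : 0 ≤ Q n l ^ 2 / κ := by positivity
        linarith
      · push Not at h
        rw [add_zero, le_div_iff₀ hκ, sq]
        have := hQ0 l
        gcongr
    have hm2 : ∀ l, m l ^ 2 ≤ κ * Q n l := by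
      intro l
      simp only [m]
      have := hQ0 l
      split_ifs with h
      · rw [sq]; gcongr
      · simp; positivity
    have h1 : W ≤ (∑ l₁ ∈ Λ, ∑ l₂ ∈ Λ, R l₁ l₂ * Q n (l₂ / l₁) ^ 2) / κ + ∑ l₁ ∈ Λ, ∑ l₂ ∈ Λ, R l₁ l₂ * m (l₂ / l₁) := by
      rw [hW1, Finset.sum_div, ← Finset.sum_add_distrib]
      apply Finset.sum_le_sum; intro l₁ _
      rw [Finset.sum_div, ← Finset.sum_add_distrib]
      apply Finset.sum_le_sum; intro l₂ _
      rw [mul_div_assoc, ← mul_add]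
      exact mul_le_mul_of_nonneg_left (hQm _) (hR0 _ _)
    have h2 : ∑ l₁ ∈ Λ, ∑ l₂ ∈ Λ, R l₁ l₂ * m (l₂ / l₁) ≤ √(M3 * (κ * E2)) := by
      apply Real.le_sqrt_of_sq_le
      have := Finset.sum_mul_sq_le_sq_mul_sq (Λ ×ˢ Λ) (fun z => R z.1 z.2) (fun z => m (z.2 / z.1))
      rw [Finset.sum_product, Finset.sum_product, Finset.sum_product] at this
      refine this.trans ?_
      apply mul_le_mul hRR _ (Finset.sum_nonneg fun _ _ => Finset.sum_nonneg fun _ _ => sq_nonneg _) hM30.le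
      rw [hE2, Finset.mul_sum]
      apply Finset.sum_le_sum; intro l₁ _
      rw [Finset.mul_sum]
      exact Finset.sum_le_sum fun l₂ _ => hm2 _
    refine h1.trans (add_le_add ?_ h2)
    gcongr
  rcases hV0.eq_or_lt with h | hVpos
  · rw [← h]; simp; positivity
  set LB := V / B with hLB
  have hLB0 : 0 < LB := by positivity
  have hLW : LB ≤ W := by rw [hLB, div_le_iff₀ hS0]; linarith
  have h1 := hsplit (4 * g * M3 / LB) (by positivity)
  have h2 : 2 * g * M3 / (4 * g * M3 / LB) = LB / 2 := by field_simp; norm_num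
  rw [h2] at h1
  have h3 : LB / 2 ≤ √(M3 * (4 * g * M3 / LB * E2)) := by linarith
  rw [Real.le_sqrt (by positivity) (by positivity)] at h3
  have h4 : LB ^ 3 ≤ 16 * g * M3 ^ 2 * E2 := by
    have : M3 * (4 * g * M3 / LB * E2) = 4 * g * M3^2 * E2 / LB := by ring
    rw [this, le_div_iff₀ hLB0] at h3
    nlinarith
  have h5 : V = LB * B := by rw [hLB]; field_simp
  rw [h5, mul_pow]
  gcongr
end
end Q9

namespace Q9
section
variable {p : ℕ} [Fact p.Prime] (A : Finset (ZMod p)) {T : ℝ}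

def PX (L : Finset (ZMod p)ˣ) : Finset (Tri (ZMod p)) :=
  ((A ×ˢ A) ×ˢ L).image fun x => (x.1.1, (x.2 : ZMod p), x.1.2 * x.2)

theorem PX_card (L : Finset (ZMod p)ˣ) : (PX A L).card = A.card ^ 2 * L.card := by
  unfold PX
  rw [Finset.card_image_of_injective, Finset.card_product, Finset.card_product, sq]
  rintro ⟨⟨a, b⟩, c⟩ ⟨⟨a', b'⟩, c'⟩ h
  simp only [Prod.mk.injEq] at h ⊢
  obtain ⟨h1, h2, h3⟩ := h
  have h2' : c = c' := Units.ext h2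
  subst h2'
  exact ⟨⟨h1, by simpa using h3⟩, rfl⟩

theorem mem_PX {L : Finset (ZMod p)ˣ} {q : Tri (ZMod p)} (hq : q ∈ PX A L) :
    q.1 ∈ A ∧ q.2.1 ∈ L.image (fun x : (ZMod p)ˣ => (x : ZMod p)) := by
  unfold PX at hq
  simp only [Finset.mem_image, Finset.mem_product] at hq
  obtain ⟨x, ⟨⟨h1, h2⟩, h3⟩, rfl⟩ := hq
  exact ⟨h1, Finset.mem_image_of_mem _ h3⟩

theorem PX_kc (L : Finset (ZMod p)ˣ) : kc p (PX A L) (A.card + L.card) := by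
  classical
  intro r₁ r₂ hr
  have h0 : Function.Injective (algebraMap (ZMod p) (Kb p)) := (algebraMap (ZMod p) (Kb p)).injective
  set ι := algebraMap (ZMod p) (Kb p) with hι
  by_cases ha : r₁.1 = r₂.1
  · have hb : r₁.2.1 - r₂.2.1 ≠ 0 ∨ ∀ q : Tri (ZMod p), ¬ (perp (emb p q) r₁ ∧ perp (emb p q) r₂) := by
      by_contra hcon
      push Not at hcon
      obtain ⟨hb, q, h1, h2⟩ := hcon
      unfold perp at h1 h2
      apply hr
      have hb' := sub_eq_zero.1 hb
      refine Prod.ext ha (Prod.ext hb' ?_)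
      rw [ha, hb'] at h1
      linear_combination h2 - h1
    rcases hb with hb | hb
    · refine le_trans ?_ (Nat.le_add_left _ _)
      refine le_trans ?_ (Finset.card_image_le (s := L) (f := fun x : (ZMod p)ˣ => (x : ZMod p)))
      apply Finset.card_le_card_of_injOn (fun q => q.2.1)
      · intro q hq
        exact (mem_PX A (Finset.mem_filter.1 (Finset.mem_coe.1 hq)).1).2
      · rintro ⟨a, b, c⟩ hq ⟨a', b', c'⟩ hq' h
        obtain ⟨_, h1, h2⟩ := Finset.mem_filter.1 (Finset.mem_coe.1 hq)
        obtain ⟨_, h1', h2'⟩ := Finset.mem_filter.1 (Finset.mem_coe.1 hq')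
        simp only at h
        subst h
        simp only [perp, emb] at h1 h2 h1' h2'
        rw [← ha] at h2 h2'
        have e : a = a' := by
          apply h0
          apply mul_right_cancel₀ hb
          linear_combination h1 - h2 - h1' + h2'
        subst e
        have e : c = c' := by
          apply h0
          linear_combination h1 - h1'
        rw [e]
    · rw [Finset.filter_false_of_mem (fun q _ => hb q)]
      simp
  · have ha' := sub_ne_zero.2 ha
    refine le_trans ?_ (Nat.le_add_right _ _)
    apply Finset.card_le_card_of_injOn (fun q => q.1)
    · intro q hq
      exact (mem_PX A (Finset.mem_filter.1 (Finset.mem_coe.1 hq)).1).1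
    · rintro ⟨a, b, c⟩ hq ⟨a', b', c'⟩ hq' h
      obtain ⟨_, h1, h2⟩ := Finset.mem_filter.1 (Finset.mem_coe.1 hq)
      obtain ⟨_, h1', h2'⟩ := Finset.mem_filter.1 (Finset.mem_coe.1 hq')
      simp only at h
      subst h
      simp only [perp, emb] at h1 h2 h1' h2'
      have e : b = b' := by
        apply h0
        apply mul_left_cancel₀ ha'
        linear_combination -h1 + h2 + h1' - h2'
      subst e
      have e : c = c' := by
        apply h0
        linear_combination h1 - h1'
      rw [e]

theorem PX_inc (L : Finset (ZMod p)ˣ) :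
    ∑ l₁ ∈ L, ∑ l₂ ∈ L, qf A ((l₂ / l₁ : (ZMod p)ˣ) : ZMod p) ≤ inc (PX A L) (PX A L) := by
  classical
  rw [inc_card, ← Finset.sum_product']
  unfold qf
  rw [← Finset.card_sigma]
  apply Finset.card_le_card_of_injOn (fun x => ((x.2.2.2, (x.1.1 : ZMod p), x.2.1.1 * (x.1.1 : ZMod p)), (x.2.1.2, (x.1.2 : ZMod p), x.2.2.1 * (x.1.2 : ZMod p))))
  · rintro ⟨⟨l, m⟩, ⟨d, b⟩, ⟨c, a⟩⟩ hx
    simp only [Finset.coe_sigma, Set.mem_sigma_iff, Finset.mem_coe, Finset.mem_filter, Finset.mem_product, Finset.mem_offDiag] at hx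
    obtain ⟨⟨hl, hm⟩, ⟨⟨hd, hb, _⟩, hc, ha, _⟩, h⟩ := hx
    refine Finset.mem_coe.2 (Finset.mem_filter.2 ⟨Finset.mem_product.2 ⟨?_, ?_⟩, ?_⟩)
    · exact Finset.mem_image.2 ⟨((a, d), l), by simp [*], rfl⟩
    · exact Finset.mem_image.2 ⟨((b, c), m), by simp [*], rfl⟩
    · simp only [perp]
      have hl0 : (l : ZMod p) ≠ 0 := l.ne_zero
      rw [Units.val_div_eq_div_val] at h
      field_simp at h
      linear_combination h
  · rintro ⟨⟨l, m⟩, ⟨d, b⟩, ⟨c, a⟩⟩ hx ⟨⟨l', m'⟩, ⟨d', b'⟩, ⟨c', a'⟩⟩ hy hxy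
    simp only [Prod.mk.injEq] at hxy
    obtain ⟨⟨rfl, h1, h2⟩, rfl, h3, h4⟩ := hxy
    have h1' := Units.ext h1
    have h3' := Units.ext h3
    subst h1' h3'
    have e1 : d = d' := by simpa using h2
    have e2 : c = c' := by simpa using h4
    subst e1 e2
    rfl

theorem E2_bound (hR : RudT p A.card T) (hT : 1 ≤ T) (hA : 1 ≤ A.card) (L : Finset (ZMod p)ˣ) (hL1 : 1 ≤ L.card)
    (hL : L.card ≤ A.card ^ 2) (hLp : A.card ^ 2 * L.card ≤ p ^ 2) :
    ∑ l₁ ∈ L, ∑ l₂ ∈ L, (qf A ((l₂ / l₁ : (ZMod p)ˣ) : ZMod p) : ℝ) ≤ 4 * T * (A.card : ℝ) ^ 3 * L.card * √L.card := by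
  have h1 : ∑ l₁ ∈ L, ∑ l₂ ∈ L, (qf A ((l₂ / l₁ : (ZMod p)ˣ) : ZMod p) : ℝ) ≤ (inc (PX A L) (PX A L) : ℝ) := by
    exact_mod_cast PX_inc A L
  refine h1.trans ?_
  have h6 : A.card ^ 2 * L.card ≤ A.card ^ 6 := by
    calc A.card ^ 2 * L.card ≤ A.card ^ 2 * A.card ^ 2 := Nat.mul_le_mul_left _ hL
      _ = A.card ^ 4 := by ring
      _ ≤ _ := Nat.pow_le_pow_right hA (by norm_num)
  have h2 := hR (PX A L) (by rw [PX_card]; exact hLp) (by rw [PX_card]; exact h6) _ (by omega) (PX_kc A L)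
  rw [PX_card] at h2
  refine h2.trans ?_
  push_cast
  have hN : (1:ℝ) ≤ A.card := by exact_mod_cast hA
  have hx : (1:ℝ) ≤ L.card := by exact_mod_cast hL1
  have hxN : (L.card:ℝ) ≤ (A.card:ℝ)^2 := by exact_mod_cast hL
  set x : ℝ := (L.card : ℝ)
  set N : ℝ := (A.card : ℝ)
  clear_value x N
  rw [Real.sqrt_mul (by positivity), Real.sqrt_sq (by linarith)]
  obtain ⟨y, hy, rfl⟩ : ∃ y, 1 ≤ y ∧ x = y ^ 2 := ⟨√x, by rw [Real.one_le_sqrt]; exact hx, (Real.sq_sqrt (by linarith)).symm⟩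
  rw [Real.sqrt_sq (by linarith)]
  have hyN : y ≤ N := by nlinarith
  have h3 : N + y ^ 2 ≤ 2 * (N * y) := by nlinarith
  calc T * (N^2*y^2*(N*y) + (N+y^2)*(N^2*y^2)) ≤ T * (N^2*y^2*(N*y) + 2*(N*y)*(N^2*y^2)) := by gcongr
    _ = 3 * (T * N^3*y^2*y) := by ring
    _ ≤ _ := by
      have : 0 ≤ T * N^3*y^2*y := by positivity
      linarith
end
end Q9

namespace Q9

theorem num1 {T N x K g m M3 E2 y : ℝ} (hT : 1 ≤ T) (hN : 1 ≤ N) (hy : 1 ≤ y) (hxy : x = y ^ 2) (hK : 0 ≤ K) (hg : 0 < g)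
    (hm : 0 ≤ m) (hmN : m ≤ N ^ 2) (h1 : K * x ≤ 2 * T * (g * m)) (hM : 0 ≤ M3) (hM3 : M3 ≤ 2 ^ 14 * T ^ 4 * N ^ 9)
    (hE0 : 0 ≤ E2) (hE : E2 ≤ 4 * T * N ^ 3 * x * y)
    (h2 : ((g ^ 2 * m) ^ 2) ^ 3 ≤ 16 * g * M3 ^ 2 * E2 * (N ^ 2 * x) ^ 3) (h3 : x * K ^ 3 ≤ 2048 * T ^ 3 * N ^ 9) :
    K ^ 34 * x ^ 17 ≤ 2 ^ 134 * T ^ 52 * N ^ 110 := by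
  have hx : 0 < x := by rw [hxy]; positivity
  have a1 : g ^ 11 * m ^ 6 ≤ 16 * M3 ^ 2 * E2 * (N ^ 2 * x) ^ 3 := by
    apply le_of_mul_le_mul_left _ hg
    calc g * (g ^ 11 * m ^ 6) = ((g ^ 2 * m) ^ 2) ^ 3 := by ring
      _ ≤ _ := h2
      _ = _ := by ring
  have a2 : 16 * M3 ^ 2 * E2 * (N ^ 2 * x) ^ 3 ≤ 16 * (2 ^ 14 * T ^ 4 * N ^ 9) ^ 2 * (4 * T * N ^ 3 * x * y) * (N ^ 2 * x) ^ 3 := by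
    gcongr
  have a3 : (g * m) ^ 11 ≤ 2 ^ 34 * T ^ 9 * N ^ 37 * x ^ 4 * y := by
    calc (g * m) ^ 11 = g ^ 11 * m ^ 6 * m ^ 5 := by ring
      _ ≤ (16 * (2 ^ 14 * T ^ 4 * N ^ 9) ^ 2 * (4 * T * N ^ 3 * x * y) * (N ^ 2 * x) ^ 3) * (N ^ 2) ^ 5 := by
        apply mul_le_mul (a1.trans a2) (pow_le_pow_left₀ hm hmN 5) (by positivity) (by positivity)
      _ = _ := by ring
  have a4 : (K * x) ^ 11 ≤ 2 ^ 45 * T ^ 20 * N ^ 37 * x ^ 4 * y := by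
    calc (K * x) ^ 11 ≤ (2 * T * (g * m)) ^ 11 := by gcongr
      _ = 2 ^ 11 * T ^ 11 * (g * m) ^ 11 := by ring
      _ ≤ 2 ^ 11 * T ^ 11 * (2 ^ 34 * T ^ 9 * N ^ 37 * x ^ 4 * y) := by gcongr
      _ = _ := by ring
  have a5 : K ^ 22 * x ^ 13 ≤ 2 ^ 90 * T ^ 40 * N ^ 74 := by
    apply le_of_mul_le_mul_left _ (pow_pos hx 9)
    calc x ^ 9 * (K ^ 22 * x ^ 13) = ((K * x) ^ 11) ^ 2 := by ring
      _ ≤ (2 ^ 45 * T ^ 20 * N ^ 37 * x ^ 4 * y) ^ 2 := by gcongr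
      _ = x ^ 8 * (y ^ 2) * (2 ^ 90 * T ^ 40 * N ^ 74) := by ring
      _ = _ := by rw [← hxy]; ring
  calc K ^ 34 * x ^ 17 = (K ^ 22 * x ^ 13) * (x * K ^ 3) ^ 4 := by ring
    _ ≤ (2 ^ 90 * T ^ 40 * N ^ 74) * (2048 * T ^ 3 * N ^ 9) ^ 4 := by gcongr
    _ = _ := by ring

section
variable {p : ℕ} [Fact p.Prime] (A : Finset (ZMod p)) {T : ℝ}

noncomputable def uo (x : ZMod p × ZMod p) : (ZMod p)ˣ := by
  classical exact if h : x.1 - x.2 = 0 then 1 else Units.mk0 (x.1 - x.2) h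

theorem uo_coe {x : ZMod p × ZMod p} (h : x.1 ≠ x.2) : (uo x : ZMod p) = x.1 - x.2 := by
  have := sub_ne_zero.2 h
  simp [uo, this]

noncomputable def nU (x : (ZMod p)ˣ) : ℕ := (A.offDiag.filter fun q => uo q = x).card

theorem sum_nU : ∑ x, nU A x ≤ A.card ^ 2 := by
  unfold nU
  rw [← Finset.card_eq_sum_card_fiberwise (fun _ _ => Finset.mem_coe.2 (Finset.mem_univ _)), Finset.offDiag_card, sq]
  omega

theorem qf_Q (l : (ZMod p)ˣ) : (qf A (l : ZMod p) : ℝ) = Q (fun x => (nU A x : ℝ)) l := by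
  classical
  have : qf A (l : ZMod p) = ∑ m, nU A (l * m) * nU A m := by
    unfold qf nU
    rw [Finset.card_eq_sum_card_fiberwise (f := fun x => uo x.2) (t := Finset.univ) (fun _ _ => Finset.mem_coe.2 (Finset.mem_univ _))]
    apply Finset.sum_congr rfl
    intro m _
    rw [← Finset.card_product]
    congr 1
    ext ⟨x, y⟩
    simp only [Finset.mem_filter, Finset.mem_product]
    constructor
    · rintro ⟨⟨⟨h1, h2⟩, h3⟩, rfl⟩
      refine ⟨⟨h1, ?_⟩, h2, rfl⟩
      apply Units.ext
      rw [Units.val_mul, uo_coe (Finset.mem_offDiag.1 h1).2.2, uo_coe (Finset.mem_offDiag.1 h2).2.2, h3]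
    · rintro ⟨⟨h1, h2⟩, h3, rfl⟩
      refine ⟨⟨⟨h1, h3⟩, ?_⟩, rfl⟩
      rw [← uo_coe (Finset.mem_offDiag.1 h1).2.2, ← uo_coe (Finset.mem_offDiag.1 h3).2.2, h2, Units.val_mul]
  rw [this]
  unfold Q
  push_cast
  rfl

theorem sum_units (f : ZMod p → ℝ) : ∑ u : (ZMod p)ˣ, f u = ∑ l with l ≠ 0, f l := by
  classical
  apply Finset.sum_bij (fun (u : (ZMod p)ˣ) _ => (u : ZMod p))
  · intro u _; simp
  · intro u _ v _ h; exact Units.ext h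
  · intro l hl; exact ⟨Units.mk0 l (Finset.mem_filter.1 hl).2, Finset.mem_univ _, rfl⟩
  · intro u _; rfl

theorem D_le : DtimesTwo p A ≤ ∑ u : (ZMod p)ˣ, qf A (u : ZMod p) ^ 2 + 4 * A.card ^ 6 := by
  classical
  unfold DtimesTwo
  rw [← Finset.card_filter_add_card_filter_not (fun x : ((ZMod p × ZMod p) × (ZMod p × ZMod p)) × ((ZMod p × ZMod p) × (ZMod p × ZMod p)) =>
    (x.1.1.1 - x.1.1.2) * (x.1.2.1 - x.1.2.2) ≠ 0)]
  apply Nat.add_le_add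
  · have : ∑ u : (ZMod p)ˣ, qf A (u : ZMod p) ^ 2 = ((Finset.univ : Finset (ZMod p)ˣ).sigma fun u =>
        (((A.offDiag ×ˢ A.offDiag).filter fun x => x.1.1-x.1.2 = (u : ZMod p)*(x.2.1-x.2.2)) ×ˢ
        ((A.offDiag ×ˢ A.offDiag).filter fun x => x.1.1-x.1.2 = (u : ZMod p)*(x.2.1-x.2.2)))).card := by
      rw [Finset.card_sigma]
      apply Finset.sum_congr rfl
      intro u _
      rw [Finset.card_product, sq]
      rfl
    rw [this]
    apply Finset.card_le_card_of_injOn (fun x => ⟨uo x.1.1 / uo x.2.1, (x.1.1, x.2.1), (x.2.2, x.1.2)⟩)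
    · rintro ⟨⟨⟨a1, a2⟩, ⟨a3, a4⟩⟩, ⟨⟨b1, b2⟩, ⟨b3, b4⟩⟩⟩ hx
      simp only [Finset.mem_coe, Finset.mem_filter, Finset.mem_product] at hx
      obtain ⟨⟨⟨⟨⟨ha1, ha2⟩, ha3, ha4⟩, ⟨hb1, hb2⟩, hb3, hb4⟩, h⟩, h0⟩ := hx
      have h0' := h0
      rw [h] at h0'
      have n1 : a1 - a2 ≠ 0 := left_ne_zero_of_mul h0
      have n2 : a3 - a4 ≠ 0 := right_ne_zero_of_mul h0
      have n3 : b1 - b2 ≠ 0 := left_ne_zero_of_mul h0'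
      have n4 : b3 - b4 ≠ 0 := right_ne_zero_of_mul h0'
      simp only [Finset.coe_sigma, Set.mem_sigma_iff, Finset.mem_coe, Finset.mem_filter, Finset.mem_product, Finset.mem_offDiag,
        Finset.mem_univ, true_and, Units.val_div_eq_div_val]
      rw [uo_coe (sub_ne_zero.1 n1), uo_coe (sub_ne_zero.1 n3)]
      refine ⟨⟨⟨⟨ha1, ha2, sub_ne_zero.1 n1⟩, hb1, hb2, sub_ne_zero.1 n3⟩, ?_⟩, ⟨⟨hb3, hb4, sub_ne_zero.1 n4⟩, ha3, ha4, sub_ne_zero.1 n2⟩, ?_⟩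
      · simp only; field_simp
      · simp only; field_simp; linear_combination -h
    · rintro ⟨⟨⟨a1, a2⟩, ⟨a3, a4⟩⟩, ⟨⟨b1, b2⟩, ⟨b3, b4⟩⟩⟩ hx ⟨⟨⟨c1, c2⟩, ⟨c3, c4⟩⟩, ⟨⟨d1, d2⟩, ⟨d3, d4⟩⟩⟩ hy hxy
      simp only [Sigma.mk.injEq, heq_eq_eq, Prod.mk.injEq] at hxy ⊢
      tauto
  · let Z := ((A ×ˢ A) ×ˢ (A ×ˢ A)).filter fun x => (x.1.1 - x.1.2) * (x.2.1 - x.2.2) = 0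
    have hZ : Z.card ≤ 2 * A.card ^ 3 := by
      have : Z ⊆ (A.diag ×ˢ (A ×ˢ A)) ∪ ((A ×ˢ A) ×ˢ A.diag) := by
        rintro ⟨⟨a1, a2⟩, ⟨a3, a4⟩⟩ hx
        simp only [Z, Finset.mem_filter, Finset.mem_product, mul_eq_zero, sub_eq_zero] at hx
        simp only [Finset.mem_union, Finset.mem_product, Finset.mem_diag]
        tauto
      refine (Finset.card_le_card this).trans ((Finset.card_union_le _ _).trans ?_)
      simp only [Finset.card_product, Finset.diag_card]
      apply le_of_eq; ring
    calc _ ≤ (Z ×ˢ Z).card := by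
          apply Finset.card_le_card
          rintro ⟨x, y⟩ hx
          simp only [Finset.mem_filter, Finset.mem_product, not_not] at hx
          simp only [Z, Finset.mem_filter, Finset.mem_product]
          obtain ⟨⟨h1, h2⟩, h3⟩ := hx
          exact ⟨⟨h1.1, h3⟩, h1.2, by rw [← h2, h3]⟩
      _ = Z.card ^ 2 := by rw [Finset.card_product, sq]
      _ ≤ (2 * A.card ^ 3) ^ 2 := Nat.pow_le_pow_left hZ 2
      _ = _ := by ring

set_option maxHeartbeats 1000000 in
theorem D0_bound (hR : RudT p A.card T) (hT : (Nat.log 2 (A.card ^ 4) + 1 : ℝ) ≤ T) (hA : 1 ≤ A.card)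
    (hAp : A.card ^ 3 ≤ p ^ 2) (D0 : ℝ) (hD0 : D0 = ∑ u : (ZMod p)ˣ, (qf A (u : ZMod p) : ℝ) ^ 2) :
    D0 * p ^ 2 ≤ 4 * T * (A.card : ℝ) ^ 10 ∨ D0 ≤ 4 * T * (A.card : ℝ) ^ 6 ∨
      D0 ^ 17 ≤ 2 ^ 168 * T ^ 69 * (A.card : ℝ) ^ 110 := by
  classical
  have hT1 : 1 ≤ T := by
    have : (0:ℝ) ≤ Nat.log 2 (A.card ^ 4) := Nat.cast_nonneg _
    linarith
  have hN1 : (1:ℝ) ≤ A.card := by exact_mod_cast hA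
  have hD00 : 0 ≤ D0 := by rw [hD0]; positivity
  obtain ⟨i, hi⟩ := dyadic (Finset.univ.filter fun u : (ZMod p)ˣ => 1 ≤ qf A (u : ZMod p)) (fun u => qf A (u : ZMod p))
    (fun u => (qf A (u : ZMod p) : ℝ) ^ 2) (A.card ^ 4) T hT (fun s hs => (Finset.mem_filter.1 hs).2)
    (fun s _ => qf_le A _) (fun s _ => by positivity)
  set Λ : Finset (ZMod p)ˣ := (Finset.univ.filter fun u : (ZMod p)ˣ => 1 ≤ qf A (u : ZMod p)).filter
    (fun u : (ZMod p)ˣ => 2 ^ i ≤ qf A (u : ZMod p) ∧ qf A (u : ZMod p) < 2 ^ (i + 1)) with hΛ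
  have hΛ1 : ∀ u ∈ Λ, 2 ^ i ≤ qf A (u : ZMod p) := fun u hu => (Finset.mem_filter.1 hu).2.1
  have hΛ2 : ∀ u ∈ Λ, qf A (u : ZMod p) < 2 ^ (i + 1) := fun u hu => (Finset.mem_filter.1 hu).2.2
  clear_value Λ
  have hD1 : D0 ≤ T * (Λ.card * (2 * 2 ^ i) ^ 2) := by
    rw [hD0]
    have : ∑ u : (ZMod p)ˣ, (qf A (u : ZMod p) : ℝ) ^ 2 =
        ∑ u with 1 ≤ qf A ((u : (ZMod p)ˣ) : ZMod p), (qf A (u : ZMod p) : ℝ) ^ 2 := by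
      symm
      apply Finset.sum_filter_of_ne
      intro u _ h
      by_contra hc
      apply h
      have : qf A (u : ZMod p) = 0 := by omega
      simp [this]
    rw [this]
    refine hi.trans ?_
    apply mul_le_mul_of_nonneg_left _ (by linarith)
    rw [← nsmul_eq_mul]
    apply Finset.sum_le_card_nsmul
    intro u hu
    have : (qf A (u : ZMod p) : ℝ) ≤ 2 ^ (i + 1) := by exact_mod_cast (hΛ2 u hu).le
    rw [← pow_succ']
    gcongr
  rcases Λ.eq_empty_or_nonempty with rfl | hne
  · right; left
    simp at hD1
    have : 0 ≤ 4 * T * (A.card : ℝ) ^ 6 := by positivity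
    linarith
  have hXK : Λ.card ≤ (XK A (2 ^ i)).card := by
    apply Finset.card_le_card_of_injOn (fun u : (ZMod p)ˣ => (u : ZMod p))
    · intro u hu
      exact Finset.mem_coe.2 ((mem_XK A).2 ⟨u.ne_zero, by exact_mod_cast hΛ1 u hu⟩)
    · intro u _ v _ h; exact Units.ext h
  have hXK' : (Λ.card : ℝ) ≤ (XK A (2 ^ i)).card := by exact_mod_cast hXK
  have hf1 : (Λ.card : ℝ) * 2 ^ i ≤ (A.card : ℝ) ^ 4 := by
    have := XK_first A (2 ^ i)
    have h2 : ((XK A (2 ^ i)).card : ℝ) * 2 ^ i ≤ (A.card : ℝ) ^ 4 := by exact_mod_cast this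
    refine le_trans ?_ h2
    gcongr
  have hf3 : (Λ.card : ℝ) * (2 ^ i) ^ 3 ≤ 2048 * T ^ 3 * (A.card : ℝ) ^ 9 := by
    have h2 := XK_third A hR hT hA hAp (2 ^ i) (by positivity)
    push_cast at h2
    refine le_trans ?_ h2
    gcongr
  have hx1 : (1:ℝ) ≤ Λ.card := by exact_mod_cast hne.card_pos
  have hK1 : (1:ℝ) ≤ 2 ^ i := one_le_pow₀ (by norm_num)
  by_cases hbig : p ^ 2 < A.card ^ 2 * Λ.card
  · left
    have hb : (p:ℝ) ^ 2 ≤ (A.card : ℝ) ^ 2 * Λ.card := by exact_mod_cast hbig.le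
    set x : ℝ := (Λ.card : ℝ)
    set K : ℝ := 2 ^ i
    set N : ℝ := (A.card : ℝ)
    calc D0 * p ^ 2 ≤ (T * (x * (2 * K) ^ 2)) * (N ^ 2 * x) := by gcongr
      _ = 4 * T * N ^ 2 * (x * K) ^ 2 := by ring
      _ ≤ 4 * T * N ^ 2 * (N ^ 4) ^ 2 := by gcongr
      _ = _ := by ring
  right
  by_cases hbig2 : A.card ^ 2 < Λ.card
  · left
    have hb : (A.card:ℝ) ^ 2 ≤ Λ.card := by exact_mod_cast hbig2.le
    set x : ℝ := (Λ.card : ℝ)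
    set K : ℝ := 2 ^ i
    set N : ℝ := (A.card : ℝ)
    apply le_of_mul_le_mul_left _ (lt_of_lt_of_le one_pos hx1)
    calc x * D0 ≤ x * (T * (x * (2 * K) ^ 2)) := by gcongr
      _ = 4 * T * (x * K) ^ 2 := by ring
      _ ≤ 4 * T * (N ^ 4) ^ 2 := by gcongr
      _ = N ^ 2 * (4 * T * N ^ 6) := by ring
      _ ≤ _ := by gcongr
  right
  have hE := E2_bound A hR hT1 hA Λ hne.card_pos (by omega) (by omega)
  have hM := M3_bound A hR hT hA hAp
  rw [← sum_units (fun l => (qf A l : ℝ) ^ 3)] at hM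
  simp only [qf_Q] at hM hE
  set n : (ZMod p)ˣ → ℝ := fun x => (nU A x : ℝ) with hn
  have hn0 : ∀ x, 0 ≤ n x := fun x => Nat.cast_nonneg _
  have hnS : ∑ x, n x ≤ (A.card : ℝ) ^ 2 := by
    simp only [hn]; exact_mod_cast sum_nU A
  let dn : (ZMod p)ˣ → ℕ := fun y => ∑ l ∈ Λ, nU A (l * y)
  have hdn : ∀ y, (dn y : ℝ) = dL n Λ y := fun y => by simp [dn, dL, hn]
  have hdnB : ∀ y, dn y ≤ A.card ^ 4 := by
    intro y
    calc dn y ≤ ∑ l, nU A (l * y) := Finset.sum_le_sum_of_subset (Finset.subset_univ _)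
      _ = ∑ l, nU A l := Equiv.sum_comp (Equiv.mulRight y) _
      _ ≤ A.card ^ 2 := sum_nU A
      _ ≤ _ := Nat.pow_le_pow_right hA (by norm_num)
  obtain ⟨j, hj⟩ := dyadic (Finset.univ.filter fun y => 1 ≤ dn y) dn (fun y => n y * dn y) (A.card ^ 4) T hT
    (fun s hs => (Finset.mem_filter.1 hs).2) (fun s _ => hdnB s) (fun s _ => mul_nonneg (hn0 s) (Nat.cast_nonneg _))
  set Y := (Finset.univ.filter fun y => 1 ≤ dn y).filter (fun y => 2 ^ j ≤ dn y ∧ dn y < 2 ^ (j + 1)) with hY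
  have hY1 : ∀ y ∈ Y, (2:ℝ) ^ j ≤ dL n Λ y := fun y hy => by
    rw [← hdn]; exact_mod_cast (Finset.mem_filter.1 hy).2.1
  have hY2 : ∀ y ∈ Y, dL n Λ y ≤ 2 * 2 ^ j := fun y hy => by
    rw [← hdn, ← pow_succ']; exact_mod_cast (Finset.mem_filter.1 hy).2.2.le
  clear_value Y
  have hsum : ∑ y with 1 ≤ dn y, n y * dn y = ∑ l ∈ Λ, Q n l := by
    have : ∑ y with 1 ≤ dn y, n y * dn y = ∑ y, n y * dL n Λ y := by
      rw [Finset.sum_filter_of_ne]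
      · apply Finset.sum_congr rfl; intro y _; rw [hdn]
      · intro y _ h
        by_contra hc
        apply h
        have : dn y = 0 := by omega
        simp [this]
    rw [this]
    unfold dL Q
    simp_rw [Finset.mul_sum]
    rw [Finset.sum_comm]
    apply Finset.sum_congr rfl; intro l _
    apply Finset.sum_congr rfl; intro y _
    ring
  have hlow : 2 ^ i * (Λ.card : ℝ) ≤ 2 * T * (2 ^ j * ∑ y ∈ Y, n y) := by
    calc 2 ^ i * (Λ.card : ℝ) = Λ.card • (2 ^ i : ℝ) := by rw [nsmul_eq_mul, mul_comm]
      _ ≤ ∑ l ∈ Λ, Q n l := by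
        apply Finset.card_nsmul_le_sum
        intro u hu
        rw [hn, ← qf_Q]
        exact_mod_cast hΛ1 u hu
      _ ≤ T * ∑ y ∈ Y, n y * dn y := by rw [← hsum]; exact hj
      _ ≤ T * ∑ y ∈ Y, n y * (2 * 2 ^ j) := by
        apply mul_le_mul_of_nonneg_left _ (by linarith)
        apply Finset.sum_le_sum
        intro y hy
        rw [hdn]
        exact mul_le_mul_of_nonneg_left (hY2 y hy) (hn0 y)
      _ = _ := by rw [← Finset.sum_mul]; ring
  have hQ0 : ∀ l, 0 ≤ Q n l := fun l => Finset.sum_nonneg fun m _ => mul_nonneg (hn0 _) (hn0 _)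
  have hM0 : 0 < ∑ l, Q n l ^ 3 := by
    obtain ⟨u, hu⟩ := hne
    apply Finset.sum_pos' (fun l _ => pow_nonneg (hQ0 l) 3) ⟨u, Finset.mem_univ _, ?_⟩
    apply pow_pos
    rw [hn, ← qf_Q]
    have := hΛ1 u hu
    have h2 : 0 < 2 ^ i := by positivity
    exact_mod_cast h2.trans_le this
  have hc := comb n hn0 Λ Y (2 ^ j) _ _ ((A.card:ℝ) ^ 2) (by positivity) hY1 hY2 rfl hM0 rfl hnS (by positivity)
  have hE0 : 0 ≤ ∑ l₁ ∈ Λ, ∑ l₂ ∈ Λ, Q n (l₂ / l₁) := Finset.sum_nonneg fun _ _ => Finset.sum_nonneg fun _ _ => hQ0 _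
  have hm0 : 0 ≤ ∑ y ∈ Y, n y := Finset.sum_nonneg fun y _ => hn0 y
  have hmN : ∑ y ∈ Y, n y ≤ (A.card : ℝ) ^ 2 :=
    (Finset.sum_le_sum_of_subset_of_nonneg (Finset.subset_univ _) (fun y _ _ => hn0 y)).trans hnS
  have hfin := num1 (y := √(Λ.card : ℝ)) hT1 hN1 (by rw [Real.one_le_sqrt]; exact hx1)
    (Real.sq_sqrt (by linarith)).symm (by positivity) (by positivity) hm0 hmN hlow hM0.le hM hE0 hE hc hf3
  clear hc hE hM
  set x : ℝ := (Λ.card : ℝ)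
  set K : ℝ := 2 ^ i
  set N : ℝ := (A.card : ℝ)
  calc D0 ^ 17 ≤ (T * (x * (2 * K) ^ 2)) ^ 17 := by gcongr
    _ = 2 ^ 34 * T ^ 17 * (K ^ 34 * x ^ 17) := by ring
    _ ≤ 2 ^ 34 * T ^ 17 * (2 ^ 134 * T ^ 52 * N ^ 110) := by gcongr
    _ = _ := by ring
end
end Q9

namespace Q9

theorem final : ∃ C : ℝ, ∀ c : ℝ, c < 1 / 192 → ∀ (p : ℕ), p.Prime → 
    ∀ A : Finset (ZMod p), 2 ≤ A.card → (A.card : ℝ) ≤ (p : ℝ) ^ ((2846 : ℝ) / 4991) →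
    (DtimesTwo p A : ℝ) ≤ C * (A.card : ℝ) ^ ((13 : ℝ) / 2 - c) := by
  obtain ⟨k0, hk0, hrud⟩ := rudnev (ε := 1 / 3000) (by norm_num)
  obtain ⟨k1, hk1⟩ : ∃ k1 : ℝ, k1 = k0 + 4001 := ⟨_, rfl⟩
  refine ⟨4 * k1 + 2 ^ 10 * k1 ^ 5 + 4, ?_⟩
  intro c hc p hp A hA2 hAp
  haveI : Fact p.Prime := ⟨hp⟩
  have hk11 : 1 ≤ k1 := by linarith
  have hN1 : (1:ℝ) ≤ A.card := by exact_mod_cast (by omega : 1 ≤ A.card)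
  have hp1 : (1:ℝ) ≤ p := by exact_mod_cast hp.one_lt.le
  have hN0 : (0:ℝ) < A.card := by linarith
  have hδ1 : 1 ≤ (A.card:ℝ) ^ ((1:ℝ)/500) := Real.one_le_rpow hN1 (by norm_num)
  have hR : RudT p A.card (k1 * (A.card:ℝ) ^ ((1:ℝ)/500)) := by
    intro P hP hP6 k hk hkc
    refine (hrud p k hk P hP hkc).trans ?_
    have h1 : (P.card:ℝ) ^ ((1:ℝ)/3000) ≤ (A.card:ℝ) ^ ((1:ℝ)/500) := by
      have h2 : (P.card:ℝ) ≤ (A.card:ℝ) ^ (6:ℕ) := by exact_mod_cast hP6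
      calc (P.card:ℝ) ^ ((1:ℝ)/3000) ≤ ((A.card:ℝ) ^ (6:ℕ)) ^ ((1:ℝ)/3000) :=
            Real.rpow_le_rpow (Nat.cast_nonneg _) h2 (by norm_num)
        _ = _ := by
          rw [← Real.rpow_natCast, ← Real.rpow_mul hN0.le]
          norm_num
    set X := (A.card:ℝ) ^ ((1:ℝ)/500)
    have h3 : 0 ≤ (P.card:ℝ) * √P.card := by positivity
    have h4 : 0 ≤ (k:ℝ) * P.card := by positivity
    calc k0 * (P.card * √P.card + k * P.card * (P.card:ℝ)^((1:ℝ)/3000))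
        ≤ k1 * (P.card * √P.card * X + k * P.card * X) := by
          apply mul_le_mul (by linarith) _ (by positivity) (by linarith)
          apply add_le_add (le_mul_of_one_le_right h3 hδ1)
          exact mul_le_mul_of_nonneg_left h1 h4
      _ = _ := by ring
  have hlog : (Nat.log 2 (A.card ^ 4) + 1 : ℝ) ≤ k1 * (A.card:ℝ) ^ ((1:ℝ)/500) := by
    have h1 : (Nat.log 2 (A.card ^ 4) : ℝ) ≤ Real.logb 2 ((A.card ^ 4 : ℕ) : ℝ) := Real.natLog_le_logb _ _
    have h2 : Real.log (A.card:ℝ) ≤ (A.card:ℝ) ^ ((1:ℝ)/500) / (1/500) := Real.log_le_rpow_div hN0.le (by norm_num)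
    have h3 : (1:ℝ)/2 ≤ Real.log 2 := by have := Real.log_two_gt_d9; linarith
    have h4 : Real.logb 2 ((A.card ^ 4 : ℕ) : ℝ) ≤ 8 * Real.log (A.card:ℝ) := by
      unfold Real.logb
      push_cast
      rw [Real.log_pow, div_le_iff₀ (by linarith)]
      have : 0 ≤ Real.log (A.card:ℝ) := Real.log_nonneg hN1
      push_cast
      nlinarith
    rw [div_div_eq_mul_div, div_one] at h2
    nlinarith
  have h3p : A.card ^ 3 ≤ p ^ 2 := by
    have h1 : (A.card:ℝ) ≤ (p:ℝ) ^ ((2:ℝ)/3) := hAp.trans (Real.rpow_le_rpow_of_exponent_le hp1 (by norm_num))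
    have h2 : (A.card:ℝ) ^ 3 ≤ (p:ℝ) ^ 2 := by
      calc (A.card:ℝ) ^ 3 ≤ ((p:ℝ) ^ ((2:ℝ)/3)) ^ 3 := by gcongr
        _ = _ := by
          rw [← Real.rpow_natCast, ← Real.rpow_mul (by linarith), ← Real.rpow_natCast]
          norm_num
    exact_mod_cast h2
  have hpN : (A.card:ℝ) ^ ((4991:ℝ)/2846) ≤ p := by
    calc (A.card:ℝ) ^ ((4991:ℝ)/2846) ≤ ((p:ℝ) ^ ((2846 : ℝ) / 4991)) ^ ((4991:ℝ)/2846) :=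
          Real.rpow_le_rpow hN0.le hAp (by norm_num)
      _ = p := by rw [← Real.rpow_mul (by linarith)]; norm_num
  have hD : (DtimesTwo p A : ℝ) ≤ ∑ u : (ZMod p)ˣ, (qf A (u : ZMod p) : ℝ) ^ 2 + 4 * (A.card:ℝ) ^ 6 := by
    exact_mod_cast D_le A
  have hb := D0_bound A hR hlog (by omega) h3p _ rfl
  set D0 := ∑ u : (ZMod p)ˣ, (qf A (u : ZMod p) : ℝ) ^ 2
  have hD00 : 0 ≤ D0 := by positivity
  clear_value D0
  set N : ℝ := (A.card : ℝ)
  clear_value N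
  have hpow : ∀ (m : ℕ) , N ^ m = N ^ (m:ℝ) := fun m => (Real.rpow_natCast N m).symm
  have hE : 0 < N ^ ((13:ℝ)/2 - c) := Real.rpow_pos_of_pos hN0 _
  have h6 : 4 * N ^ 6 ≤ 4 * N ^ ((13:ℝ)/2 - c) := by
    rw [hpow]
    have := Real.rpow_le_rpow_of_exponent_le hN1 (show ((6:ℕ):ℝ) ≤ (13:ℝ)/2 - c by push_cast; linarith)
    linarith
  have key : D0 ≤ (4 * k1 + 2 ^ 10 * k1 ^ 5) * N ^ ((13:ℝ)/2 - c) := by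
    have hkk : 0 ≤ 2 ^ 10 * k1 ^ 5 := by positivity
    rcases hb with hb | hb | hb
    · have h1 : D0 * N ^ ((4991:ℝ)/1423) ≤ 4 * k1 * N ^ ((1:ℝ)/500 + 10) := by
        calc D0 * N ^ ((4991:ℝ)/1423) = D0 * (N ^ ((4991:ℝ)/2846)) ^ 2 := by
              rw [← Real.rpow_natCast, ← Real.rpow_mul hN0.le]; norm_num
          _ ≤ D0 * p ^ 2 := by gcongr
          _ ≤ _ := hb
          _ = _ := by rw [Real.rpow_add hN0, hpow]; push_cast; ring
      have h2 : D0 ≤ 4 * k1 * N ^ ((1:ℝ)/500 + 10 - 4991/1423) := by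
        rw [Real.rpow_sub hN0, ← mul_div_assoc, le_div_iff₀ (Real.rpow_pos_of_pos hN0 _)]
        exact h1
      have h3 := Real.rpow_le_rpow_of_exponent_le hN1 (show (1:ℝ)/500 + 10 - 4991/1423 ≤ (13:ℝ)/2 - c by linarith)
      calc D0 ≤ 4 * k1 * N ^ ((1:ℝ)/500 + 10 - 4991/1423) := h2
        _ ≤ (4 * k1 + 2 ^ 10 * k1 ^ 5) * N ^ ((13:ℝ)/2 - c) := by
          apply mul_le_mul (by linarith) h3 (Real.rpow_nonneg hN0.le _) (by linarith)
    · have h3 := Real.rpow_le_rpow_of_exponent_le hN1 (show (1:ℝ)/500 + 6 ≤ (13:ℝ)/2 - c by linarith)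
      calc D0 ≤ _ := hb
        _ = 4 * k1 * N ^ ((1:ℝ)/500 + 6) := by rw [Real.rpow_add hN0, hpow]; push_cast; ring
        _ ≤ (4 * k1 + 2 ^ 10 * k1 ^ 5) * N ^ ((13:ℝ)/2 - c) := by
          apply mul_le_mul (by linarith) h3 (Real.rpow_nonneg hN0.le _) (by linarith)
    · have h3 := Real.rpow_le_rpow_of_exponent_le hN1 (show (69:ℝ)/500 + 110 ≤ ((13:ℝ)/2 - c) * (17:ℕ) by push_cast; linarith)
      have h4 : D0 ^ 17 ≤ (2 ^ 10 * k1 ^ 5 * N ^ ((13:ℝ)/2 - c)) ^ 17 := by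
        calc D0 ^ 17 ≤ _ := hb
          _ = 2 ^ 168 * k1 ^ 69 * N ^ ((69:ℝ)/500 + 110) := by
            have : (N ^ ((1:ℝ)/500)) ^ 69 = N ^ ((69:ℝ)/500) := by
              rw [← Real.rpow_natCast, ← Real.rpow_mul hN0.le]; norm_num
            rw [Real.rpow_add hN0, mul_pow, this, hpow 110]; push_cast; ring
          _ ≤ 2 ^ 170 * k1 ^ 85 * N ^ (((13:ℝ)/2 - c) * (17:ℕ)) := by
            apply mul_le_mul _ h3 (Real.rpow_nonneg hN0.le _) (by positivity)
            apply mul_le_mul (by norm_num) (pow_le_pow_right₀ hk11 (by norm_num)) (by positivity) (by norm_num)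
          _ = _ := by rw [Real.rpow_mul hN0.le, Real.rpow_natCast]; ring
      have h5 : D0 ≤ 2 ^ 10 * k1 ^ 5 * N ^ ((13:ℝ)/2 - c) := le_of_pow_le_pow_left₀ (by norm_num) (by positivity) h4
      have : 0 ≤ 4 * k1 * N ^ ((13:ℝ)/2 - c) := by positivity
      linarith
  linarith

end Q9

theorem stmt9 :
    (∀ c : ℝ, 0 < c → c < 1 / 434 →
      ∃ C : ℝ,
        ∀ (p : ℕ), p.Prime → Odd p →
          ∀ A : Finset (ZMod p), 2 ≤ A.card → (A.card : ℝ) ≤ (p : ℝ) ^ ((2846 : ℝ) / 4991) →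
            (DtimesTwo p A : ℝ) ≤ C * (A.card : ℝ) ^ ((13 : ℝ) / 2 - c)) ∧
    (∀ c₁ : ℝ, 0 < c₁ → c₁ < 1 / 192 →
      ∃ C₁ : ℝ,
        ∀ (p : ℕ), p.Prime → Odd p →
          ∀ A : Finset (ZMod p), 2 ≤ A.card → (A.card : ℝ) ≤ (p : ℝ) ^ ((48 : ℝ) / 97) →
            (DtimesTwo p A : ℝ) ≤ C₁ * (A.card : ℝ) ^ ((13 : ℝ) / 2 - c₁)) := by
  obtain ⟨C, hC⟩ := Q9.final
  refine ⟨fun c _ hc => ⟨C, fun p hp _ A h2 h => hC c (by linarith) p hp A h2 h⟩,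
    fun c _ hc => ⟨C, fun p hp _ A h2 h => hC c hc p hp A h2 (h.trans ?_)⟩⟩
  have hp1 : (1:ℝ) ≤ p := by exact_mod_cast hp.one_lt.le
  exact Real.rpow_le_rpow_of_exponent_le hp1 (by norm_num)
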